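/- arXiv:2601.10238 — 3 statements merged into one kernel-verified Lean document; each statement's English description precedes it below -/
import Mathlib

section
/- For every odd integer k ≥ 7 there exists a constant B such that every graph H with no isolated vertices satisfies R(C_k, H) ≤ 2·e(H) + max{ ⌊B − √(e(H))⌋ , ⌊k/2⌋ }. -/
/-- `G` has a copy in `C`: there is an injective graph homomorphism from `G` to `C`,
i.e. `C` contains `G` as a (not necessarily induced) subgraph. -/
def HasCopy {α β : Type*} (G : SimpleGraph α) (C : SimpleGraph β) : Prop :=
  ∃ f : G →g C, Function.Injective f

/-- The Ramsey number `R(G, H)`: the least `N` such that every red-blue colouring of the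
edges of `K_N` (encoded by the graph `C` of red edges) contains a red copy of `G` or a
blue copy of `H`. -/
noncomputable def ramseyNumber {α β : Type*} (G : SimpleGraph α) (H : SimpleGraph β) : ℕ :=
  sInf {N : ℕ | ∀ C : SimpleGraph (Fin N), HasCopy G C ∨ HasCopy H Cᶜ}

/-!
Let `n` and `D` be the number of vertices and the degree sum of `H`, and take a counterexample with
`D` least. Then no set of components of `H` embeds too cheaply, so for large `D` all components are
large and `D ≥ (2 - o(1)) n`.

Without red `C_k`, red neighbourhoods and, for odd `k`, second red neighbourhoods induce degenerate
red graphs. Such a graph contains large independent sets, and a graph with linearly many edges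
embeds into its complement with almost no loss. If `D ≥ (2 + ε) n`, place the vertices of large
degree in a set `I` of red neighbours of one vertex; by minimality the rest of `H` does not fit into
the vertices without red neighbours in `I`, so the second neighbourhood is large enough to contain
all of `H`.

If `D ≤ (2 + ε) n`, then `H` is nearly a union of large trees and has small separators, which makes
the red graph expand: almost all but `n` vertices have many neighbours in any large independent set.
Joining such sets by red paths of prescribed length yields two disjoint independent sets `J` and
`J'` of almost `n` vertices and a partition of the host set such that `J` has no red edges to one
side and `J'` none to the other, and `H` is placed into `J`, `J'` and the larger side.
-/

namespace CycleRamsey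

open SimpleGraph Finset
open scoped Classical

section Degrees

variable {α : Type*}

/-- The number of neighbours of `v` in the finite set `A`. -/
noncomputable def degIn (K : SimpleGraph α) (A : Finset α) (v : α) : ℕ := #{w ∈ A | K.Adj v w}

/-- The degree sum of the subgraph of `K` induced on `A`, i.e. twice its number of edges.
Measuring the size of a graph in this way avoids halving. -/
noncomputable def degSum (K : SimpleGraph α) (A : Finset α) : ℕ := ∑ v ∈ A, degIn K A v

/-- `B` is a union of connected components of the subgraph of `K` induced on `A`; only `B ⊆ A` is
not part of the definition. -/
def IsClosedIn (K : SimpleGraph α) (A B : Finset α) : Prop :=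
  ∀ u ∈ B, ∀ v ∈ A, K.Adj u v → v ∈ B

variable (K : SimpleGraph α) {A B : Finset α}

lemma degIn_mono (h : A ⊆ B) (v : α) : degIn K A v ≤ degIn K B v :=
  card_le_card (filter_subset_filter _ h)

lemma degIn_le_card (A : Finset α) (v : α) : degIn K A v ≤ #A := card_filter_le _ _

lemma degIn_union (h : Disjoint A B) (v : α) :
    degIn K (A ∪ B) v = degIn K A v + degIn K B v := by
  unfold degIn
  rw [filter_union, card_union_of_disjoint (disjoint_filter_filter h)]

variable {K} in
lemma one_le_degIn {v w : α} (hw : w ∈ A) (h : K.Adj v w) : 1 ≤ degIn K A v :=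
  card_pos.mpr ⟨w, mem_filter.mpr ⟨hw, h⟩⟩

variable {K} in
lemma exists_adj_of_one_le_degIn {v : α} (h : 1 ≤ degIn K A v) : ∃ w ∈ A, K.Adj v w := by
  obtain ⟨w, hw⟩ := card_pos.mp h
  exact ⟨w, mem_filter.mp hw⟩

lemma sum_degIn_comm (A B : Finset α) : ∑ v ∈ A, degIn K B v = ∑ v ∈ B, degIn K A v := by
  simp only [degIn, card_filter]
  rw [sum_comm]
  simp only [K.adj_comm]

lemma degSum_mono (h : A ⊆ B) : degSum K A ≤ degSum K B :=
  (sum_le_sum fun v _ => degIn_mono K h v).trans (sum_le_sum_of_subset h)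

lemma degSum_union (h : Disjoint A B) :
    degSum K (A ∪ B) = degSum K A + degSum K B + 2 * ∑ v ∈ A, degIn K B v := by
  unfold degSum
  rw [sum_union h]
  simp only [degIn_union K h, sum_add_distrib]
  rw [sum_degIn_comm K B A]
  ring

@[simp] lemma degSum_singleton (v : α) : degSum K {v} = 0 := by simp [degSum, degIn]

lemma degSum_insert {v : α} (h : v ∉ A) :
    degSum K (insert v A) = degSum K A + 2 * degIn K A v := by
  rw [insert_eq, degSum_union K (by simpa using h), degSum_singleton]
  simp

lemma degSum_erase {v : α} (h : v ∈ A) :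
    degSum K A = degSum K (A.erase v) + 2 * degIn K A v := by
  have hdeg : degIn K (A.erase v) v = degIn K A v := by
    rw [degIn, filter_erase, erase_eq_of_notMem (by simp), degIn]
  rw [← hdeg, ← degSum_insert K (notMem_erase v A), insert_erase h]

lemma degSum_sdiff (h : B ⊆ A) :
    degSum K A = degSum K B + degSum K (A \ B) + 2 * ∑ v ∈ B, degIn K (A \ B) v := by
  conv_lhs => rw [← union_sdiff_of_subset h]
  exact degSum_union K disjoint_sdiff

variable {K}

lemma degSum_sdiff_of_isClosedIn (h : B ⊆ A) (hB : IsClosedIn K A B) :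
    degSum K A = degSum K B + degSum K (A \ B) := by
  have hcross : ∑ v ∈ B, degIn K (A \ B) v = 0 := sum_eq_zero fun v hv =>
    card_eq_zero.mpr <| filter_eq_empty_iff.mpr fun w hw hvw =>
      (mem_sdiff.mp hw).2 (hB v hv w (mem_sdiff.mp hw).1 hvw)
  rw [degSum_sdiff K h, hcross, mul_zero, add_zero]

lemma not_adj_of_isIndepSet (h : K.IsIndepSet (A : Set α)) {u v : α} (hu : u ∈ A) (hv : v ∈ A) :
    ¬ K.Adj u v := fun huv => h hu hv huv.ne huv

lemma disjoint_filter_one_le_degIn (h : K.IsIndepSet (B : Set α)) :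
    Disjoint B {v ∈ A | 1 ≤ degIn K B v} := disjoint_left.mpr fun v hvB hv => by
  obtain ⟨u, hu, huv⟩ := exists_adj_of_one_le_degIn (mem_filter.mp hv).2
  exact not_adj_of_isIndepSet h hvB hu huv

end Degrees

section BlueCopies

variable {V W : Type*} {H : SimpleGraph V} {G : SimpleGraph W}
  {U U' U₁ U₂ : Finset V} {A A' : Finset W}

/-- When `G` is the graph of red edges, `f` maps the subgraph of `H` induced on `U` to a blue copy
with all its vertices in `A`: it is injective on `U` and sends edges to nonadjacent pairs. -/
structure IsBlueCopy (H : SimpleGraph V) (G : SimpleGraph W) (f : V → W) (U : Finset V)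
    (A : Finset W) : Prop where
  injOn : Set.InjOn f U
  mem : ∀ u ∈ U, f u ∈ A
  not_adj : ∀ u ∈ U, ∀ v ∈ U, H.Adj u v → ¬ G.Adj (f u) (f v)

/-- Some blue copy of the subgraph of `H` induced on `U` lies inside `A`. -/
def HasBlueCopy (H : SimpleGraph V) (G : SimpleGraph W) (U : Finset V) (A : Finset W) : Prop :=
  ∃ f, IsBlueCopy H G f U A

lemma IsBlueCopy.mono {f : V → W} (h : IsBlueCopy H G f U A) (hU : U' ⊆ U) (hA : A ⊆ A') :
    IsBlueCopy H G f U' A' :=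
  ⟨h.injOn.mono (coe_subset.mpr hU), fun u hu => hA (h.mem u (hU hu)),
    fun u hu v hv => h.not_adj u (hU hu) v (hU hv)⟩

lemma HasBlueCopy.mono (h : HasBlueCopy H G U A) (hU : U' ⊆ U) (hA : A ⊆ A') :
    HasBlueCopy H G U' A' :=
  h.imp fun _ hf => hf.mono hU hA

lemma IsBlueCopy.image_subset {f : V → W} (h : IsBlueCopy H G f U A) : U.image f ⊆ A :=
  image_subset_iff.mpr h.mem

lemma IsBlueCopy.card_image {f : V → W} (h : IsBlueCopy H G f U A) : #(U.image f) = #U :=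
  card_image_of_injOn h.injOn

lemma IsBlueCopy.congr {f g : V → W} (h : IsBlueCopy H G f U A) (hfg : ∀ u ∈ U, g u = f u) :
    IsBlueCopy H G g U A := by
  refine ⟨h.injOn.congr fun u hu => (hfg u hu).symm, fun u hu => hfg u hu ▸ h.mem u hu, ?_⟩
  intro u hu v hv huv
  rw [hfg u hu, hfg v hv]
  exact h.not_adj u hu v hv huv

lemma IsBlueCopy.union {f : V → W} (h₁ : IsBlueCopy H G f U₁ A) (h₂ : IsBlueCopy H G f U₂ A)
    (hne : ∀ u ∈ U₁, ∀ v ∈ U₂, f u ≠ f v)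
    (hadj : ∀ u ∈ U₁, ∀ v ∈ U₂, H.Adj u v → ¬ G.Adj (f u) (f v)) :
    IsBlueCopy H G f (U₁ ∪ U₂) A := by
  refine ⟨?_, fun u hu => (mem_union.mp hu).elim (h₁.mem u) (h₂.mem u), ?_⟩
  · intro u hu v hv huv
    rcases mem_union.mp (mem_coe.mp hu) with hu | hu <;>
      rcases mem_union.mp (mem_coe.mp hv) with hv | hv
    · exact h₁.injOn hu hv huv
    · exact absurd huv (hne u hu v hv)
    · exact absurd huv.symm (hne v hv u hu)
    · exact h₂.injOn hu hv huv
  · intro u hu v hv huv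
    rcases mem_union.mp hu with hu | hu <;> rcases mem_union.mp hv with hv | hv
    · exact h₁.not_adj u hu v hv huv
    · exact hadj u hu v hv huv
    · exact fun h => hadj v hv u hu huv.symm h.symm
    · exact h₂.not_adj u hu v hv huv

lemma IsBlueCopy.glue {f g : V → W} (hf : IsBlueCopy H G f U₁ A) (hg : IsBlueCopy H G g U₂ A)
    (hU : Disjoint U₁ U₂) (hne : ∀ u ∈ U₁, ∀ v ∈ U₂, f u ≠ g v)
    (hadj : ∀ u ∈ U₁, ∀ v ∈ U₂, H.Adj u v → ¬ G.Adj (f u) (g v)) :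
    ∃ e, IsBlueCopy H G e (U₁ ∪ U₂) A ∧ (∀ u ∈ U₁, e u = f u) ∧ ∀ u ∈ U₂, e u = g u := by
  have he₁ : ∀ u ∈ U₁, U₁.piecewise f g u = f u := fun u hu => piecewise_eq_of_mem _ _ _ hu
  have he₂ : ∀ u ∈ U₂, U₁.piecewise f g u = g u := fun u hu =>
    piecewise_eq_of_notMem _ _ _ (disjoint_right.mp hU hu)
  refine ⟨U₁.piecewise f g, (hf.congr he₁).union (hg.congr he₂) ?_ ?_, he₁, he₂⟩
  · intro u hu v hv
    rw [he₁ u hu, he₂ v hv]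
    exact hne u hu v hv
  · intro u hu v hv
    rw [he₁ u hu, he₂ v hv]
    exact hadj u hu v hv

lemma exists_injOn_forall_mem [Nonempty W] (h : #U ≤ #A) :
    ∃ f : V → W, Set.InjOn f U ∧ ∀ u ∈ U, f u ∈ A := by
  obtain ⟨f, hf, hinj⟩ := U.finite_toSet.exists_injOn_of_encard_le (t := (A : Set W))
    (by simpa [Set.encard_coe_eq_coe_finsetCard] using h)
  exact ⟨f, hinj, fun u hu => hf (mem_coe.mpr hu)⟩

lemma hasBlueCopy_of_isIndepSet [Nonempty W] (hA : G.IsIndepSet (A : Set W)) (h : #U ≤ #A) :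
    HasBlueCopy H G U A := by
  obtain ⟨f, hf, hfA⟩ := exists_injOn_forall_mem h
  exact ⟨f, hf, hfA, fun u hu v hv _ => not_adj_of_isIndepSet hA (hfA u hu) (hfA v hv)⟩

lemma HasBlueCopy.of_isolated [Nonempty W] (h : HasBlueCopy H G U' A) (hU : U' ⊆ U)
    (hiso : ∀ u ∈ U \ U', ∀ v ∈ U, ¬ H.Adj u v) (hcard : #U ≤ #A) : HasBlueCopy H G U A := by
  obtain ⟨f, hf⟩ := h
  have hroom : #(U \ U') ≤ #(A \ U'.image f) := by
    rw [card_sdiff_of_subset hU, card_sdiff_of_subset hf.image_subset, hf.card_image]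
    omega
  obtain ⟨g, hg, hgA⟩ := exists_injOn_forall_mem hroom
  have hgcopy : IsBlueCopy H G g (U \ U') A := ⟨hg, fun u hu => (mem_sdiff.mp (hgA u hu)).1,
    fun u hu v hv huv => absurd huv (hiso u hu v (mem_sdiff.mp hv).1)⟩
  obtain ⟨e, he, -⟩ := hf.glue hgcopy disjoint_sdiff
    (fun u hu v hv heq => (mem_sdiff.mp (hgA v hv)).2 (heq ▸ mem_image_of_mem f hu))
    (fun u hu v hv huv => absurd huv.symm (hiso v hv u (hU hu)))
  exact ⟨e, union_sdiff_of_subset hU ▸ he⟩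

end BlueCopies

section Degeneracy

variable {W : Type*} {G : SimpleGraph W} {d : ℕ} {A B : Finset W}

/-- The subgraph of `G` induced on `A` is `(d - 1)`-degenerate: every nonempty `Q ⊆ A` has a vertex
with fewer than `d` neighbours in `Q`. -/
def IsDegenerateOn (G : SimpleGraph W) (d : ℕ) (A : Finset W) : Prop :=
  ∀ Q ⊆ A, Q.Nonempty → ∃ v ∈ Q, degIn G Q v < d

lemma IsDegenerateOn.mono (h : IsDegenerateOn G d B) (hA : A ⊆ B) : IsDegenerateOn G d A :=
  fun Q hQ => h Q (hQ.trans hA)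

lemma isDegenerateOn_of_degIn_lt (h : ∀ v ∈ A, degIn G A v < d) : IsDegenerateOn G d A :=
  fun _Q hQ ⟨v, hv⟩ => ⟨v, hv, (degIn_mono G hQ v).trans_lt (h v (hQ hv))⟩

lemma IsDegenerateOn.exists_isIndepSet (hA : IsDegenerateOn G d A) :
    ∃ I ⊆ A, G.IsIndepSet (I : Set W) ∧ #A ≤ d * #I := by
  induction A using Finset.strongInduction with
  | _ A ih =>
    rcases A.eq_empty_or_nonempty with rfl | hne
    · exact ⟨∅, by simp⟩
    obtain ⟨v, hv, hvd⟩ := hA A subset_rfl hne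
    have hss : {w ∈ A | w ≠ v ∧ ¬ G.Adj v w} ⊂ A := filter_ssubset.mpr ⟨v, hv, by simp⟩
    obtain ⟨I, hI, hIind, hIcard⟩ := ih _ hss (hA.mono hss.1)
    have hvI : v ∉ I := fun h => by simpa using hI h
    have hnadj : ∀ w ∈ I, ¬ G.Adj v w := fun w hw => (mem_filter.mp (hI hw)).2.2
    refine ⟨insert v I, insert_subset hv (hI.trans hss.1), ?_, ?_⟩
    · rw [coe_insert]
      exact hIind.insert fun w hw _ => ⟨hnadj w hw, fun h => hnadj w hw h.symm⟩
    · have hcover : A ⊆ {w ∈ A | w ≠ v ∧ ¬ G.Adj v w} ∪ insert v {w ∈ A | G.Adj v w} := by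
        intro w hw
        simp only [mem_union, mem_filter, mem_insert]
        tauto
      calc #A ≤ #{w ∈ A | w ≠ v ∧ ¬ G.Adj v w} + (degIn G A v + 1) :=
            (card_le_card hcover).trans <| (card_union_le _ _).trans <|
              add_le_add_right (card_insert_le _ _) _
        _ ≤ d * #I + d := add_le_add hIcard hvd
        _ = d * #(insert v I) := by rw [card_insert_of_notMem hvI, mul_add_one]

lemma IsDegenerateOn.degSum_le (hA : IsDegenerateOn G d A) : degSum G A ≤ 2 * d * #A := by
  induction A using Finset.strongInduction with
  | _ A ih =>
    rcases A.eq_empty_or_nonempty with rfl | hne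
    · simp [degSum]
    obtain ⟨v, hv, hvd⟩ := hA A subset_rfl hne
    have hrest := ih _ (erase_ssubset hv) (hA.mono (erase_subset _ _))
    rw [degSum_erase G hv, ← card_erase_add_one hv]
    nlinarith

end Degeneracy

section Cycles

variable {W : Type*} {G : SimpleGraph W} {k : ℕ}

lemma cycleGraph_isContained_of_isPath {u v : W} {q : G.Walk u v} (hq : q.IsPath)
    (hlen : q.length + 1 = k) (hk : 3 ≤ k) (hvu : G.Adj v u) : cycleGraph k ⊑ G := by
  refine (cycleGraph_isContained_iff (by omega)).mpr ⟨v, q.cons hvu, ?_, by simpa using hlen⟩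
  refine (Walk.cons_isCycle_iff q hvu).mpr ⟨hq, fun hmem => ?_⟩
  have := hq.length_eq_one_of_mem_edges (Sym2.eq_swap ▸ hmem)
  omega

lemma cycleGraph_isContained_of_injOn (hk : 3 ≤ k) (g : ℕ → W) (hinj : Set.InjOn g (range k))
    (hadj : ∀ i, i + 1 < k → G.Adj (g i) (g (i + 1))) (hclose : G.Adj (g (k - 1)) (g 0)) :
    cycleGraph k ⊑ G := by
  have hsucc : ∀ i j : Fin k, (i - j).val = 1 → G.Adj (g i) (g j) := by
    intro i j hij
    have hi := i.isLt
    rcases le_or_gt j i with hle | hlt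
    · rw [Fin.sub_val_of_le hle] at hij
      obtain hval : (i : ℕ) = j + 1 := by omega
      exact hval ▸ (hadj j (by omega)).symm
    · rw [Fin.coe_sub_iff_lt.mpr hlt] at hij
      obtain ⟨hi0, hjk⟩ : (i : ℕ) = 0 ∧ (j : ℕ) = k - 1 := by omega
      rw [hi0, hjk]
      exact hclose.symm
  refine ⟨⟨⟨fun i => g i, fun {i j} hij => ?_⟩, fun i j hij => ?_⟩⟩
  · exact (cycleGraph_adj'.mp hij).elim (hsucc i j) fun h => (hsucc j i h).symm
  · exact Fin.ext (hinj (by simp) (by simp) hij)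

lemma exists_isPath_of_le_degIn {Q : Finset W} {d : ℕ} (hQ : ∀ v ∈ Q, d ≤ degIn G Q v) (n : ℕ)
    (F : Finset W) (v : W) (hv : v ∈ Q) (hvF : v ∉ F) (hd : #F + n ≤ d) :
    ∃ (u : W) (q : G.Walk v u), q.IsPath ∧ q.length = n ∧ ∀ w ∈ q.support, w ∈ Q ∧ w ∉ F := by
  induction n generalizing F v with
  | zero => exact ⟨v, .nil, by simp [hv, hvF]⟩
  | succ n ih =>
    obtain ⟨w, hw, hwF⟩ := exists_mem_notMem_of_card_lt_card
      (show #F < #{w ∈ Q | G.Adj v w} from (by omega : #F < d).trans_le (hQ v hv))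
    obtain ⟨hwQ, hvw⟩ := mem_filter.mp hw
    obtain ⟨u, q, hq, hlen, hsupp⟩ := ih (insert v F) w hwQ
      (by simp [hvw.ne', hwF]) (by have := card_insert_le v F; omega)
    refine ⟨u, q.cons hvw, hq.cons fun h => (hsupp v h).2 (mem_insert_self v F), by simp [hlen], ?_⟩
    simp only [Walk.support_cons, List.mem_cons, forall_eq_or_imp]
    exact ⟨⟨hv, hvF⟩, fun z hz => ⟨(hsupp z hz).1, fun h => (hsupp z hz).2 (mem_insert_of_mem h)⟩⟩

lemma isDegenerateOn_neighbors_of_free (hk : 3 ≤ k) (hG : (cycleGraph k).Free G) {x : W}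
    {A : Finset W} (hA : ∀ a ∈ A, G.Adj x a) : IsDegenerateOn G k A := by
  rintro Q hQ ⟨v, hv⟩
  by_contra! hmin
  obtain ⟨u, q, hq, hlen, hsupp⟩ :=
    exists_isPath_of_le_degIn hmin (k - 2) ∅ v hv (by simp) (by simp)
  have hx : x ∉ q.support := fun h => G.irrefl (hA x (hQ (hsupp x h).1))
  refine hG (cycleGraph_isContained_of_isPath (hq.cons hx (h := hA v (hQ hv))) ?_ hk
    (hA u (hQ (hsupp u q.end_mem_support).1)).symm)
  rw [Walk.length_cons]
  omega

section SecondNeighborhood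

/- In a graph without `C_k`, let every `b ∈ B` have a parent `p b ∈ A ⊆ N(x)`. If all degrees in
`Q ⊆ B` were large, then paths of length `k - 4` in `Q` would join vertices with equal parents
(otherwise they close up through `x` to a cycle of length `k`). Hence any two neighbours of a vertex
of `Q` have the same parent, and as `k` is odd so have adjacent vertices. So a path with `k - 1`
vertices in `Q` closes up through the common parent of its ends. -/

variable {x : W} {A B Q : Finset W} {p : W → W}

lemma parent_eq_of_isPath (hG : (cycleGraph k).Free G) (hA : ∀ a ∈ A, G.Adj x a)
    (hAB : Disjoint A B) (hx : x ∉ B) (hpA : ∀ b ∈ B, p b ∈ A) (hpadj : ∀ b ∈ B, G.Adj (p b) b)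
    {u v : W} {q : G.Walk u v} (hq : q.IsPath) (hlen : q.length + 4 = k)
    (hsupp : ∀ w ∈ q.support, w ∈ B) : p u = p v := by
  by_contra hne
  have hu := hsupp u q.start_mem_support
  have hv := hsupp v q.end_mem_support
  have hpB : ∀ b ∈ B, p b ∉ B := fun b hb => disjoint_left.mp hAB (hpA b hb)
  have hpu : p u ∉ (q.concat (hpadj v hv).symm).support := by
    simp only [Walk.support_concat, List.mem_append, List.mem_singleton]
    exact not_or.mpr ⟨fun h => hpB u hu (hsupp _ h), hne⟩
  have hqv : (q.concat (hpadj v hv).symm).IsPath := hq.concat (fun h => hpB v hv (hsupp _ h)) _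
  have hxsupp : x ∉ ((q.concat (hpadj v hv).symm).cons (hpadj u hu)).support := by
    simp only [Walk.support_cons, Walk.support_concat, List.mem_cons,
      List.mem_append, List.not_mem_nil, or_false]
    rintro (h | h | h)
    · exact (hA _ (hpA u hu)).ne h
    · exact hx (hsupp x h)
    · exact (hA _ (hpA v hv)).ne h
  refine hG (cycleGraph_isContained_of_isPath
    ((hqv.cons hpu).cons hxsupp (h := hA _ (hpA u hu))) ?_ (by omega) (hA _ (hpA v hv)).symm)
  simp only [Walk.length_cons, Walk.length_concat]
  omega

lemma eq_of_adj_of_adj_of_isPath {β : Type*} {f : W → β} {n : ℕ}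
    (hf : ∀ (u v : W) (q : G.Walk u v), q.IsPath → q.length = n + 1 →
      (∀ w ∈ q.support, w ∈ Q) → f u = f v)
    (hQ : ∀ v ∈ Q, n + 2 ≤ degIn G Q v) {u u' v : W} (hu : u ∈ Q) (hu' : u' ∈ Q) (hv : v ∈ Q)
    (hvu : G.Adj v u) (hvu' : G.Adj v u') : f u = f u' := by
  obtain ⟨z, q, hq, hlen, hsupp⟩ := exists_isPath_of_le_degIn hQ n {u, u'} v hv
    (by simp [hvu.ne, hvu'.ne]) (by have := card_le_two (a := u) (b := u'); omega)
  have hext : ∀ y ∈ ({u, u'} : Finset W), y ∈ Q → G.Adj v y → f y = f z := by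
    intro y hy hyQ hvy
    refine hf y z (q.cons hvy.symm) (hq.cons fun h => (hsupp y h).2 hy) (by simp [hlen]) ?_
    simp only [Walk.support_cons, List.mem_cons, forall_eq_or_imp]
    exact ⟨hyQ, fun w hw => (hsupp w hw).1⟩
  rw [hext u (by simp) hu hvu, hext u' (by simp) hu' hvu']

lemma eq_of_walk_of_eq_of_adj_of_adj {β : Type*} {f : W → β}
    (hf : ∀ v ∈ Q, ∀ u ∈ Q, ∀ u' ∈ Q, G.Adj v u → G.Adj v u' → f u = f u') {u v : W}
    (q : G.Walk u v) (hsupp : ∀ w ∈ q.support, w ∈ Q) :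
    (Even q.length → f u = f v) ∧ (Odd q.length → ∀ y ∈ Q, G.Adj y u → f y = f v) := by
  induction q with
  | nil => simp
  | @cons u a v h q ih =>
    simp only [Walk.support_cons, List.mem_cons, forall_eq_or_imp] at hsupp
    obtain ⟨ih_even, ih_odd⟩ := ih hsupp.2
    have ha := hsupp.2 a q.start_mem_support
    rw [Walk.length_cons, Nat.even_add_one, Nat.odd_add_one, Nat.not_even_iff_odd,
      Nat.not_odd_iff_even]
    refine ⟨fun hodd => ih_odd hodd u hsupp.1 h, fun heven y hy hyu => ?_⟩
    rw [hf u hsupp.1 y hy a ha hyu.symm h, ih_even heven]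

lemma eq_of_walk_of_eq_of_adj {β : Type*} {f : W → β}
    (hf : ∀ u ∈ Q, ∀ v ∈ Q, G.Adj u v → f u = f v) {u v : W} (q : G.Walk u v)
    (hsupp : ∀ w ∈ q.support, w ∈ Q) : f u = f v := by
  induction q with
  | nil => rfl
  | @cons u a v h q ih =>
    simp only [Walk.support_cons, List.mem_cons, forall_eq_or_imp] at hsupp
    exact (hf u hsupp.1 a (hsupp.2 a q.start_mem_support) h).trans (ih hsupp.2)

lemma isDegenerateOn_secondNeighbors_of_free (hk : 7 ≤ k) (hodd : Odd k)
    (hG : (cycleGraph k).Free G) (hA : ∀ a ∈ A, G.Adj x a) (hAB : Disjoint A B) (hx : x ∉ B)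
    (hB : ∀ b ∈ B, ∃ a ∈ A, G.Adj a b) : IsDegenerateOn G k B := by
  have hparent : ∀ b, ∃ a, b ∈ B → a ∈ A ∧ G.Adj a b := fun b =>
    if hb : b ∈ B then (hB b hb).imp fun _ ha _ => ha else ⟨b, fun h => absurd h hb⟩
  choose p hp using hparent
  rintro Q hQ ⟨v, hv⟩
  by_contra! hmin
  obtain ⟨n, rfl⟩ : ∃ n, k = n + 5 := ⟨k - 5, by omega⟩
  have hpath : ∀ (u w : W) (q : G.Walk u w), q.IsPath → q.length = n + 1 →
      (∀ z ∈ q.support, z ∈ Q) → p u = p w := fun u w q hq hlen hsupp =>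
    parent_eq_of_isPath hG hA hAB hx (fun b hb => (hp b hb).1) (fun b hb => (hp b hb).2) hq
      (by omega) fun z hz => hQ (hsupp z hz)
  have htwo : ∀ z ∈ Q, ∀ u ∈ Q, ∀ w ∈ Q, G.Adj z u → G.Adj z w → p u = p w :=
    fun z hz u hu w hw => eq_of_adj_of_adj_of_isPath hpath
      (fun y hy => (by omega : n + 2 ≤ n + 5).trans (hmin y hy)) hu hw hz
  have hadj : ∀ u ∈ Q, ∀ w ∈ Q, G.Adj u w → p u = p w := by
    intro u hu w hw huw
    obtain ⟨z, q, hq, hlen, hsupp⟩ := exists_isPath_of_le_degIn hmin n {u} w hw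
      (by simpa using huw.ne') (by simp; omega)
    have heven : Even q.length := by
      obtain ⟨m, hm⟩ := hodd
      exact ⟨m - 2, by omega⟩
    have hwz := (eq_of_walk_of_eq_of_adj_of_adj htwo q fun y hy => (hsupp y hy).1).1 heven
    refine (hpath u z (q.cons huw) (hq.cons fun h => (hsupp u h).2 (by simp)) (by simp [hlen])
      ?_).trans hwz.symm
    simp only [Walk.support_cons, List.mem_cons, forall_eq_or_imp]
    exact ⟨hu, fun y hy => (hsupp y hy).1⟩
  obtain ⟨u, q, hq, hlen, hsupp⟩ :=
    exists_isPath_of_le_degIn hmin (n + 3) ∅ v hv (by simp) (by simp)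
  have huQ := (hsupp u q.end_mem_support).1
  have huv : p v = p u := eq_of_walk_of_eq_of_adj hadj q fun w hw => (hsupp w hw).1
  have hpv : p v ∉ q.support := fun h =>
    disjoint_left.mp hAB (hp v (hQ hv)).1 (hQ (hsupp _ h).1)
  refine hG (cycleGraph_isContained_of_isPath
    (hq.cons hpv (h := (hp v (hQ hv)).2)) ?_ (by omega) ?_)
  · rw [Walk.length_cons, hlen]
  · exact huv ▸ (hp u (hQ huQ)).2.symm

end SecondNeighborhood

lemma exists_isIndepSet_card_eq_of_free (hk : 3 ≤ k) (hG : (cycleGraph k).Free G) {A : Finset W}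
    (c : ℕ) (hA : k * c * c ≤ #A) : ∃ I ⊆ A, G.IsIndepSet (I : Set W) ∧ #I = c := by
  suffices h : ∃ I ⊆ A, G.IsIndepSet (I : Set W) ∧ c ≤ #I by
    obtain ⟨I, hIA, hI, hcI⟩ := h
    obtain ⟨J, hJI, hJc⟩ := exists_subset_card_eq hcI
    exact ⟨J, hJI.trans hIA, hI.mono (coe_subset.mpr hJI), hJc⟩
  rcases Nat.eq_zero_or_pos c with rfl | hc
  · exact ⟨∅, by simp⟩
  by_cases h : ∃ x ∈ A, k * c ≤ degIn G A x
  · obtain ⟨x, -, hd⟩ := h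
    obtain ⟨I, hIA, hI, hcard⟩ := (isDegenerateOn_neighbors_of_free hk hG (x := x)
      (A := {w ∈ A | G.Adj x w}) (by simp)).exists_isIndepSet
    exact ⟨I, hIA.trans (filter_subset _ _), hI,
      Nat.le_of_mul_le_mul_left (hd.trans hcard) (by omega)⟩
  · push Not at h
    obtain ⟨I, hIA, hI, hcard⟩ := (isDegenerateOn_of_degIn_lt h).exists_isIndepSet
    exact ⟨I, hIA, hI, Nat.le_of_mul_le_mul_left (hA.trans hcard) (by positivity)⟩

lemma card_lt_of_isClique_of_free (hG : (cycleGraph k).Free G) {S : Finset W}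
    (hS : G.IsClique (S : Set W)) : #S < k := by
  by_contra! hcard
  obtain ⟨T, hTS, hT⟩ := exists_subset_card_eq hcard
  have hclique : G.IsNClique k T := ⟨hS.subset (coe_subset.mpr hTS), hT⟩
  exact hG ((IsContained.of_le le_top).trans
    ((not_cliqueFree_iff_top_isContained k).mp hclique.not_cliqueFree))

lemma card_lt_or_card_lt_of_free {t : ℕ} (ht : 1 ≤ t) (hG : (cycleGraph (2 * t + 1)).Free G)
    {S R : Finset W} (hS : G.IsClique (S : Set W)) (hSR : ∀ u ∈ S, ∀ v ∈ R, G.Adj u v) :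
    #S < t + 1 ∨ #R < t := by
  by_contra! hcard
  have hSne : S.Nonempty := card_pos.mp (by omega)
  have : Nonempty W := ⟨hSne.choose⟩
  obtain ⟨c, hc, hcS⟩ := exists_injOn_forall_mem (U := range (t + 1)) (A := S)
    (by simpa using hcard.1)
  obtain ⟨a, ha, haR⟩ := exists_injOn_forall_mem (U := range t) (A := R) (by simpa using hcard.2)
  simp only [mem_range] at hcS haR
  have hca : ∀ i j, i < t + 1 → j < t → c i ≠ a j := fun i j hi hj =>
    (hSR _ (hcS i hi) _ (haR j hj)).ne
  have hc' : ∀ i j, i < t + 1 → j < t + 1 → c i = c j → i = j := fun i j hi hj =>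
    hc (by simpa using hi) (by simpa using hj)
  have ha' : ∀ i j, i < t → j < t → a i = a j → i = j := fun i j hi hj =>
    ha (by simpa using hi) (by simpa using hj)
  -- The forbidden cycle alternates between `S` and `R`, except for one edge inside `S`.
  refine hG (cycleGraph_isContained_of_injOn (by omega)
    (fun i => if i % 2 = 0 then c (i / 2) else a (i / 2)) ?_ ?_ ?_)
  · intro i hi j hj hij
    simp only [coe_range, Set.mem_Iio] at hi hj hij
    split_ifs at hij with hi2 hj2 hj2
    · have := hc' _ _ (by omega) (by omega) hij
      omega
    · exact absurd hij (hca _ _ (by omega) (by omega))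
    · exact absurd hij.symm (hca _ _ (by omega) (by omega))
    · have := ha' _ _ (by omega) (by omega) hij
      omega
  · intro i hi
    by_cases hi2 : i % 2 = 0
    · rw [if_pos hi2, if_neg (by omega)]
      exact hSR _ (hcS _ (by omega)) _ (haR _ (by omega))
    · rw [if_neg hi2, if_pos (by omega)]
      exact (hSR _ (hcS _ (by omega)) _ (haR _ (by omega))).symm
  · rw [if_pos (by omega), if_pos rfl]
    refine hS (hcS _ (by omega)) (hcS _ (by omega)) fun h => ?_
    have := hc' _ _ (by omega) (by omega) h
    omega

end Cycles

section GreedyEmbedding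

variable {V W : Type*} {H : SimpleGraph V} {G : SimpleGraph W} {f : V → W} {L R T U : Finset V}
  {A I Z : Finset W} {d D : ℕ}

lemma card_filter_le_degIn_mul_le_degSum (G : SimpleGraph W) (A : Finset W) (d : ℕ) :
    #{v ∈ A | d ≤ degIn G A v} * d ≤ degSum G A :=
  (card_nsmul_le_sum _ _ _ fun _ hv => (mem_filter.mp hv).2).trans
    (sum_le_sum_of_subset (filter_subset _ _))

lemma IsBlueCopy.extend_isIndepSet [Nonempty W] (hf : IsBlueCopy H G f U A) (hUT : Disjoint U T)
    (hZA : Z ⊆ A) (hZ : G.IsIndepSet (Z : Set W)) (hcard : #T ≤ #Z)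
    (hne : ∀ z ∈ Z, ∀ u ∈ U, f u ≠ z)
    (hadj : ∀ z ∈ Z, ∀ u ∈ U, ∀ v ∈ T, H.Adj u v → ¬ G.Adj (f u) z) :
    ∃ e, IsBlueCopy H G e (U ∪ T) A ∧ (∀ u ∈ U, e u = f u) ∧ ∀ v ∈ T, e v ∈ Z := by
  obtain ⟨g, hg⟩ := hasBlueCopy_of_isIndepSet (H := H) hZ hcard
  obtain ⟨e, he, hef, heg⟩ := hf.glue (hg.mono subset_rfl hZA) hUT
    (fun u hu v hv => hne _ (hg.mem v hv) u hu)
    (fun u hu v hv => hadj _ (hg.mem v hv) u hu v hv)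
  exact ⟨e, he, hef, fun v hv => (heg v hv).symm ▸ hg.mem v hv⟩

lemma IsBlueCopy.extend_vertex {v : V} {z : W} (hf : IsBlueCopy H G f U A) (hv : v ∉ U)
    (hz : z ∈ A) (hne : ∀ u ∈ U, f u ≠ z) (hadj : ∀ u ∈ U, H.Adj u v → ¬ G.Adj (f u) z) :
    ∃ e, IsBlueCopy H G e (insert v U) A ∧ (∀ u ∈ U, e u = f u) ∧ e v = z := by
  have : Nonempty W := ⟨z⟩
  obtain ⟨e, he, hef, hev⟩ := hf.extend_isIndepSet (T := {v}) (Z := {z})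
    (by simpa using hv) (by simpa using hz) (by simp) le_rfl (by simpa using hne)
    (by simpa using hadj)
  refine ⟨e, ?_, hef, by simpa using hev⟩
  rwa [union_comm, ← insert_eq] at he

-- Placing one further vertex of `R` forbids the images of the vertices placed so far, and at most
-- `d * D` red neighbours of the images of its at most `d` neighbours in `R`.
lemma IsBlueCopy.extend_of_degIn_le (hf : IsBlueCopy H G f L A) (hLR : Disjoint L R) (hZA : Z ⊆ A)
    (hZL : ∀ z ∈ Z, ∀ u ∈ L, ¬ G.Adj (f u) z) (hR : ∀ v ∈ R, degIn H R v ≤ d)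
    (hZ : ∀ z ∈ Z, degIn G Z z ≤ D) (hcard : #L + #R + d * D ≤ #Z) :
    HasBlueCopy H G (L ∪ R) A := by
  suffices h : ∀ R' ⊆ R, ∃ e, IsBlueCopy H G e (L ∪ R') A ∧ (∀ u ∈ L, e u = f u) ∧
      ∀ u ∈ R', e u ∈ Z by
    exact (h R subset_rfl).imp fun _ he => he.1
  intro R' hR'
  induction R' using Finset.induction with
  | empty => exact ⟨f, by simpa using hf⟩
  | insert v R' hv ih =>
    obtain ⟨e, he, hef, heZ⟩ := ih ((subset_insert _ _).trans hR')
    have hvR : v ∈ R := hR' (mem_insert_self _ _)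
    set N := {u ∈ R' | H.Adj v u}.biUnion fun u => {z ∈ Z | G.Adj (e u) z} with hN
    have hNcard : #N ≤ d * D :=
      (card_biUnion_le_card_mul _ _ _ fun u hu => hZ _ (heZ u (mem_filter.mp hu).1)).trans <|
        Nat.mul_le_mul_right D <| (degIn_mono H ((subset_insert _ _).trans hR') v).trans (hR v hvR)
    obtain ⟨z, hz, hzfree⟩ : ∃ z ∈ Z, z ∉ (L ∪ R').image e ∪ N := by
      refine exists_mem_notMem_of_card_lt_card ?_
      have hcardR := card_le_card hR'
      rw [card_insert_of_notMem hv] at hcardR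
      calc #((L ∪ R').image e ∪ N) ≤ #((L ∪ R').image e) + #N := card_union_le _ _
        _ ≤ #L + #R' + d * D := add_le_add (card_image_le.trans (card_union_le _ _)) hNcard
        _ < #Z := by omega
    rw [notMem_union] at hzfree
    have hvL : v ∉ L := fun h => disjoint_left.mp hLR h hvR
    obtain ⟨e', he', he'e, he'v⟩ := he.extend_vertex (v := v) (z := z) (by simp [hvL, hv])
      (hZA hz) (fun u hu heu => hzfree.1 (heu ▸ mem_image_of_mem e hu)) fun u hu huv hadj => by
        rcases mem_union.mp hu with hu | hu
        · exact hZL z hz u hu (hef u hu ▸ hadj)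
        · exact hzfree.2 <| mem_biUnion.mpr
            ⟨u, mem_filter.mpr ⟨hu, huv.symm⟩, mem_filter.mpr ⟨hz, hadj⟩⟩
    refine ⟨e', by rwa [union_insert], fun u hu => ?_, fun u hu => ?_⟩
    · rw [he'e u (mem_union_left _ hu), hef u hu]
    · rcases mem_insert.mp hu with rfl | hu
      · exact he'v ▸ hz
      · exact he'e u (mem_union_right _ hu) ▸ heZ u hu

lemma hasBlueCopy_of_degIn_le [Nonempty W] (hA : ∀ z ∈ A, degIn G A z ≤ D) (hLU : L ⊆ U)
    (hU : ∀ v ∈ U \ L, degIn H U v ≤ d) (hIA : I ⊆ A) (hI : G.IsIndepSet (I : Set W))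
    (hLI : #L ≤ #I) (hcard : #U + (d + #L) * D ≤ #A) : HasBlueCopy H G U A := by
  obtain ⟨f, hf⟩ := hasBlueCopy_of_isIndepSet (H := H) hI hLI
  set N := L.biUnion fun u => {z ∈ A | G.Adj (f u) z} with hN
  have hNcard : #N ≤ #L * D :=
    card_biUnion_le_card_mul _ _ _ fun u hu => hA _ (hIA (hf.mem u hu))
  rw [← union_sdiff_of_subset hLU]
  refine (hf.mono subset_rfl hIA).extend_of_degIn_le (Z := A \ N) (d := d) (D := D) disjoint_sdiff
    sdiff_subset (fun z hz u hu hadj => ?_)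
    (fun v hv => (degIn_mono H sdiff_subset v).trans (hU v hv))
    (fun z hz => (degIn_mono G sdiff_subset z).trans (hA z (mem_sdiff.mp hz).1)) ?_
  · exact (mem_sdiff.mp hz).2 <| mem_biUnion.mpr
      ⟨u, hu, mem_filter.mpr ⟨(mem_sdiff.mp hz).1, hadj⟩⟩
  · have hroom : #A - #N ≤ #(A \ N) := le_card_sdiff _ _
    have hLcard := card_le_card hLU
    rw [card_sdiff_of_subset hLU]
    rw [add_mul] at hcard
    omega

end GreedyEmbedding

section SparseEmbedding

universe u v

lemma IsDegenerateOn.card_filter_degIn_mul_le {W : Type*} {G : SimpleGraph W} {A : Finset W}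
    {k p e : ℕ} (hk : 1 ≤ k) (hA : IsDegenerateOn G k A) (hcard : #A ≤ 2 * p) :
    #{v ∈ A | 24 * k * e ≤ degIn G A v} * (6 * e) ≤ p := by
  refine Nat.le_of_mul_le_mul_right ?_ (show 0 < 4 * k by omega)
  calc #{v ∈ A | 24 * k * e ≤ degIn G A v} * (6 * e) * (4 * k)
      = #{v ∈ A | 24 * k * e ≤ degIn G A v} * (24 * k * e) := by ring
    _ ≤ degSum G A := card_filter_le_degIn_mul_le_degSum G A _
    _ ≤ 2 * k * (2 * p) := hA.degSum_le.trans (Nat.mul_le_mul_left _ hcard)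
    _ = p * (4 * k) := by ring

-- Discard the vertices of large red degree from `A`, send the few vertices of `H` of large degree
-- into an independent set, and place the remaining ones greedily.
lemma IsDegenerateOn.hasBlueCopy_of_card_le {V : Type u} {W : Type v} [Nonempty W]
    {H : SimpleGraph V} {G : SimpleGraph W} {U : Finset V} {A : Finset W} {k C e p : ℕ}
    (hk : 1 ≤ k) (hC : 1 ≤ C) (he : 1 ≤ e) (hp : 4 * e * (4 * e * C * (24 * k * e) ^ 2) < p)
    (hA : IsDegenerateOn G k A) (hH : degSum H U ≤ C * p) (hUA : #U * e + p ≤ #A * e)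
    (hAp : #A ≤ 2 * p) : HasBlueCopy H G U A := by
  set D := 24 * k * e with hD
  set d := 4 * e * C * D with hd
  set hi := {v ∈ A | D ≤ degIn G A v}
  set lo := A \ hi
  set L := {v ∈ U | d ≤ degIn H U v} with hL
  have hhicard : #hi * (6 * e) ≤ p := hA.card_filter_degIn_mul_le hk hAp
  have hlocard : #lo + #hi = #A := card_sdiff_add_card_eq_card (filter_subset _ _)
  have hlodeg : ∀ v ∈ lo, degIn G lo v ≤ D := fun v hv => by
    have hlow : degIn G A v < D := by
      by_contra! h
      exact (mem_sdiff.mp hv).2 (mem_filter.mpr ⟨(mem_sdiff.mp hv).1, h⟩)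
    exact (degIn_mono G sdiff_subset v).trans hlow.le
  have hLcard : #L * (4 * e * D) ≤ p := by
    refine Nat.le_of_mul_le_mul_right ?_ hC
    calc #L * (4 * e * D) * C = #L * d := by rw [hd]; ring
      _ ≤ degSum H U := card_filter_le_degIn_mul_le_degSum H U d
      _ ≤ p * C := hH.trans_eq (mul_comm C p)
  obtain ⟨I, hIlo, hI, hIcard⟩ := (hA.mono (sdiff_subset (t := hi))).exists_isIndepSet
  have hLI : #L ≤ #I := by
    have hIp : 3 * p ≤ 4 * e * k * #I := by nlinarith
    have hLp : 96 * e * e * k * #L ≤ p := by rw [hD] at hLcard; linarith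
    by_contra! hlt
    have : e * k * #I ≤ e * k * #L := Nat.mul_le_mul_left _ hlt.le
    have : e * k * #L ≤ e * (e * k * #L) := Nat.le_mul_of_pos_left _ he
    nlinarith
  refine (hasBlueCopy_of_degIn_le (d := d) hlodeg (filter_subset _ U) (fun v hv => ?_)
    hIlo hI hLI ?_).mono subset_rfl sdiff_subset
  · rw [mem_sdiff, mem_filter] at hv
    by_contra! h
    exact hv.2 ⟨hv.1, h.le⟩
  · refine Nat.le_of_mul_le_mul_right ?_ he
    have hdD : 4 * (e * (d * D)) < p := by rw [hd]; linarith
    have hsize : #lo * e + #hi * e = #A * e := by rw [← add_mul, hlocard]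
    rw [← hL]
    linarith

lemma IsDegenerateOn.exists_forall_hasBlueCopy {k C e : ℕ} (hk : 1 ≤ k) (hC : 1 ≤ C)
    (he : 1 ≤ e) :
    ∃ n₀ : ℕ, ∀ (V : Type u) (W : Type v) [Nonempty W] (H : SimpleGraph V) (G : SimpleGraph W)
      (U : Finset V) (A : Finset W) (p : ℕ), n₀ ≤ p → IsDegenerateOn G k A → #U ≤ p →
      degSum H U ≤ C * p → #U * e + p ≤ #A * e → HasBlueCopy H G U A := by
  refine ⟨4 * e * (4 * e * C * (24 * k * e) ^ 2) + 1, fun V W _ H G U A p hp hA hU hH hUA => ?_⟩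
  rcases le_total #A (2 * p) with hAp | hAp
  · exact hA.hasBlueCopy_of_card_le hk hC he hp hH hUA hAp
  · obtain ⟨A', hA'A, hA'⟩ := exists_subset_card_eq hAp
    refine ((hA.mono hA'A).hasBlueCopy_of_card_le hk hC he hp hH ?_ hA'.le).mono subset_rfl hA'A
    nlinarith

end SparseEmbedding

section Matchings

variable {V W : Type*} {H : SimpleGraph V} {G : SimpleGraph W} {T : Finset V} {A : Finset W}
  {m : V → V} {f : V → W} {a u : V} {y y' : W} {t : ℕ}

/-- The subgraph of `H` induced on `T` is a perfect matching that pairs `v` with `m v`. -/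
structure IsMatchedBy (H : SimpleGraph V) (T : Finset V) (m : V → V) : Prop where
  mem : ∀ v ∈ T, m v ∈ T
  adj_iff : ∀ v ∈ T, ∀ w ∈ T, H.Adj v w ↔ w = m v

/-- With red edges `G`, all vertices of `X` except at most one are red neighbours of `w`; that one
is required to exist, which matters for `X = ∅` only. -/
def IsAlmostRed (G : SimpleGraph W) (X : Finset W) (w : W) : Prop :=
  ∃ x ∈ X, ∀ y ∈ X, ¬ G.Adj w y → y = x

lemma exists_isMatchedBy (hT : ∀ v ∈ T, degIn H T v = 1) : ∃ m, IsMatchedBy H T m := by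
  have hpartner : ∀ v, ∃ w, v ∈ T → {z ∈ T | H.Adj v z} = {w} := fun v => by
    by_cases hv : v ∈ T
    · exact (card_eq_one.mp (hT v hv)).imp fun w hw _ => hw
    · exact ⟨v, fun h => absurd h hv⟩
  choose m hm using hpartner
  simp only [Finset.ext_iff, mem_filter, mem_singleton] at hm
  exact ⟨m, fun v hv => ((hm v hv _).mpr rfl).1,
    fun v hv w hw => ⟨fun h => (hm v hv w).mp ⟨hw, h⟩, fun h => ((hm v hv w).mpr h).2⟩⟩

namespace IsMatchedBy

lemma adj (hm : IsMatchedBy H T m) (hu : u ∈ T) : H.Adj u (m u) :=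
  (hm.adj_iff u hu _ (hm.mem u hu)).mpr rfl

lemma partner_partner (hm : IsMatchedBy H T m) (hu : u ∈ T) : m (m u) = u :=
  ((hm.adj_iff _ (hm.mem u hu) u hu).mp (hm.adj hu).symm).symm

lemma sdiff_pair (hm : IsMatchedBy H T m) (ha : a ∈ T) : IsMatchedBy H (T \ {a, m a}) m := by
  refine ⟨fun v hv => ?_, fun v hv w hw =>
    hm.adj_iff v (mem_sdiff.mp hv).1 w (mem_sdiff.mp hw).1⟩
  simp only [mem_sdiff, mem_insert, mem_singleton, not_or] at hv ⊢
  refine ⟨hm.mem v hv.1, fun h => hv.2.2 ?_, fun h => hv.2.1 ?_⟩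
  · rw [← h, hm.partner_partner hv.1]
  · rw [← hm.partner_partner hv.1, h, hm.partner_partner ha]

lemma pair_subset (hm : IsMatchedBy H T m) (ha : a ∈ T) : {a, m a} ⊆ T :=
  insert_subset ha (singleton_subset_iff.mpr (hm.mem a ha))

lemma card_sdiff_pair (hm : IsMatchedBy H T m) (ha : a ∈ T) : #(T \ {a, m a}) + 2 = #T := by
  rw [← card_pair (hm.adj ha).ne, card_sdiff_add_card_eq_card (hm.pair_subset ha)]

lemma extend_isBlueCopy (hm : IsMatchedBy H T m) (ha : a ∈ T)
    (hf : IsBlueCopy H G f (T \ {a, m a}) A) (hy : y ∈ A \ (T \ {a, m a}).image f)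
    (hy' : y' ∈ A \ (T \ {a, m a}).image f) (hne : y ≠ y') (hadj : ¬ G.Adj y y') :
    ∃ e, IsBlueCopy H G e T A ∧ T.image e = (T \ {a, m a}).image f ∪ {y, y'} := by
  set S := T \ {a, m a} with hS
  have hfresh : ∀ z ∈ A \ S.image f, ∀ u ∈ S, f u ≠ z := fun z hz u hu h =>
    (mem_sdiff.mp hz).2 (h ▸ mem_image_of_mem f hu)
  have hnadj : ∀ u ∈ S, ∀ b ∈ ({a, m a} : Finset V), ¬ H.Adj u b := fun u hu b hb h => by
    have hbT : b ∈ T := hm.pair_subset ha hb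
    rw [hm.adj_iff u (mem_sdiff.mp hu).1 b hbT] at h
    exact (mem_sdiff.mp (h ▸ (hm.sdiff_pair ha).mem u hu)).2 hb
  have hT : T = insert (m a) (insert a S) := by
    rw [hS, ← sdiff_union_of_subset (hm.pair_subset ha)]
    ext; simp; tauto
  obtain ⟨e₁, he₁, he₁f, he₁a⟩ := hf.extend_vertex (v := a) (by simp [hS]) (mem_sdiff.mp hy).1
    (hfresh y hy) fun u hu h => absurd h (hnadj u hu a (by simp))
  obtain ⟨e, he, hee₁, hea⟩ := he₁.extend_vertex (v := m a) (z := y')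
    (by simp [hS, (hm.adj ha).ne']) (mem_sdiff.mp hy').1
    (forall_mem_insert _ _ _ |>.mpr ⟨he₁a ▸ hne, fun u hu => he₁f u hu ▸ hfresh y' hy' u hu⟩)
    (forall_mem_insert _ _ _ |>.mpr ⟨fun _ => he₁a ▸ hadj,
      fun u hu h => absurd h (hnadj u hu (m a) (by simp))⟩)
  refine ⟨e, hT ▸ he, ?_⟩
  have hef : S.image e = S.image f := image_congr fun u hu => by
    rw [hee₁ u (mem_insert_of_mem hu), he₁f u hu]
  conv_lhs => rw [hT]
  rw [image_insert, image_insert, hea, hee₁ a (mem_insert_self _ _), he₁a, hef]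
  ext; simp; tauto

-- Augment along the path `y, f u, f (m u), y'`: its middle edge is replaced by the outer two.
lemma hasBlueCopy_of_augment (hm : IsMatchedBy H T m) (ha : a ∈ T)
    (hf : IsBlueCopy H G f (T \ {a, m a}) A) (hu : u ∈ T \ {a, m a})
    (hy : y ∈ A \ (T \ {a, m a}).image f) (hy' : y' ∈ A \ (T \ {a, m a}).image f) (hne : y ≠ y')
    (huy : ¬ G.Adj (f u) y) (huy' : ¬ G.Adj (f (m u)) y') : HasBlueCopy H G T A := by
  set S := T \ {a, m a}
  have hmS : IsMatchedBy H S m := hm.sdiff_pair ha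
  have hrest : (S \ {u, m u}).image f ⊆ S.image f := image_subset_image sdiff_subset
  have hfu : ∀ v ∈ ({u, m u} : Finset V), f v ∈ A \ (S \ {u, m u}).image f := fun v hv => by
    have hvS := hmS.pair_subset hu hv
    refine mem_sdiff.mpr ⟨hf.mem v hvS, fun h => ?_⟩
    obtain ⟨w, hw, hwv⟩ := mem_image.mp h
    exact (mem_sdiff.mp hw).2 (hf.injOn (mem_sdiff.mp hw).1 hvS hwv ▸ hv)
  have hfresh : ∀ z ∈ A \ S.image f, ∀ v ∈ S, f v ≠ z := fun z hz v hv h =>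
    (mem_sdiff.mp hz).2 (h ▸ mem_image_of_mem f hv)
  obtain ⟨e, he, hee⟩ := hmS.extend_isBlueCopy hu (hf.mono sdiff_subset subset_rfl)
    (hfu u (by simp)) (sdiff_subset_sdiff subset_rfl hrest hy) (hfresh y hy u hu) huy
  have hfmu : f (m u) ∈ A \ S.image e := by
    have hmu := mem_sdiff.mp (hfu (m u) (by simp))
    rw [hee, mem_sdiff, mem_union, mem_insert, mem_singleton]
    refine ⟨hmu.1, ?_⟩
    rintro (h | h | h)
    · exact hmu.2 h
    · exact (hmS.adj hu).ne' (hf.injOn (hmS.mem u hu) hu h)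
    · exact hfresh y hy _ (hmS.mem u hu) h
  have hye : y' ∈ A \ S.image e := by
    rw [hee, mem_sdiff, mem_union, mem_insert, mem_singleton]
    refine ⟨(mem_sdiff.mp hy').1, ?_⟩
    rintro (h | h | h)
    · exact (mem_sdiff.mp hy').2 (hrest h)
    · exact hfresh y' hy' u hu h.symm
    · exact hne h.symm
  obtain ⟨e', he', -⟩ := hm.extend_isBlueCopy ha he hfmu hye (hfresh y' hy' _ (hmS.mem u hu)) huy'
  exact ⟨e', he'⟩

lemma card_le_two_mul_card_filter (hm : IsMatchedBy H T m) {P : V → Prop}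
    (hP : ∀ u ∈ T, P u ∨ P (m u)) : #T ≤ 2 * #{u ∈ T | P u} := by
  have hcover : T ⊆ {u ∈ T | P u} ∪ {u ∈ T | P u}.image m := fun u hu => by
    rw [mem_union, mem_image]
    exact (hP u hu).imp (fun h => mem_filter.mpr ⟨hu, h⟩)
      fun h => ⟨m u, mem_filter.mpr ⟨hm.mem u hu, h⟩, hm.partner_partner hu⟩
  calc #T ≤ _ := card_le_card hcover
    _ ≤ #{u ∈ T | P u} + #({u ∈ T | P u}.image m) := card_union_le _ _
    _ ≤ 2 * #{u ∈ T | P u} := by have := card_image_le (s := {u ∈ T | P u}) (f := m); omega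

lemma isAlmostRed_or_of_not_hasBlueCopy (hm : IsMatchedBy H T m) (ha : a ∈ T)
    (hf : IsBlueCopy H G f (T \ {a, m a}) A) (hno : ¬ HasBlueCopy H G T A) {X : Finset W}
    (hX : X = A \ (T \ {a, m a}).image f) (hXne : X.Nonempty) (hu : u ∈ T \ {a, m a}) :
    IsAlmostRed G X (f u) ∨ IsAlmostRed G X (f (m u)) := by
  subst hX
  by_cases h : ∃ y ∈ A \ (T \ {a, m a}).image f, ¬ G.Adj (f u) y
  · obtain ⟨y, hy, huy⟩ := h
    refine Or.inr ⟨y, hy, fun y' hy' huy' => ?_⟩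
    by_contra hne
    exact hno (hm.hasBlueCopy_of_augment ha hf hu hy hy' (Ne.symm hne) huy huy')
  · push Not at h
    exact Or.inl (hXne.imp fun x hx => ⟨hx, fun y hy huy => absurd (h y hy) huy⟩)

-- If no augmentation is possible, the uncovered set `X` is a red clique and from each matching edge
-- at least one end is red to all but one vertex of `X`; many of those ends miss the same vertex.
lemma hasBlueCopy_of_sdiff_pair (hm : IsMatchedBy H T m) (ha : a ∈ T) (ht : 1 ≤ t)
    (hG : (cycleGraph (2 * t + 1)).Free G) (hTA : #T + t ≤ #A) (hA : 4 * t * t + 2 * t < #A)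
    (hf : IsBlueCopy H G f (T \ {a, m a}) A) : HasBlueCopy H G T A := by
  by_contra hno
  obtain ⟨X, hX⟩ : ∃ X, X = A \ (T \ {a, m a}).image f := ⟨_, rfl⟩
  have hXcard : #X + #(T \ {a, m a}) = #A := by
    rw [← hf.card_image, hX, card_sdiff_add_card_eq_card hf.image_subset]
  have hTcard : #(T \ {a, m a}) + 2 = #T := hm.card_sdiff_pair ha
  have hXclique : G.IsClique (X : Set W) := fun y hy y' hy' hne => by
    by_contra hadj
    obtain ⟨e, he, -⟩ := hm.extend_isBlueCopy ha hf (hX ▸ hy) (hX ▸ hy') hne hadj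
    exact hno ⟨e, he⟩
  have hXlt : #X < 2 * t + 1 := card_lt_of_isClique_of_free hG hXclique
  obtain ⟨good, hgood⟩ : ∃ good, good = {u ∈ T \ {a, m a} | IsAlmostRed G X (f u)} := ⟨_, rfl⟩
  have hgoodcard : #(T \ {a, m a}) ≤ 2 * #good :=
    hgood ▸ (hm.sdiff_pair ha).card_le_two_mul_card_filter (P := fun u => IsAlmostRed G X (f u))
      fun u hu => hm.isAlmostRed_or_of_not_hasBlueCopy ha hf hno hX (card_pos.mp (by omega)) hu
  have : Nonempty W := ⟨f a⟩
  choose! miss hmissX hmiss using fun u (hu : u ∈ good) => (mem_filter.mp (hgood ▸ hu)).2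
  have hmany : #X * t < #good := by
    have : #X * t ≤ 2 * t * t := Nat.mul_le_mul_right t (by omega)
    have : #(T \ {a, m a}) + 2 * t ≥ #A := by omega
    linarith
  obtain ⟨x, hx, hxcard⟩ := exists_lt_card_fiber_of_mul_lt_card_of_maps_to hmissX hmany
  have hfibre : {u ∈ good | miss u = x} ⊆ T \ {a, m a} :=
    (filter_subset _ _).trans (hgood ▸ filter_subset _ _)
  have hred : ∀ z ∈ X.erase x, ∀ w ∈ {u ∈ good | miss u = x}.image f, G.Adj z w := by
    intro z hz w hw
    obtain ⟨u, hu, rfl⟩ := mem_image.mp hw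
    obtain ⟨hugood, rfl⟩ := mem_filter.mp hu
    by_contra hadj
    exact (mem_erase.mp hz).1 (hmiss u hugood z (mem_erase.mp hz).2 fun h => hadj h.symm)
  rcases card_lt_or_card_lt_of_free ht hG
    (hXclique.subset (coe_subset.mpr (erase_subset x X))) hred with h | h
  · rw [card_erase_of_mem hx] at h
    omega
  · rw [card_image_of_injOn (hf.injOn.mono (coe_subset.mpr hfibre))] at h
    omega

end IsMatchedBy

lemma hasBlueCopy_of_degIn_eq_one [Nonempty W] (ht : 1 ≤ t)
    (hG : (cycleGraph (2 * t + 1)).Free G) (hT : ∀ v ∈ T, degIn H T v = 1) (hTA : #T + t ≤ #A)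
    (hA : 4 * t * t + 2 * t < #A) : HasBlueCopy H G T A := by
  obtain ⟨m, hm⟩ := exists_isMatchedBy hT
  clear hT
  induction T using Finset.strongInduction with
  | _ T ih =>
    rcases T.eq_empty_or_nonempty with rfl | ⟨a, ha⟩
    · exact (hasBlueCopy_of_isIndepSet (A := ∅) (by simp) (by simp)).mono subset_rfl
        (empty_subset A)
    · have hss : T \ {a, m a} ⊂ T := sdiff_ssubset (hm.pair_subset ha) (by simp)
      have hcard := card_le_card hss.1
      obtain ⟨f, hf⟩ := ih _ hss (by omega) (hm.sdiff_pair ha)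
      exact hm.hasBlueCopy_of_sdiff_pair ha ht hG hTA hA hf

end Matchings

section TreeParts

variable {V : Type*} {H : SimpleGraph V} {S T X Y : Finset V} {C d : ℕ}

/-- The subgraph of `H` induced on `T` has at least `#T - 1` edges, as every connected graph does.
This substitute for connectedness survives merging adjacent sets and is all that is needed of it. -/
def HasTreeSize (H : SimpleGraph V) (T : Finset V) : Prop := 2 * #T ≤ degSum H T + 2

lemma HasTreeSize.union (hT : HasTreeSize H T) (hS : HasTreeSize H S) (hTS : Disjoint T S)
    (hadj : ∃ u ∈ T, ∃ v ∈ S, H.Adj u v) : HasTreeSize H (T ∪ S) := by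
  obtain ⟨u, hu, v, hv, huv⟩ := hadj
  have hcross : degIn H S u ≤ ∑ w ∈ T, degIn H S w :=
    single_le_sum (f := degIn H S) (fun _ _ => Nat.zero_le _) hu
  have := one_le_degIn hv huv
  unfold HasTreeSize at *
  rw [degSum_union H hTS, card_union_of_disjoint hTS]
  omega

lemma HasTreeSize.union_biUnion {Q : Finset (Finset V)} (hT : HasTreeSize H T)
    (hQ : ∀ S ∈ Q, HasTreeSize H S) (hQdisj : (Q : Set (Finset V)).PairwiseDisjoint id)
    (hTQ : ∀ S ∈ Q, Disjoint T S) (hadj : ∀ S ∈ Q, ∃ u ∈ T, ∃ v ∈ S, H.Adj u v) :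
    HasTreeSize H (T ∪ Q.biUnion id) := by
  induction Q using Finset.induction with
  | empty => simpa using hT
  | insert S Q hS ih =>
    simp only [mem_insert, forall_eq_or_imp, coe_insert] at hQ hQdisj hTQ hadj
    rw [Set.pairwiseDisjoint_insert_of_notMem (by simpa using hS)] at hQdisj
    obtain ⟨u, hu, hadjS⟩ := hadj.1
    rw [biUnion_insert, union_left_comm, union_comm]
    refine (ih hQ.2 hQdisj.1 hTQ.2 hadj.2).union hQ.1 ?_ ⟨u, mem_union_left _ hu, hadjS⟩
    rw [disjoint_union_left, disjoint_biUnion_left]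
    exact ⟨hTQ.1, fun S' hS' => (hQdisj.2 S' hS').symm⟩

lemma exists_hasTreeSize {x : V} (hx : x ∈ X) (hC : 1 ≤ C) :
    ∃ T ⊆ X, x ∈ T ∧ HasTreeSize H T ∧ #T ≤ C ∧ (C ≤ #T ∨ IsClosedIn H X T) := by
  have hsingle : {x} ∈ {T ∈ X.powerset | x ∈ T ∧ HasTreeSize H T ∧ #T ≤ C} :=
    mem_filter.mpr ⟨mem_powerset.mpr (singleton_subset_iff.mpr hx), mem_singleton_self x,
      by simp [HasTreeSize], by simpa using hC⟩
  obtain ⟨T, hT, hmax⟩ := exists_max_image _ card ⟨_, hsingle⟩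
  obtain ⟨hTX, hxT, htree, hTC⟩ := by simpa only [mem_filter, mem_powerset] using hT
  refine ⟨T, hTX, hxT, htree, hTC, or_iff_not_imp_left.mpr fun hlt u hu v hv huv => ?_⟩
  by_contra hvT
  have hbig := hmax (T ∪ {v}) <| mem_filter.mpr
    ⟨mem_powerset.mpr (union_subset hTX (singleton_subset_iff.mpr hv)), mem_union_left _ hxT,
      htree.union (by simp [HasTreeSize]) (by simpa using hvT) ⟨u, hu, v, by simp, huv⟩,
      (card_union_le _ _).trans (by simpa using hlt)⟩
  rw [card_union_of_disjoint (by simpa using hvT), card_singleton] at hbig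
  omega

lemma card_adjacent_parts_le (P : Finpartition Y) (hT : ∀ u ∈ T, degIn H Y u ≤ d) :
    #{S ∈ P.parts | ∃ u ∈ T, ∃ v ∈ S, H.Adj u v} ≤ #T * d := by
  calc #{S ∈ P.parts | ∃ u ∈ T, ∃ v ∈ S, H.Adj u v}
      ≤ #((T.biUnion fun u => {w ∈ Y | H.Adj u w}).image P.part) := card_le_card fun S hS => by
        obtain ⟨hSP, u, hu, v, hv, huv⟩ := mem_filter.mp hS
        exact mem_image.mpr ⟨v, mem_biUnion.mpr ⟨u, hu, mem_filter.mpr ⟨P.le hSP hv, huv⟩⟩,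
          P.part_eq_of_mem hSP hv⟩
    _ ≤ #(T.biUnion fun u => {w ∈ Y | H.Adj u w}) := card_image_le
    _ ≤ #T * d := card_biUnion_le_card_mul T _ d hT

lemma exists_finpartition_merge {Q : Finset (Finset V)} (P : Finpartition (X \ T)) (hTX : T ⊆ X)
    (hTne : T.Nonempty) (hQ : Q ⊆ P.parts) :
    ∃ P' : Finpartition X, P'.parts = insert (T ∪ Q.biUnion id) (P.parts \ Q) := by
  have hrest : (P.parts \ Q).sup id = (X \ T) \ Q.biUnion id := by
    ext v
    rw [sup_eq_biUnion, mem_sdiff, mem_biUnion, mem_biUnion]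
    constructor
    · rintro ⟨S, hS, hv⟩
      obtain ⟨hSP, hSQ⟩ := mem_sdiff.mp hS
      exact ⟨P.le hSP hv, fun ⟨S', hS', hv'⟩ => hSQ (P.eq_of_mem_parts hSP (hQ hS') hv hv' ▸ hS')⟩
    · rintro ⟨hv, hvQ⟩
      obtain ⟨S, hS, hvS⟩ := P.exists_mem hv
      exact ⟨S, mem_sdiff.mpr ⟨hS, fun h => hvQ ⟨S, h, hvS⟩⟩, hvS⟩
  have hQX : Q.biUnion id ⊆ X := biUnion_subset.mpr fun S hS => (P.le (hQ hS)).trans sdiff_subset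
  refine ⟨(P.ofSubset sdiff_subset hrest).extend (b := T ∪ Q.biUnion id) ?_ ?_ ?_, rfl⟩
  · exact (hTne.mono subset_union_left).ne_empty
  · rw [sdiff_sdiff_left]
    exact sdiff_disjoint
  · rw [sdiff_sdiff_left]
    exact sdiff_union_of_subset (union_subset hTX hQX)

-- Merge a tree-sized set `T` of at most `C` vertices with all smaller parts of a partition of the
-- remaining vertices that it is adjacent to.
lemma exists_finpartition_hasTreeSize (hC : 1 ≤ C) (hX : ∀ v ∈ X, degIn H X v ≤ d) :
    ∃ P : Finpartition X, ∀ T ∈ P.parts,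
      HasTreeSize H T ∧ #T ≤ C + C * C * d ∧ (C ≤ #T ∨ IsClosedIn H X T) := by
  induction X using Finset.strongInduction with
  | _ X ih =>
    rcases X.eq_empty_or_nonempty with rfl | ⟨x, hx⟩
    · exact ⟨Finpartition.empty _, by simp⟩
    obtain ⟨T, hTX, hxT, hT, hTC, hTlarge⟩ := exists_hasTreeSize (H := H) hx hC
    obtain ⟨P, hP⟩ := ih (X \ T) (sdiff_ssubset hTX ⟨x, hxT⟩) fun v hv =>
      (degIn_mono H sdiff_subset v).trans (hX v (mem_sdiff.mp hv).1)
    have hTP : ∀ S ∈ P.parts, Disjoint T S := fun S hS => disjoint_sdiff.mono_right (P.le hS)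
    set Q := {S ∈ P.parts | #S < C ∧ ∃ u ∈ T, ∃ v ∈ S, H.Adj u v}
    have hQP : Q ⊆ P.parts := filter_subset _ _
    have hQcard : #Q ≤ C * d := by
      refine (card_le_card ?_).trans <| (card_adjacent_parts_le P fun u hu =>
        (degIn_mono H sdiff_subset u).trans (hX u (hTX hu))).trans (Nat.mul_le_mul_right d hTC)
      exact fun S hS => mem_filter.mpr ⟨(mem_filter.mp hS).1, (mem_filter.mp hS).2.2⟩
    obtain ⟨P', hP'⟩ := exists_finpartition_merge P hTX ⟨x, hxT⟩ hQP
    refine ⟨P', hP' ▸ forall_mem_insert _ _ _ |>.mpr ⟨⟨?_, ?_, ?_⟩, fun S hS => ?_⟩⟩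
    · exact hT.union_biUnion (fun S hS => (hP S (hQP hS)).1)
        (P.disjoint.subset (coe_subset.mpr hQP)) (fun S hS => hTP S (hQP hS))
        fun S hS => (mem_filter.mp hS).2.2
    · calc #(T ∪ Q.biUnion id) ≤ #T + #(Q.biUnion id) := card_union_le _ _
        _ ≤ C + C * d * C := add_le_add hTC <|
          (card_biUnion_le_card_mul _ _ C fun S hS => (mem_filter.mp hS).2.1.le).trans
            (Nat.mul_le_mul_right C hQcard)
        _ = C + C * C * d := by ring
    · refine hTlarge.imp (fun h => h.trans (card_le_card subset_union_left)) fun hcl => ?_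
      have hQempty : Q = ∅ := filter_eq_empty_iff.mpr fun S hS ⟨_, u, hu, v, hv, huv⟩ =>
        disjoint_left.mp (hTP S hS) (hcl u hu v (mem_sdiff.mp (P.le hS hv)).1 huv) hv
      simpa [hQempty] using hcl
    · obtain ⟨hSP, hSQ⟩ := mem_sdiff.mp hS
      refine ⟨(hP S hSP).1, (hP S hSP).2.1, or_iff_not_imp_left.mpr fun hlt u hu v hv huv => ?_⟩
      refine ((hP S hSP).2.2.resolve_left hlt) u hu v (mem_sdiff.mpr ⟨hv, fun hvT => ?_⟩) huv
      exact hSQ (mem_filter.mpr ⟨hSP, not_le.mp hlt, v, hvT, u, hu, huv.symm⟩)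

lemma sum_degSum_parts_add (P : Finpartition X) :
    ∑ T ∈ P.parts, (degSum H T + ∑ v ∈ T, degIn H (X \ T) v) = degSum H X := by
  have hsplit : ∀ T ∈ P.parts, degSum H T + ∑ v ∈ T, degIn H (X \ T) v = ∑ v ∈ T, degIn H X v := by
    intro T hT
    rw [degSum, ← sum_add_distrib]
    refine sum_congr rfl fun v _ => ?_
    rw [← degIn_union H disjoint_sdiff, union_sdiff_of_subset (P.le hT)]
  calc ∑ T ∈ P.parts, (degSum H T + ∑ v ∈ T, degIn H (X \ T) v)
      = ∑ T ∈ P.parts, ∑ v ∈ T, degIn H X v := sum_congr rfl hsplit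
    _ = ∑ v ∈ P.parts.biUnion id, degIn H X v := (sum_biUnion P.disjoint).symm
    _ = degSum H X := by rw [P.biUnion_parts, degSum]

lemma sum_degSum_parts_le (P : Finpartition X) : ∑ T ∈ P.parts, degSum H T ≤ degSum H X :=
  sum_degSum_parts_add (H := H) P ▸ sum_le_sum fun _ _ => Nat.le_add_right _ _

end TreeParts

section DegreeSums

variable {V : Type*} {H : SimpleGraph V} {U K : Finset V}

lemma IsClosedIn.degIn_eq (h : IsClosedIn H U K) (hK : K ⊆ U) {v : V} (hv : v ∈ K) :
    degIn H K v = degIn H U v := by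
  refine (degIn_mono H hK v).antisymm (card_le_card fun w hw => ?_)
  obtain ⟨hwU, hvw⟩ := mem_filter.mp hw
  exact mem_filter.mpr ⟨h v hv w hwU hvw, hvw⟩

lemma degSum_le_card_mul_pred (H : SimpleGraph V) (U : Finset V) :
    degSum H U ≤ #U * (#U - 1) := by
  refine sum_le_card_nsmul U _ _ fun v hv => ?_
  rw [← card_erase_of_mem hv]
  exact card_le_card fun w hw => mem_erase.mpr
    ⟨(mem_filter.mp hw).2.ne', (mem_filter.mp hw).1⟩

-- Repeatedly delete a vertex of maximum degree.
lemma exists_subset_degSum_mul_le (H : SimpleGraph V) {c : ℕ} (hc : c ≤ #U) :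
    ∃ T ⊆ U, #T = c ∧ degSum H T * (#U * (#U - 1)) ≤ degSum H U * (c * (c - 1)) := by
  induction hc using Nat.decreasingInduction with
  | self => exact ⟨U, subset_rfl, rfl, le_rfl⟩
  | of_succ c hc ih =>
    obtain ⟨T, hTU, hTc, hT⟩ := ih
    obtain ⟨v, hv, hmax⟩ := exists_max_image T (degIn H T) (card_pos.mp (by omega))
    have hcard : #(T.erase v) = c := by rw [card_erase_of_mem hv]; omega
    refine ⟨T.erase v, (erase_subset _ _).trans hTU, hcard, ?_⟩
    have herase := degSum_erase H hv
    have havg : degSum H T ≤ (c + 1) * degIn H T v := hTc ▸ sum_le_card_nsmul T _ _ hmax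
    obtain rfl | ⟨q, rfl⟩ : c = 0 ∨ ∃ q, c = q + 1 := by cases c <;> simp
    · simp [card_eq_zero.mp hcard, degSum]
    · simp only [Nat.add_sub_cancel] at hT ⊢
      have hstep : (q + 2) * degSum H (T.erase v) ≤ q * degSum H T := by nlinarith
      refine Nat.le_of_mul_le_mul_left (c := q + 2) ?_ (by omega)
      calc (q + 2) * (degSum H (T.erase v) * (#U * (#U - 1)))
          = (q + 2) * degSum H (T.erase v) * (#U * (#U - 1)) := by ring
        _ ≤ q * degSum H T * (#U * (#U - 1)) := Nat.mul_le_mul_right _ hstep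
        _ = q * (degSum H T * (#U * (#U - 1))) := by ring
        _ ≤ q * (degSum H U * ((q + 1 + 1) * (q + 1))) := Nat.mul_le_mul_left q hT
        _ = (q + 2) * (degSum H U * ((q + 1) * q)) := by ring

lemma exists_subset_degSum_mul_card_le (H : SimpleGraph V) {c : ℕ} (hc : c ≤ #U) :
    ∃ T ⊆ U, #T = c ∧ degSum H T * #U ≤ degSum H U * c := by
  obtain ⟨T, hTU, hTc, hT⟩ := exists_subset_degSum_mul_le H hc
  refine ⟨T, hTU, hTc, ?_⟩
  obtain hU | hU := Nat.lt_or_ge 1 #U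
  · refine Nat.le_of_mul_le_mul_right (c := #U - 1) ?_ (by omega)
    calc degSum H T * #U * (#U - 1) = degSum H T * (#U * (#U - 1)) := mul_assoc _ _ _
      _ ≤ degSum H U * (c * (c - 1)) := hT
      _ ≤ degSum H U * (c * (#U - 1)) := by gcongr
      _ = degSum H U * c * (#U - 1) := (mul_assoc _ _ _).symm
  · have hT0 : degSum H T = 0 := Nat.le_zero.mp <| (degSum_le_card_mul_pred H T).trans <| by
      rw [Nat.sub_eq_zero_of_le (hTc.trans_le (hc.trans hU)), mul_zero]
    simp [hT0]

lemma exists_subset_degSum_add_mul_le (H : SimpleGraph V) {m s : ℕ} (hs : s ≤ #U)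
    (hm : #U ≤ m * s) :
    ∃ T ⊆ U, #T + s = #U ∧ degSum H U + m * degSum H T ≤ m * degSum H U := by
  obtain ⟨T, hTU, hTc, hT⟩ := exists_subset_degSum_mul_card_le H (Nat.sub_le #U s)
  refine ⟨T, hTU, by omega, ?_⟩
  rcases Nat.eq_zero_or_pos #U with hU | hU
  · simp [card_eq_zero.mp hU, subset_empty.mp (card_eq_zero.mp hU ▸ hTU), degSum]
  refine Nat.le_of_mul_le_mul_right (c := #U) ?_ hU
  calc (degSum H U + m * degSum H T) * #U = degSum H U * #U + m * (degSum H T * #U) := by ring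
    _ ≤ degSum H U * (m * s) + m * (degSum H U * (#U - s)) := by gcongr
    _ = m * degSum H U * (#U - s + s) := by ring
    _ = m * degSum H U * #U := by rw [Nat.sub_add_cancel hs]

lemma exists_subset_four_mul_degSum_le (H : SimpleGraph V) {c : ℕ} (hc : 2 * c ≤ #U)
    (hU : 2 ≤ #U) : ∃ T ⊆ U, #T = c ∧ 4 * degSum H T ≤ degSum H U := by
  obtain ⟨T, hTU, hTc, hT⟩ := exists_subset_degSum_mul_le H (U := U) (c := c) (by omega)
  refine ⟨T, hTU, hTc, ?_⟩
  refine Nat.le_of_mul_le_mul_right (c := #U * (#U - 1)) ?_ (Nat.mul_pos (by omega) (by omega))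
  calc 4 * degSum H T * (#U * (#U - 1)) = 4 * (degSum H T * (#U * (#U - 1))) := mul_assoc _ _ _
    _ ≤ 4 * (degSum H U * (c * (c - 1))) := Nat.mul_le_mul_left 4 hT
    _ = degSum H U * ((2 * c) * (2 * (c - 1))) := by ring
    _ ≤ degSum H U * (#U * (#U - 1)) := by gcongr; omega

-- `T` consists of the components of `H` that are single edges.
lemma exists_isClosedIn_degIn_eq_one (hiso : ∀ v ∈ U, 1 ≤ degIn H U v) :
    ∃ T ⊆ U, IsClosedIn H U T ∧ (∀ v ∈ T, degIn H T v = 1) ∧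
      #(U \ T) + 3 * #U ≤ 3 * degSum H U := by
  set T := {v ∈ U | degIn H U v = 1 ∧ ∀ u ∈ U, H.Adj v u → degIn H U u = 1}
  have hTU : T ⊆ U := filter_subset _ _
  have hcl : IsClosedIn H U T := by
    intro u hu v hv huv
    obtain ⟨huU, hu1, hu⟩ := mem_filter.mp hu
    refine mem_filter.mpr ⟨hv, hu v hv huv, fun w hw hvw => ?_⟩
    have hwu : w = u := card_le_one.mp (hu v hv huv).le w (mem_filter.mpr ⟨hw, hvw⟩) u
      (mem_filter.mpr ⟨huU, huv.symm⟩)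
    rwa [hwu]
  refine ⟨T, hTU, hcl, fun v hv => (hcl.degIn_eq hTU hv).trans (mem_filter.mp hv).2.1, ?_⟩
  set S := {v ∈ U | 2 ≤ degIn H U v}
  have hSU : S ⊆ U := filter_subset _ _
  have hdegS : #S * 2 ≤ ∑ v ∈ S, degIn H U v :=
    card_nsmul_le_sum S _ 2 fun v hv => (mem_filter.mp hv).2
  have hdegUS : #(U \ S) * 1 ≤ ∑ v ∈ U \ S, degIn H U v :=
    card_nsmul_le_sum _ _ 1 fun v hv => hiso v (sdiff_subset hv)
  have hsum : ∑ v ∈ U \ S, degIn H U v + ∑ v ∈ S, degIn H U v = degSum H U := sum_sdiff hSU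
  have hcard := card_sdiff_add_card_eq_card hSU
  have hUT : #(U \ T) ≤ #S + ∑ v ∈ S, degIn H U v := by
    refine (card_le_card (t := S ∪ S.biUnion fun v => {w ∈ U | H.Adj v w}) fun v hv => ?_).trans
      ((card_union_le _ _).trans (Nat.add_le_add_left card_biUnion_le _))
    obtain ⟨hvU, hvT⟩ := mem_sdiff.mp hv
    by_contra! hcon
    rw [notMem_union, mem_biUnion] at hcon
    have hone : ∀ w ∈ U, w ∉ S → degIn H U w = 1 := fun w hw hwS =>
      le_antisymm (Nat.lt_succ_iff.mp (not_le.mp fun h => hwS (mem_filter.mpr ⟨hw, h⟩))) (hiso w hw)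
    exact hvT (mem_filter.mpr ⟨hvU, hone v hvU hcon.1, fun u hu hvu => hone u hu fun huS =>
      hcon.2 ⟨u, huS, mem_filter.mpr ⟨hvU, hvu.symm⟩⟩⟩)
  omega

end DegreeSums

section Gluing

variable {V W : Type*} {H : SimpleGraph V} {G : SimpleGraph W} {U S K : Finset V}
  {A A₁ A₂ : Finset W} {f : V → W}

lemma IsBlueCopy.card_sdiff_image_add_card (hf : IsBlueCopy H G f U A) :
    #(A \ U.image f) + #U = #A := by
  rw [← hf.card_image, card_sdiff_add_card_eq_card hf.image_subset]

lemma IsBlueCopy.hasBlueCopy_of_isClosedIn (hf : IsBlueCopy H G f (U \ K) A) (hK : K ⊆ U)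
    (hcl : IsClosedIn H U K) (h : HasBlueCopy H G K (A \ (U \ K).image f)) :
    HasBlueCopy H G U A := by
  obtain ⟨g, hg⟩ := h
  obtain ⟨e, he, -⟩ := hf.glue (hg.mono subset_rfl sdiff_subset) sdiff_disjoint
    (fun u hu v hv heq => (mem_sdiff.mp (hg.mem v hv)).2 (mem_image.mpr ⟨u, hu, heq⟩))
    (fun u hu v hv huv =>
      absurd (hcl v hv u (mem_sdiff.mp hu).1 huv.symm) (mem_sdiff.mp hu).2)
  exact ⟨e, sdiff_union_of_subset hK ▸ he⟩

lemma HasBlueCopy.of_sdiff_of_not_adj (hS : S ⊆ U) (h₁ : HasBlueCopy H G (U \ S) A₁)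
    (h₂ : HasBlueCopy H G S A₂) (hA₁ : A₁ ⊆ A) (hA₂ : A₂ ⊆ A) (hA : Disjoint A₁ A₂)
    (hadj : ∀ a ∈ A₁, ∀ b ∈ A₂, ¬ G.Adj a b) : HasBlueCopy H G U A := by
  obtain ⟨f, hf⟩ := h₁
  obtain ⟨g, hg⟩ := h₂
  obtain ⟨e, he, -⟩ := (hf.mono subset_rfl hA₁).glue (hg.mono subset_rfl hA₂) sdiff_disjoint
    (fun u hu v hv heq => disjoint_left.mp hA (hf.mem u hu) (heq ▸ hg.mem v hv))
    (fun u hu v hv _ => hadj _ (hf.mem u hu) _ (hg.mem v hv))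
  exact ⟨e, sdiff_union_of_subset hS ▸ he⟩

end Gluing

section MinimalCounterexamples

/-- The number of vertices beyond the degree sum `D` of `H` that are shown to suffice. -/
def slack (B t D : ℕ) : ℕ := max (B - Nat.sqrt D) t

lemma le_slack (B t D : ℕ) : t ≤ slack B t D := le_max_right _ _

lemma slack_le_slack_add_sqrt (B t D' D : ℕ) : slack B t D' ≤ slack B t D + Nat.sqrt D := by
  unfold slack
  omega

lemma add_slack_mono (B t : ℕ) : Monotone fun D => D + slack B t D := by
  refine monotone_nat_of_le_succ fun D => ?_
  have hsqrt : Nat.sqrt (D + 1) ≤ Nat.sqrt D + 1 := Nat.sqrt_succ_le_succ_sqrt D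
  unfold slack
  omega

/-- A counterexample to the embedding theorem for the subgraph of `H` induced on `U`, red edges `G`
and host set `A`, such that the theorem holds whenever the degree sum is smaller. -/
structure IsMinimalCounterexample {V W : Type*} (t B : ℕ) (H : SimpleGraph V) (G : SimpleGraph W)
    (U : Finset V) (A : Finset W) : Prop where
  three_le : 3 ≤ t
  free : (cycleGraph (2 * t + 1)).Free G
  card_le : degSum H U + slack B t (degSum H U) ≤ #A
  one_le_degIn : ∀ v ∈ U, 1 ≤ degIn H U v
  hasBlueCopy_of_lt : ∀ (U' : Finset V) (A' : Finset W), degSum H U' < degSum H U →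
    degSum H U' + slack B t (degSum H U') ≤ #A' → #U' ≤ #A' → HasBlueCopy H G U' A'
  not_hasBlueCopy : ¬ HasBlueCopy H G U A

namespace IsMinimalCounterexample

variable {V W : Type*} {t B : ℕ} {H : SimpleGraph V} {G : SimpleGraph W} {U K T : Finset V}
  {A I : Finset W}

lemma card_le_degSum (h : IsMinimalCounterexample t B H G U A) : #U ≤ degSum H U := by
  simpa [degSum] using sum_le_sum h.one_le_degIn

lemma degSum_add_le (h : IsMinimalCounterexample t B H G U A) : degSum H U + t ≤ #A :=
  (Nat.add_le_add_left (le_slack _ _ _) _).trans h.card_le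

lemma card_le_card (h : IsMinimalCounterexample t B H G U A) : #U ≤ #A :=
  h.card_le_degSum.trans (Nat.le_of_add_right_le h.degSum_add_le)

lemma hasBlueCopy_of_subset (h : IsMinimalCounterexample t B H G U A) (hK : K ⊆ U)
    (hlt : degSum H K < degSum H U) : HasBlueCopy H G K A :=
  h.hasBlueCopy_of_lt K A hlt ((add_slack_mono B t hlt.le).trans h.card_le)
    ((Finset.card_le_card hK).trans h.card_le_card)

lemma degSum_sdiff_lt (h : IsMinimalCounterexample t B H G U A) (hK : K ⊆ U)
    (hcl : IsClosedIn H U K) (hne : K.Nonempty) : degSum H (U \ K) < degSum H U := by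
  obtain ⟨v, hv⟩ := hne
  have hsum := degSum_sdiff_of_isClosedIn hK hcl
  have hdeg : degIn H K v ≤ degSum H K := single_le_sum (fun _ _ => Nat.zero_le _) hv
  have := h.one_le_degIn v (hK hv)
  rw [← hcl.degIn_eq hK hv] at this
  omega

lemma exists_not_hasBlueCopy_of_isClosedIn (h : IsMinimalCounterexample t B H G U A) (hK : K ⊆ U)
    (hcl : IsClosedIn H U K) (hne : K.Nonempty) :
    ∃ A' : Finset W, #A' + #U = #A + #K ∧ ¬ HasBlueCopy H G K A' := by
  obtain ⟨f, hf⟩ := h.hasBlueCopy_of_subset sdiff_subset (h.degSum_sdiff_lt hK hcl hne)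
  refine ⟨A \ (U \ K).image f, ?_,
    fun hKA => h.not_hasBlueCopy (hf.hasBlueCopy_of_isClosedIn hK hcl hKA)⟩
  have hunused := hf.card_sdiff_image_add_card
  have hcard := card_sdiff_add_card_eq_card hK
  omega

-- Embed all of `H` except a vertex of minimum degree: as it cannot be added, the red neighbourhoods
-- of the images of its neighbours cover the unused vertices.
lemma exists_mul_card_le_degIn_mul (h : IsMinimalCounterexample t B H G U A)
    (hD : 0 < degSum H U) : ∃ x, (#A - #U) * #U ≤ degIn G A x * degSum H U := by
  have hUne : U.Nonempty := by
    by_contra hne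
    simp [not_nonempty_iff_eq_empty.mp hne, degSum] at hD
  have hAne : A.Nonempty := card_pos.mp ((card_pos.mpr hUne).trans_le h.card_le_card)
  obtain ⟨v, hv, hmin⟩ := exists_min_image U (degIn H U) hUne
  obtain ⟨x, -, hmax⟩ := exists_max_image A (degIn G A) hAne
  refine ⟨x, ?_⟩
  have hv1 := h.one_le_degIn v hv
  have herase := degSum_erase H hv
  obtain ⟨f, hf⟩ := h.hasBlueCopy_of_subset (erase_subset v U) (by omega)
  have hcover : A \ (U.erase v).image f ⊆
      ({u ∈ U | H.Adj v u}).biUnion fun u => {w ∈ A | G.Adj (f u) w} := by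
    intro y hy
    by_contra hcon
    simp only [mem_biUnion, mem_filter, not_exists, not_and] at hcon
    obtain ⟨hyA, hyim⟩ := mem_sdiff.mp hy
    obtain ⟨e, he, -⟩ := hf.extend_vertex (notMem_erase v U) hyA
      (fun u hu heq => hyim (mem_image.mpr ⟨u, hu, heq⟩))
      fun u hu huv => hcon u ⟨mem_of_mem_erase hu, huv.symm⟩ hyA
    exact h.not_hasBlueCopy ⟨e, insert_erase hv ▸ he⟩
  have hunused : #A - #U ≤ degIn H U v * degIn G A x := by
    have hcard : #(A \ (U.erase v).image f) ≤ degIn H U v * degIn G A x :=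
      (Finset.card_le_card hcover).trans <| card_biUnion_le_card_mul _ _ _ fun u hu =>
        hmax _ <| hf.mem u <| mem_erase.mpr ⟨(mem_filter.mp hu).2.ne', (mem_filter.mp hu).1⟩
    have := hf.card_sdiff_image_add_card
    have := card_erase_le (s := U) (a := v)
    omega
  have hδ : #U * degIn H U v ≤ degSum H U := card_nsmul_le_sum U _ _ hmin
  calc (#A - #U) * #U ≤ degIn H U v * degIn G A x * #U := by gcongr
    _ = degIn G A x * (#U * degIn H U v) := by ring
    _ ≤ degIn G A x * degSum H U := by gcongr

variable [Nonempty W]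

lemma card_sub_card_lt (h : IsMinimalCounterexample t B H G U A) (hK : K ⊆ U)
    (hcl : IsClosedIn H U K) (hne : K.Nonempty) : #A - #U < (2 * t + 1) * #K * #K := by
  by_contra! hle
  obtain ⟨A', hA'card, hA'⟩ := h.exists_not_hasBlueCopy_of_isClosedIn hK hcl hne
  have := h.card_le_card
  obtain ⟨I, hIA, hI, hIcard⟩ := exists_isIndepSet_card_eq_of_free (A := A')
    (by have := h.three_le; omega) h.free #K (by omega)
  exact hA' ((hasBlueCopy_of_isIndepSet hI hIcard.ge).mono subset_rfl hIA)

lemma le_card_of_isClosedIn {C : ℕ} (h : IsMinimalCounterexample t B H G U A)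
    (hC : (2 * t + 1) * C * C ≤ #A - #U) (hK : K ⊆ U) (hne : K.Nonempty)
    (hcl : IsClosedIn H U K) : C ≤ #K := by
  by_contra! hlt
  have := h.card_sub_card_lt hK hcl hne
  have : (2 * t + 1) * #K * #K ≤ (2 * t + 1) * C * C := by gcongr
  omega

-- All components of `H` have at least `C` vertices.
lemma two_mul_card_mul_le (h : IsMinimalCounterexample t B H G U A) {C : ℕ} (hC : 1 ≤ C)
    (hA : (2 * t + 1) * C * C ≤ #A - #U) : 2 * #U * C ≤ degSum H U * C + 2 * #U := by
  obtain ⟨P, hP⟩ := exists_finpartition_hasTreeSize (H := H) (X := U) (d := #U) hC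
    fun v _ => degIn_le_card H U v
  have hbig : ∀ T ∈ P.parts, C ≤ #T := fun T hT => (hP T hT).2.2.elim id
    (h.le_card_of_isClosedIn hA (P.le hT) (P.nonempty_of_mem_parts hT))
  have hparts : #P.parts * C ≤ #U := by
    rw [← P.sum_card_parts]
    exact card_nsmul_le_sum _ _ C hbig
  have htree : 2 * #U ≤ degSum H U + 2 * #P.parts := by
    calc 2 * #U = ∑ T ∈ P.parts, 2 * #T := by rw [← mul_sum, P.sum_card_parts]
      _ ≤ ∑ T ∈ P.parts, (degSum H T + 2) := sum_le_sum fun T hT => (hP T hT).1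
      _ = ∑ T ∈ P.parts, degSum H T + 2 * #P.parts := by simp [sum_add_distrib, mul_comm]
      _ ≤ degSum H U + 2 * #P.parts := Nat.add_le_add_right (sum_degSum_parts_le P) _
  nlinarith

-- Otherwise most components of `H` would be single edges.
lemma le_card_sub_card (h : IsMinimalCounterexample t B H G U A) {R : ℕ}
    (hD : 4 * R + 20 * t * t + 20 ≤ degSum H U) : R ≤ #A - #U := by
  by_contra! hlt
  have hA := h.degSum_add_le
  have hU := h.card_le_degSum
  have ht := h.three_le
  obtain ⟨T, hTU, hcl, hT, hcard⟩ := exists_isClosedIn_degIn_eq_one h.one_le_degIn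
  have hTcard := card_sdiff_add_card_eq_card hTU
  have hTne : T.Nonempty := card_pos.mp (by omega)
  obtain ⟨A', hA'card, hA'⟩ := h.exists_not_hasBlueCopy_of_isClosedIn hTU hcl hTne
  exact hA' (hasBlueCopy_of_degIn_eq_one (by omega) h.free hT (by omega) (by nlinarith))

end IsMinimalCounterexample

end MinimalCounterexamples

section DenseCase

lemma exists_isIndepSet_neighbors_of_free {W : Type*} {G : SimpleGraph W} {A : Finset W} {x : W}
    {k m n : ℕ} (hk : 3 ≤ k) (hG : (cycleGraph k).Free G) (hm : n ≤ m * degIn G A x) :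
    ∃ I ⊆ A, (∀ a ∈ I, G.Adj x a) ∧ G.IsIndepSet (I : Set W) ∧ #I ≤ n ∧ n ≤ m * k * #I := by
  obtain ⟨J, hJ, hJind, hJcard⟩ := (isDegenerateOn_neighbors_of_free hk hG (x := x)
    (A := {w ∈ A | G.Adj x w}) (by simp)).exists_isIndepSet
  obtain ⟨I, hIJ, hI⟩ := exists_subset_card_eq (min_le_left #J n)
  refine ⟨I, (hIJ.trans hJ).trans (filter_subset _ _),
    fun a ha => (mem_filter.mp (hJ (hIJ ha))).2, hJind.mono (coe_subset.mpr hIJ), by omega, ?_⟩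
  have hn : n ≤ m * k * #J := hm.trans (mul_assoc m k #J ▸ Nat.mul_le_mul_left m hJcard)
  rw [hI]
  rcases min_choice #J n with hmin | hmin <;> rw [hmin]
  · exact hn
  · rcases Nat.eq_zero_or_pos (m * k) with hmk | hmk
    · simpa [hmk] using hn
    · exact Nat.le_mul_of_pos_left n hmk

namespace IsMinimalCounterexample

variable {V : Type*} {W : Type*} {t B : ℕ} {H : SimpleGraph V} {G : SimpleGraph W}
  {U T : Finset V} {A I : Finset W} {x : W}

-- Embed the rest of `H` into `A` minus `x`, `I` and the red neighbours `N` of `I`.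
lemma exists_isDegenerateOn (h : IsMinimalCounterexample t B H G U A) (hIA : I ⊆ A)
    (hIx : ∀ a ∈ I, G.Adj x a) (hTU : T ⊆ U) (hlt : degSum H T < degSum H U)
    (hI : HasBlueCopy H G (U \ T) I) :
    ∃ N ⊆ A, IsDegenerateOn G (2 * t + 1) N ∧
      (degSum H U < degSum H T + #I + #N + 1 + Nat.sqrt (degSum H U) ∨
        degSum H U < #T + #I + #N + 1) := by
  set N := {b ∈ A | b ∉ I ∧ b ≠ x ∧ ∃ a ∈ I, G.Adj a b} with hN
  refine ⟨N, filter_subset _ _, isDegenerateOn_secondNeighbors_of_free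
    (by have := h.three_le; omega) ⟨t, rfl⟩ h.free hIx
    (disjoint_right.mpr fun b hb => (mem_filter.mp hb).2.1) (by simp [hN])
    fun b hb => (mem_filter.mp hb).2.2.2, ?_⟩
  by_contra! hroom
  have hA := h.card_le
  have hslack := slack_le_slack_add_sqrt B t (degSum H T) (degSum H U)
  have hremoved : #A ≤ #(A \ (I ∪ N ∪ {x})) + (#I + #N + 1) := by
    have := le_card_sdiff (I ∪ N ∪ {x}) A
    have := card_union_le (I ∪ N) {x}
    have := card_union_le I N
    rw [card_singleton] at *
    omega
  have hT : HasBlueCopy H G T (A \ (I ∪ N ∪ {x})) :=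
    h.hasBlueCopy_of_lt _ _ hlt (by omega) (by omega)
  refine h.not_hasBlueCopy <|
    hI.of_sdiff_of_not_adj hTU hT hIA sdiff_subset ?_ fun a ha b hb hab => ?_
  · exact disjoint_sdiff.mono_left (subset_union_left.trans subset_union_left)
  · simp only [mem_sdiff, mem_union, mem_singleton, not_or] at hb
    exact hb.2.1.2 (mem_filter.mpr ⟨hb.1, hb.2.1.1, hb.2.2, a, ha, hab⟩)

lemma exists_card_le_two_mul_degIn (h : IsMinimalCounterexample t B H G U A)
    (hD : 0 < degSum H U) (hU : 2 * #U ≤ degSum H U) : ∃ x, #U ≤ 2 * degIn G A x := by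
  obtain ⟨x, hx⟩ := h.exists_mul_card_le_degIn_mul hD
  have hA := h.degSum_add_le
  refine ⟨x, Nat.le_of_mul_le_mul_left (c := degSum H U) ?_ hD⟩
  calc degSum H U * #U ≤ 2 * (#A - #U) * #U := Nat.mul_le_mul_right _ (by omega)
    _ = 2 * ((#A - #U) * #U) := mul_assoc _ _ _
    _ ≤ 2 * (degIn G A x * degSum H U) := Nat.mul_le_mul_left _ hx
    _ = degSum H U * (2 * degIn G A x) := by ring

lemma exists_card_mul_le_degIn_mul (h : IsMinimalCounterexample t B H G U A) {E : ℕ}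
    (hE1 : 1 ≤ E) (hD : 0 < degSum H U) (hE : 2 * #U * (E + 1) ≤ degSum H U * E) :
    ∃ x, #U * (2 * E + 1) ≤ 4 * E * degIn G A x := by
  obtain ⟨x, hx⟩ := h.exists_mul_card_le_degIn_mul hD
  refine ⟨x, Nat.le_of_mul_le_mul_left (c := degSum H U) ?_ hD⟩
  obtain ⟨c, hc⟩ := Nat.exists_eq_add_of_le h.card_le_degSum
  have hcA : c ≤ #A - #U := by have := h.degSum_add_le; omega
  have hDc : degSum H U * (2 * E + 1) ≤ 4 * E * c := by
    rw [hc] at hE ⊢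
    have : #U * E + 2 * #U ≤ c * E := by linarith
    nlinarith
  calc degSum H U * (#U * (2 * E + 1)) = degSum H U * (2 * E + 1) * #U := by ring
    _ ≤ 4 * E * c * #U := Nat.mul_le_mul_right _ hDc
    _ = 4 * E * (c * #U) := by ring
    _ ≤ 4 * E * (degIn G A x * degSum H U) :=
      Nat.mul_le_mul_left _ ((Nat.mul_le_mul_right _ hcA).trans hx)
    _ = degSum H U * (4 * E * degIn G A x) := by ring

-- `hdeg` is what the sparse embedding theorem gives once `#U` is large.
lemma degSum_mul_lt_of_hasBlueCopy (h : IsMinimalCounterexample t B H G U A) {E : ℕ} (hE : 1 ≤ E)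
    (hU : 8 * E ≤ #U) (hsqrt : 2 * E * Nat.sqrt (degSum H U) ≤ #U)
    (hdeg : ∀ S ⊆ U, ∀ N ⊆ A, IsDegenerateOn G (2 * t + 1) N →
      #S * (8 * E) + #U ≤ #N * (8 * E) → HasBlueCopy H G S N) :
    degSum H U * E < 2 * #U * (E + 1) := by
  by_contra! hdense
  have hk : 3 ≤ 2 * t + 1 := by have := h.three_le; omega
  have hD : 0 < degSum H U := lt_of_lt_of_le (by omega) h.card_le_degSum
  obtain ⟨x, hx⟩ := h.exists_card_mul_le_degIn_mul hE hD hdense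
  obtain ⟨I, hI, hIcard⟩ := exists_subset_card_eq
    (min_le_left (degIn G A x) (#U * (2 * E + 1) / (4 * E) + 1))
  have hIA : I ⊆ A := hI.trans (filter_subset _ _)
  have hIx : ∀ a ∈ I, G.Adj x a := fun a ha => (mem_filter.mp (hI ha)).2
  have hdiv := Nat.div_mul_le_self (#U * (2 * E + 1)) (4 * E)
  have hmod := Nat.lt_mul_div_succ (#U * (2 * E + 1)) (show 0 < 4 * E by omega)
  have hIlower : #U * (2 * E + 1) ≤ 4 * E * #I := by
    rcases min_choice (degIn G A x) (#U * (2 * E + 1) / (4 * E) + 1) with hmin | hmin <;>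
      rw [hIcard, hmin]
    exacts [hx, hmod.le]
  have hIupper : 4 * E * #I ≤ #U * (2 * E + 1) + 4 * E := by
    calc 4 * E * #I ≤ 4 * E * (#U * (2 * E + 1) / (4 * E) + 1) := by
          rw [hIcard]; exact Nat.mul_le_mul_left _ (min_le_right _ _)
      _ ≤ #U * (2 * E + 1) + 4 * E := by linarith
  obtain ⟨T, hTU, hTcard, hT⟩ := exists_subset_four_mul_degSum_le H (U := U) (c := #U / 2)
    (by omega) (by omega)
  have hcard := card_sdiff_add_card_eq_card hTU
  have hUT : HasBlueCopy H G (U \ T) I := by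
    refine hdeg _ sdiff_subset I hIA (isDegenerateOn_neighbors_of_free hk h.free hIx) ?_
    have : 4 * E * (2 * #(U \ T)) ≤ 4 * E * (#U + 1) := Nat.mul_le_mul_left _ (by omega)
    linarith
  obtain ⟨N, hNA, hN, hroom⟩ := h.exists_isDegenerateOn hIA hIx hTU (by omega) hUT
  have hNcard : #N * (8 * E) < #U * (8 * E) + #U := by
    by_contra! hN'
    exact h.not_hasBlueCopy ((hdeg U subset_rfl N hNA hN hN').mono subset_rfl hNA)
  have hTE : E * (4 * degSum H T) ≤ E * degSum H U := Nat.mul_le_mul_left _ hT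
  have hTE' : E * (2 * #T) ≤ E * #U := Nat.mul_le_mul_left _ (by omega)
  rcases hroom with hroom | hroom <;>
  · have := Nat.mul_le_mul_left E (Nat.succ_le_of_lt hroom)
    linarith

variable [Nonempty W]

lemma card_lt_of_isDegenerateOn (h : IsMinimalCounterexample t B H G U A) {d : ℕ} {N : Finset W}
    (hd : 0 < d) (hNA : N ⊆ A) (hN : IsDegenerateOn G d N) : #N < d * #U := by
  by_contra! hcard
  obtain ⟨J, hJN, hJ, hJcard⟩ := hN.exists_isIndepSet
  exact h.not_hasBlueCopy ((hasBlueCopy_of_isIndepSet hJ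
    (Nat.le_of_mul_le_mul_left (hcard.trans hJcard) hd)).mono subset_rfl (hJN.trans hNA))

lemma degSum_lt_of_le (h : IsMinimalCounterexample t B H G U A)
    (hD : 64 * (2 * t + 1) * (2 * t + 1) ≤ degSum H U) :
    degSum H U < 16 * (2 * t + 1) * (2 * t + 1) * #U := by
  by_contra! hdense
  have ht := h.three_le
  have hfree := h.free
  have hexists := @h.exists_isDegenerateOn
  generalize hk : 2 * t + 1 = k at hD hdense hfree hexists
  have hU : 0 < #U := Nat.pos_of_ne_zero fun hU => by
    have := degSum_le_card_mul_pred H U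
    simp only [hU, zero_mul] at this
    nlinarith
  have hDU : 2 * (k * #U) ≤ degSum H U := by nlinarith
  have hkU : 7 * #U ≤ k * #U := Nat.mul_le_mul_right _ (by omega)
  obtain ⟨x, hx⟩ := h.exists_card_le_two_mul_degIn (by omega) (by omega)
  obtain ⟨I, hIA, hIx, hI, hIU, hUI⟩ :=
    exists_isIndepSet_neighbors_of_free (by omega) hfree hx
  obtain ⟨T, hTU, hTcard, hT⟩ := exists_subset_degSum_add_mul_le H hIU hUI
  have hlt : degSum H T < degSum H U := by
    by_contra! hge
    have := Nat.mul_le_mul_left (2 * k) hge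
    omega
  have hcard := card_sdiff_add_card_eq_card hTU
  obtain ⟨N, hNA, hN, hroom⟩ := hexists _ _ _ hIA hIx hTU hlt
    (hasBlueCopy_of_isIndepSet hI (by omega))
  have hNcard := h.card_lt_of_isDegenerateOn (by omega) hNA hN
  have hsqrt : 8 * k * Nat.sqrt (degSum H U) ≤ degSum H U :=
    (Nat.mul_le_mul_right _ (Nat.le_sqrt.mpr (by linarith))).trans (Nat.sqrt_le _)
  rcases hroom with hroom | hroom
  · have := Nat.mul_le_mul_left (2 * k) (Nat.succ_le_of_lt hroom)
    have := Nat.mul_le_mul_left (2 * k) hNcard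
    have := Nat.mul_le_mul_left (2 * k) hIU
    have := Nat.mul_le_mul_left (2 * k) hkU
    nlinarith
  · omega

end IsMinimalCounterexample

universe u v

lemma exists_forall_degSum_mul_lt_of_degSum_le (t E C : ℕ) (hE : 1 ≤ E) (hC : 1 ≤ C) :
    ∃ n₀ : ℕ, ∀ (V : Type u) (W : Type v) [Nonempty W] (B : ℕ) (H : SimpleGraph V)
      (G : SimpleGraph W) (U : Finset V) (A : Finset W), IsMinimalCounterexample t B H G U A →
      n₀ ≤ #U → degSum H U ≤ C * #U → degSum H U * E < 2 * #U * (E + 1) := by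
  obtain ⟨n₁, hn₁⟩ := IsDegenerateOn.exists_forall_hasBlueCopy.{u, v} (k := 2 * t + 1) (C := C)
    (e := 8 * E) (by omega) hC (by omega)
  refine ⟨n₁ + 8 * E + 4 * E * E * C, fun V W _ B H G U A h hU hDU => ?_⟩
  have hsqrt : 2 * E * Nat.sqrt (degSum H U) ≤ #U := by
    refine Nat.mul_self_le_mul_self_iff.mp ?_
    calc 2 * E * Nat.sqrt (degSum H U) * (2 * E * Nat.sqrt (degSum H U))
        = 4 * E * E * (Nat.sqrt (degSum H U) * Nat.sqrt (degSum H U)) := by ring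
      _ ≤ 4 * E * E * (C * #U) := Nat.mul_le_mul_left _ ((Nat.sqrt_le _).trans hDU)
      _ = 4 * E * E * C * #U := by ring
      _ ≤ #U * #U := Nat.mul_le_mul_right _ (by omega)
  exact h.degSum_mul_lt_of_hasBlueCopy hE (by omega) hsqrt fun S hS N _ hN hSN =>
    hn₁ V W H G S N #U (by omega) hN (card_le_card hS) ((degSum_mono H hS).trans hDU) hSN

lemma exists_forall_degSum_mul_lt (t E : ℕ) (hE : 1 ≤ E) :
    ∃ D₀ : ℕ, ∀ (V : Type u) (W : Type v) [Nonempty W] (B : ℕ) (H : SimpleGraph V)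
      (G : SimpleGraph W) (U : Finset V) (A : Finset W), IsMinimalCounterexample t B H G U A →
      D₀ ≤ degSum H U → degSum H U * E < 2 * #U * (E + 1) := by
  obtain ⟨n₀, hn₀⟩ := exists_forall_degSum_mul_lt_of_degSum_le.{u, v} t E
    (16 * (2 * t + 1) * (2 * t + 1)) hE (by nlinarith)
  refine ⟨64 * (2 * t + 1) * (2 * t + 1) + n₀ * n₀, fun V W _ B H G U A h hD => ?_⟩
  refine hn₀ V W B H G U A h ?_ (h.degSum_lt_of_le (by omega)).le
  refine Nat.mul_self_le_mul_self_iff.mp <| (Nat.le_of_add_left_le hD).trans <|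
    (degSum_le_card_mul_pred H U).trans (Nat.mul_le_mul_left _ (Nat.sub_le _ _))

end DenseCase

section Separators

variable {V W : Type*} {H : SimpleGraph V} {G : SimpleGraph W} {U X : Finset V}

/-- The vertices of `X` with an `H`-neighbour in another part of the partition `P`. -/
noncomputable def boundary (H : SimpleGraph V) (P : Finpartition X) : Finset V :=
  P.parts.biUnion fun T => {v ∈ T | 1 ≤ degIn H (X \ T) v}

lemma boundary_subset (H : SimpleGraph V) (P : Finpartition X) : boundary H P ⊆ X :=
  biUnion_subset.mpr fun _ hT => (filter_subset _ _).trans (P.le hT)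

lemma card_boundary_le (H : SimpleGraph V) (P : Finpartition X) :
    #(boundary H P) ≤ ∑ T ∈ P.parts, ∑ v ∈ T, degIn H (X \ T) v :=
  card_biUnion_le.trans <| sum_le_sum fun T _ => by
    rw [card_eq_sum_ones]
    exact (sum_le_sum fun v hv => (mem_filter.mp hv).2).trans
      (sum_le_sum_of_subset (filter_subset _ _))

lemma isClosedIn_of_mem_avoid_boundary {P : Finpartition X} {T : Finset V}
    (hT : T ∈ (P.avoid (boundary H P)).parts) : IsClosedIn H (X \ boundary H P) T := by
  obtain ⟨T, hTP, -, rfl⟩ := (Finpartition.mem_avoid _).mp hT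
  intro v hv u hu hvu
  rw [mem_sdiff] at hu
  refine mem_sdiff.mpr ⟨by_contra fun huT => (mem_sdiff.mp hv).2 ?_, hu.2⟩
  exact mem_biUnion.mpr ⟨T, hTP, mem_filter.mpr
    ⟨(mem_sdiff.mp hv).1, one_le_degIn (mem_sdiff.mpr ⟨hu.1, huT⟩) hvu⟩⟩

lemma one_le_sum_degIn_sdiff {T : Finset V} (hT : IsClosedIn H X T)
    (hU : ¬ IsClosedIn H U T) : 1 ≤ ∑ v ∈ T, degIn H (U \ X) v := by
  unfold IsClosedIn at hU
  push Not at hU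
  obtain ⟨v, hv, u, hu, hvu, huT⟩ := hU
  have huX : u ∉ X := fun huX => huT (hT v hv u huX hvu)
  exact (one_le_degIn (mem_sdiff.mpr ⟨hu, huX⟩) hvu).trans
    (single_le_sum (f := fun v => degIn H (U \ X) v) (fun _ _ => Nat.zero_le _) hv)

-- A part is a tree or more, and a small part sends an edge out of `X`, since it is not closed.
lemma two_mul_card_add_card_boundary_le {C : ℕ} (hXU : X ⊆ U) {P : Finpartition X}
    (htree : ∀ T ∈ P.parts, HasTreeSize H T)
    (hP : ∀ T ∈ P.parts, C ≤ #T ∨ IsClosedIn H X T)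
    (hcl : ∀ K ⊆ U, K.Nonempty → IsClosedIn H U K → C ≤ #K) :
    2 * #X + #(boundary H P) ≤ degSum H U + 2 * #{T ∈ P.parts | C ≤ #T} := by
  have hpart : ∀ T ∈ P.parts, 2 * #T ≤
      degSum H T + 2 * ∑ v ∈ T, degIn H (U \ X) v + if C ≤ #T then 2 else 0 := by
    intro T hT
    have hsize := htree T hT
    unfold HasTreeSize at hsize
    split_ifs with hCT
    · omega
    · have := one_le_sum_degIn_sdiff ((hP T hT).resolve_left hCT)
        fun h => hCT (hcl T ((P.le hT).trans hXU) (P.nonempty_of_mem_parts hT) h)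
      omega
  have hsum := sum_le_sum hpart
  rw [← mul_sum, P.sum_card_parts, sum_add_distrib, sum_add_distrib, ← mul_sum,
    ← sum_filter, sum_const, smul_eq_mul] at hsum
  have hX : ∑ v ∈ X, degIn H (U \ X) v = ∑ T ∈ P.parts, ∑ v ∈ T, degIn H (U \ X) v := by
    simpa only [P.biUnion_parts, id] using sum_biUnion (f := degIn H (U \ X)) P.disjoint
  have hparts := sum_degSum_parts_add (H := H) P
  rw [sum_add_distrib] at hparts
  have := card_boundary_le H P
  have := degSum_sdiff H hXU
  omega

lemma exists_separator {α : ℕ} (hα : 1 ≤ α)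
    (hD : degSum H U * (12 * α) ≤ 2 * #U * (12 * α + 1))
    (hcl : ∀ K ⊆ U, K.Nonempty → IsClosedIn H U K → 12 * α ≤ #K) :
    ∃ S ⊆ U, 2 * α * #S ≤ #U ∧ (∀ v ∈ U \ S, degIn H U v ≤ 72 * α) ∧
      ∃ Q : Finpartition (U \ S), ∀ T ∈ Q.parts,
        #T ≤ 12 * α + 12 * α * (12 * α) * (72 * α) ∧ IsClosedIn H (U \ S) T := by
  set L := {v ∈ U | 72 * α ≤ degIn H U v}
  have hLU : L ⊆ U := filter_subset _ _
  have hdeg : ∀ v ∈ U \ L, degIn H U v ≤ 72 * α := fun v hv => by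
    by_contra! hlt
    exact (mem_sdiff.mp hv).2 (mem_filter.mpr ⟨(mem_sdiff.mp hv).1, hlt.le⟩)
  obtain ⟨P, hP⟩ := exists_finpartition_hasTreeSize (H := H) (show 1 ≤ 12 * α by omega)
    fun v hv => (degIn_mono H sdiff_subset v).trans (hdeg v hv)
  have hcount := two_mul_card_add_card_boundary_le sdiff_subset (fun T hT => (hP T hT).1)
    (fun T hT => (hP T hT).2.2) hcl
  refine ⟨L ∪ boundary H P, union_subset hLU ((boundary_subset H P).trans sdiff_subset), ?_, ?_, ?_⟩
  · have hbig : #{T ∈ P.parts | 12 * α ≤ #T} * (12 * α) ≤ #U := by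
      refine (card_nsmul_le_sum _ (fun T => #T) _ fun T hT => (mem_filter.mp hT).2).trans ?_
      refine (sum_le_sum_of_subset (filter_subset _ _)).trans ?_
      rw [P.sum_card_parts]
      exact card_le_card sdiff_subset
    have hL : #L * (72 * α) ≤ degSum H U := card_filter_le_degIn_mul_le_degSum H U _
    have hD4 : degSum H U ≤ 4 * #U := by
      refine Nat.le_of_mul_le_mul_right (hD.trans ?_) (show 0 < 12 * α by omega)
      nlinarith [Nat.le_mul_of_pos_right #U hα]
    have hS : #(L ∪ boundary H P) + 2 * #U ≤
        3 * #L + 2 * #{T ∈ P.parts | 12 * α ≤ #T} + degSum H U := by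
      have := card_union_le L (boundary H P)
      have := card_sdiff_add_card_eq_card hLU
      omega
    have := Nat.mul_le_mul_left (12 * α) hS
    have : 6 * (2 * α * #(L ∪ boundary H P)) ≤ 6 * #U := by nlinarith
    omega
  · exact fun v hv => hdeg v (sdiff_subset_sdiff subset_rfl subset_union_left hv)
  · rw [← sup_eq_union, ← sdiff_sdiff_left]
    refine ⟨P.avoid (boundary H P), fun T hT => ⟨?_, isClosedIn_of_mem_avoid_boundary hT⟩⟩
    obtain ⟨T, hTP, -, rfl⟩ := (Finpartition.mem_avoid _).mp hT
    exact (card_le_card sdiff_subset).trans (hP T hTP).2.1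

end Separators

section SeparatorEmbedding

variable {V W : Type*} [Nonempty W] {H : SimpleGraph V} {G : SimpleGraph W} {f : V → W}
  {U S T : Finset V} {A I Z : Finset W} {k M d q : ℕ}

lemma IsBlueCopy.extend_of_forall_degIn_le (hk : 3 ≤ k) (hG : (cycleGraph k).Free G)
    (hf : IsBlueCopy H G f U A) (hfI : ∀ u ∈ S, f u ∈ I) (hUT : Disjoint U T)
    (hS : ∀ v ∈ T, ∀ u ∈ U, H.Adj v u → u ∈ S) (hM : #T ≤ M) (hd : ∀ v ∈ T, degIn H S v ≤ d)
    (hZA : Z ⊆ A) (hq : ∀ p ∈ I, degIn G Z p ≤ q) (hZ : #U + M * d * q + k * M * M ≤ #Z) :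
    ∃ e, IsBlueCopy H G e (U ∪ T) A ∧ ∀ u ∈ U, e u = f u := by
  set N := (T.biUnion fun v => {u ∈ S | H.Adj v u}).biUnion fun u => {z ∈ Z | G.Adj (f u) z}
  have hN : #N ≤ M * d * q := by
    refine (card_biUnion_le_card_mul _ _ _ fun u hu => ?_).trans (Nat.mul_le_mul_right q
      ((card_biUnion_le_card_mul _ _ _ hd).trans (Nat.mul_le_mul_right d hM)))
    obtain ⟨v, -, hu⟩ := mem_biUnion.mp hu
    exact hq _ (hfI u (mem_filter.mp hu).1)
  have hroom : k * M * M ≤ #(Z \ (U.image f ∪ N)) := by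
    have := le_card_sdiff (U.image f ∪ N) Z
    have := card_union_le (U.image f) N
    have := hf.card_image
    omega
  obtain ⟨J, hJ, hJindep, hJcard⟩ := exists_isIndepSet_card_eq_of_free hk hG M hroom
  obtain ⟨e, he, hef, -⟩ := hf.extend_isIndepSet hUT ((hJ.trans sdiff_subset).trans hZA) hJindep
    (hJcard ▸ hM)
    (fun z hz u hu hfu => (mem_sdiff.mp (hJ hz)).2
      (mem_union_left _ (mem_image.mpr ⟨u, hu, hfu⟩)))
    (fun z hz u hu v hv huv hfz => (mem_sdiff.mp (hJ hz)).2 <| mem_union_right _ <|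
      mem_biUnion.mpr ⟨u, mem_biUnion.mpr ⟨v, hv, mem_filter.mpr ⟨hS v hv u hu huv.symm, huv.symm⟩⟩,
        mem_filter.mpr ⟨(mem_sdiff.mp (hJ hz)).1, hfz⟩⟩)
  exact ⟨e, he, hef⟩

lemma hasBlueCopy_of_separator (hk : 3 ≤ k) (hG : (cycleGraph k).Free G) (hSU : S ⊆ U)
    (Q : Finpartition (U \ S)) (hM : ∀ T ∈ Q.parts, #T ≤ M)
    (hQ : ∀ T ∈ Q.parts, IsClosedIn H (U \ S) T) (hd : ∀ v ∈ U \ S, degIn H U v ≤ d)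
    (hI : G.IsIndepSet (I : Set W)) (hIA : I ⊆ A) (hSI : #S ≤ #I) (hZA : Z ⊆ A)
    (hq : ∀ p ∈ I, degIn G Z p ≤ q) (hZ : #U + M * d * q + k * M * M ≤ #Z) :
    HasBlueCopy H G U A := by
  suffices h : ∀ R ⊆ Q.parts, ∃ f, IsBlueCopy H G f (S ∪ R.biUnion id) A ∧ ∀ u ∈ S, f u ∈ I by
    obtain ⟨f, hf, -⟩ := h Q.parts subset_rfl
    rw [Q.biUnion_parts, union_sdiff_of_subset hSU] at hf
    exact ⟨f, hf⟩
  intro R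
  induction R using Finset.induction with
  | empty =>
    intro _
    obtain ⟨f, hf⟩ := hasBlueCopy_of_isIndepSet (H := H) hI hSI
    exact ⟨f, by simpa using hf.mono subset_rfl hIA, hf.mem⟩
  | insert T R hTR ih =>
    intro hR
    obtain ⟨f, hf, hfI⟩ := ih ((subset_insert _ _).trans hR)
    have hTQ : T ∈ Q.parts := hR (mem_insert_self _ _)
    have hRU : S ∪ R.biUnion id ⊆ U := union_subset hSU <| biUnion_subset.mpr fun T' hT' =>
      (Q.le (hR (mem_insert_of_mem hT'))).trans sdiff_subset
    have hdisj : Disjoint (S ∪ R.biUnion id) T := by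
      refine disjoint_union_left.mpr ⟨disjoint_sdiff.mono_right (Q.le hTQ),
        (disjoint_biUnion_left _ _ _).mpr fun T' hT' => ?_⟩
      exact Q.disjoint (hR (mem_insert_of_mem hT')) hTQ fun h => hTR (h ▸ hT')
    obtain ⟨e, he, hef⟩ := hf.extend_of_forall_degIn_le hk hG hfI hdisj
      (fun v hv u hu hvu => by_contra fun huS => disjoint_left.mp hdisj hu
        (hQ T hTQ v hv u (mem_sdiff.mpr ⟨hRU hu, huS⟩) hvu))
      (hM T hTQ) (fun v hv => (degIn_mono H hSU v).trans (hd v (Q.le hTQ hv))) hZA hq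
      ((Nat.add_le_add_right (Nat.add_le_add_right (card_le_card hRU) _) _).trans hZ)
    refine ⟨e, ?_, fun u hu => hef u (mem_union_left _ hu) ▸ hfI u hu⟩
    rwa [biUnion_insert, id, union_left_comm, union_comm]

end SeparatorEmbedding

section LargeDegrees

lemma exists_subset_forall_degIn_lt {W : Type*} {G : SimpleGraph W} {P Z : Finset W} {m q b : ℕ}
    (hZ : ∀ w ∈ Z, degIn G P w * b ≤ m) (hq : 2 * #Z * m < #P * (q * b)) :
    ∃ I ⊆ P, #P ≤ 2 * #I ∧ ∀ p ∈ I, degIn G Z p < q := by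
  refine ⟨{p ∈ P | degIn G Z p < q}, filter_subset _ _, ?_, fun p hp => (mem_filter.mp hp).2⟩
  have hbad : #{p ∈ P | ¬ degIn G Z p < q} * q * b ≤ #Z * m := by
    calc #{p ∈ P | ¬ degIn G Z p < q} * q * b
        ≤ (∑ p ∈ P, degIn G Z p) * b := Nat.mul_le_mul_right b <|
          (card_nsmul_le_sum _ _ _ fun p hp => not_lt.mp (mem_filter.mp hp).2).trans
            (sum_le_sum_of_subset (filter_subset _ _))
      _ = ∑ w ∈ Z, degIn G P w * b := by rw [sum_degIn_comm, sum_mul]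
      _ ≤ #Z * m := sum_le_card_nsmul _ _ _ hZ
  have hcard := card_filter_add_card_filter_not (s := P) fun p => degIn G Z p < q
  by_contra! hlt
  have := Nat.mul_le_mul_right (q * b)
    (show #P ≤ 2 * #{p ∈ P | ¬ degIn G Z p < q} by omega)
  nlinarith

lemma hasBlueCopy_of_forall_degIn_mul_le {V W : Type*} [Nonempty W] {H : SimpleGraph V}
    {G : SimpleGraph W} {U S : Finset V} {A P Z : Finset W} {k M d α b : ℕ} (hk : 3 ≤ k)
    (hG : (cycleGraph k).Free G) (hSU : S ⊆ U) (Q : Finpartition (U \ S))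
    (hQ : ∀ T ∈ Q.parts, #T ≤ M ∧ IsClosedIn H (U \ S) T) (hd : ∀ v ∈ U \ S, degIn H U v ≤ d)
    (hS : 2 * α * #S ≤ #U) (hP : G.IsIndepSet (P : Set W)) (hPA : P ⊆ A) (hPα : #U < #P * α)
    (hZA : Z ⊆ A) (hZP : ∀ w ∈ Z, degIn G P w * b ≤ #U) (hb : 0 < b)
    (hbα : 1600 * α * (M * d) ≤ b) (hU : 400 * (M * d + k * M * M + 1) ≤ #U)
    (hZ : #Z = #U + #U / 200) : HasBlueCopy H G U A := by
  have hα : 0 < α := Nat.pos_of_ne_zero (by rintro rfl; simp at hPα)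
  set y := 4 * α * #U / b
  have hy : y * b ≤ 4 * α * #U := Nat.div_mul_le_self _ _
  have hqb : 4 * α * #U < (y + 1) * b := (Nat.div_lt_iff_lt_mul hb).mp (Nat.lt_succ_self _)
  have hcy : 400 * (M * d * y) ≤ #U := by
    refine Nat.le_of_mul_le_mul_left (?_ : 4 * α * _ ≤ 4 * α * #U) (by omega)
    calc 4 * α * (400 * (M * d * y)) = y * (1600 * α * (M * d)) := by ring
      _ ≤ 4 * α * #U := (Nat.mul_le_mul_left y hbα).trans hy
  have hq : 2 * #Z * #U < #P * ((y + 1) * b) := by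
    refine Nat.lt_of_mul_lt_mul_left (a := α) ?_
    calc α * (2 * #Z * #U) ≤ α * (2 * (2 * #U) * #U) := by gcongr; omega
      _ = #U * (4 * α * #U) := by ring
      _ ≤ #U * ((y + 1) * b) := Nat.mul_le_mul_left _ hqb.le
      _ < #P * α * ((y + 1) * b) := Nat.mul_lt_mul_of_pos_right hPα (by positivity)
      _ = α * (#P * ((y + 1) * b)) := by ring
  obtain ⟨I, hIP, hI, hIZ⟩ := exists_subset_forall_degIn_lt hZP hq
  have hSP : 2 * #S < #P := Nat.lt_of_mul_lt_mul_right (a := α) (by linarith)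
  refine hasBlueCopy_of_separator hk hG hSU Q (fun T hT => (hQ T hT).1) (fun T hT => (hQ T hT).2) hd
    (hP.mono (coe_subset.mpr hIP)) (hIP.trans hPA) (by omega) hZA (fun p hp => (hIZ p hp).le) ?_
  have : M * d * (y + 1) = M * d * y + M * d := by ring
  omega

/-- For every independent set `P ⊆ A` of at least `n / a` vertices, all but `1.01 * n` vertices of
`A` have `n / b` or more neighbours in `P`. -/
def IsExpandingOn (G : SimpleGraph W) (A : Finset W) (n a b : ℕ) : Prop :=
  ∀ P ⊆ A, G.IsIndepSet (P : Set W) → n ≤ #P * a →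
    100 * #A ≤ 100 * #{v ∈ A | n ≤ degIn G P v * b} + 101 * n

universe u v

theorem exists_forall_isExpandingOn (k a : ℕ) (hk : 3 ≤ k) :
    ∃ b E C n₀ : ℕ, 4 ≤ b ∧ 1 ≤ E ∧ ∀ (V : Type u) (W : Type v) [Nonempty W] (H : SimpleGraph V)
      (G : SimpleGraph W) (U : Finset V) (A : Finset W), (cycleGraph k).Free G → n₀ ≤ #U →
      degSum H U * E ≤ 2 * #U * (E + 1) →
      (∀ K ⊆ U, K.Nonempty → IsClosedIn H U K → C ≤ #K) → ¬ HasBlueCopy H G U A →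
      IsExpandingOn G A #U a b := by
  obtain ⟨α, hα⟩ : ∃ α, α = a + 1 := ⟨_, rfl⟩
  set M := 12 * α + 12 * α * (12 * α) * (72 * α)
  have hM : 0 < M * (72 * α) := Nat.mul_pos (by omega) (by omega)
  set b := 1600 * α * (M * (72 * α)) with hb
  have hb4 : 4 ≤ b := by
    have := Nat.mul_pos (show 0 < α by omega) hM
    linarith
  refine ⟨b, 12 * α, 12 * α, 400 * (M * (72 * α) + k * M * M + 1), hb4, by omega,
    fun V W _ H G U A hG hU hD hcl hno P hPA hP hPa => ?_⟩
  obtain ⟨S, hSU, hS, hd, Q, hQ⟩ := exists_separator (by omega) hD hcl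
  by_contra! hlt
  set J := {v ∈ A | #U ≤ degIn G P v * b}
  obtain ⟨Z, hZ, hZcard⟩ : ∃ Z ⊆ A \ J, #Z = #U + #U / 200 := by
    refine exists_subset_card_eq ?_
    have : #(A \ J) + #J = #A := card_sdiff_add_card_eq_card (filter_subset _ _)
    omega
  have hPα : #U < #P * α := by
    have hP0 : 0 < #P := Nat.pos_of_ne_zero fun hP0 => by rw [hP0] at hPa; omega
    rw [hα]
    linarith
  refine hno <| hasBlueCopy_of_forall_degIn_mul_le hk hG hSU Q hQ hd hS hP hPA hPα
    (hZ.trans sdiff_subset) (fun w hw => ?_) (by omega) hb.ge hU hZcard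
  by_contra! hJ
  exact (mem_sdiff.mp (hZ hw)).2 (mem_filter.mpr ⟨(mem_sdiff.mp (hZ hw)).1, hJ.le⟩)

end LargeDegrees

section Linking

variable {W : Type*} {G : SimpleGraph W} {I J J' M M' : Finset W} {s m c : ℕ}

lemma exists_adj_notMem_of_card_lt_degIn {P F : Finset W} {v : W} (h : #F < degIn G P v) :
    ∃ w ∈ P, G.Adj v w ∧ w ∉ F := by
  obtain ⟨w, hw, hwF⟩ := exists_mem_notMem_of_card_lt_card h
  exact ⟨w, (mem_filter.mp hw).1, (mem_filter.mp hw).2, hwF⟩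

lemma le_card_inter_of_card_add_le {S T : Finset W} (hS : S ⊆ M) (hT : T ⊆ M) (hmS : m ≤ #S)
    (hmT : m ≤ #T) (hM : #M + c ≤ 2 * m) : c ≤ #(S ∩ T) := by
  have := card_union_add_card_inter S T
  have := card_le_card (union_subset hS hT)
  omega

/-- `I` and `J` are richly linked in `G`: every vertex of `J` has at least `s` neighbours in `I`,
and for each `P ⊆ I` with at least `s` elements, at least `m` vertices of `M` have `c` or more
neighbours in `P`. As `M` has size at most `2 * m - c`, any two such sets of `m` vertices meet, so
paths of prescribed even length can be built greedily between large subsets of `I`. -/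
structure IsLinked (G : SimpleGraph W) (I J M : Finset W) (s m c : ℕ) : Prop where
  subset : J ⊆ M
  le_degIn : ∀ j ∈ J, s ≤ degIn G I j
  le_card_filter : ∀ P ⊆ I, s ≤ #P → m ≤ #{v ∈ M | c ≤ degIn G P v}
  le_card : m ≤ #J
  card_add_le : #M + c ≤ 2 * m

namespace IsLinked

lemma exists_isPath (h : IsLinked G I J M s m c) (r : ℕ) {F P Q : Finset W}
    (hF : #F + 2 * r + 2 ≤ c) (hP : P ⊆ I) (hsP : s ≤ #P) (hQ : Q ⊆ I) (hsQ : s ≤ #Q) :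
    ∃ u ∈ P, ∃ v ∈ Q, ∃ w : G.Walk u v,
      w.IsPath ∧ w.length = 2 * r + 2 ∧ ∀ x ∈ w.support, x ∉ F := by
  induction r generalizing F P with
  | zero =>
    obtain ⟨j, hj, hjF⟩ := exists_mem_notMem_of_card_lt_card (s := F) <| lt_of_lt_of_le
      (by omega) (le_card_inter_of_card_add_le (filter_subset _ _) (filter_subset _ _)
        (h.le_card_filter P hP hsP) (h.le_card_filter Q hQ hsQ) h.card_add_le)
    simp only [mem_inter, mem_filter] at hj
    obtain ⟨u, hu, hju, huF⟩ :=
      exists_adj_notMem_of_card_lt_degIn (F := F) (lt_of_lt_of_le (by omega) hj.1.2)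
    obtain ⟨v, hv, hjv, hvF⟩ := exists_adj_notMem_of_card_lt_degIn (F := insert u F)
      (lt_of_lt_of_le (by have := card_insert_le u F; omega) hj.2.2)
    refine ⟨u, hu, v, hv, .cons hju.symm (.cons hjv .nil), ?_, rfl, ?_⟩
    · rw [mem_insert, not_or] at hvF
      simp [hju.ne', hjv.ne, Ne.symm hvF.1]
    · rw [mem_insert, not_or] at hvF
      simp [huF, hjF, hvF.2]
  | succ r ih =>
    obtain ⟨j, hj, hjF⟩ := exists_mem_notMem_of_card_lt_card (s := F) <| lt_of_lt_of_le
      (by omega) (le_card_inter_of_card_add_le (filter_subset _ _) h.subset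
        (h.le_card_filter P hP hsP) h.le_card h.card_add_le)
    simp only [mem_inter, mem_filter] at hj
    obtain ⟨u, hu, hju, huF⟩ :=
      exists_adj_notMem_of_card_lt_degIn (F := F) (lt_of_lt_of_le (by omega) hj.1.2)
    obtain ⟨u', hu', v, hv, w, hw, hlen, hwF⟩ := ih (F := insert u (insert j F))
      (by have := card_insert_le j F; have := card_insert_le u (insert j F); omega)
      (filter_subset _ _) (h.le_degIn j hj.2)
    refine ⟨u, hu, v, hv, .cons hju.symm (.cons (mem_filter.mp hu').2 w), ?_, ?_, ?_⟩
    · have hjw : j ∉ w.support := fun hj' => hwF j hj' (by simp)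
      have huw : u ∉ w.support := fun hu' => hwF u hu' (by simp)
      simp [hw, hjw, huw, hju.ne']
    · simp only [Walk.length_cons, hlen]; ring
    · simp only [mem_insert, not_or] at hwF
      simpa [huF, hjF] using fun x hx => (hwF x hx).2.2

variable {t : ℕ}

-- An edge inside `J` closes up a path of length `2t - 2` between two neighbourhoods in `I`.
lemma isIndepSet (h : IsLinked G I J M s m c) (ht : 2 ≤ t)
    (hG : (cycleGraph (2 * t + 1)).Free G) (hc : 2 * t ≤ c) : G.IsIndepSet (J : Set W) := by
  intro y hy z hz _ hyz
  obtain ⟨u, hu, v, hv, w, hw, hlen, hwF⟩ := h.exists_isPath (t - 2) (F := {y, z})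
    (by have := card_le_two (a := y) (b := z); omega) (filter_subset _ _) (h.le_degIn y hy)
    (filter_subset _ _) (h.le_degIn z hz)
  have hyw : y ∉ w.support := fun hx => hwF y hx (by simp)
  have hzw : z ∉ w.support := fun hx => hwF z hx (by simp)
  refine hG (cycleGraph_isContained_of_isPath (q := .cons hyz.symm (.cons (mem_filter.mp hu).2 w))
    ?_ ?_ (by omega) (mem_filter.mp hv).2.symm)
  · simp [hw, hyw, hzw, hyz.ne']
  · simp only [Walk.length_cons, hlen]; omega

-- If `z` is adjacent to both `p` and `p'`, a path `z, p, i, j` with `i ∈ I` and `j ∈ J` is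
-- continued through `J` and `J'` to a neighbour of `p'`; this turns the even paths of `h'` into an
-- odd cycle.
lemma not_adj_of_adj (h : IsLinked G I J M s m c) (h' : IsLinked G J J' M' s m c)
    (hJ : Disjoint J J') (ht : 3 ≤ t) (hG : (cycleGraph (2 * t + 1)).Free G) (hc : 2 * t + 1 ≤ c)
    (hs : #M + s ≤ 2 * m) {z p p' : W} (hp : p ∈ J) (hp' : p' ∈ J') (hzp : G.Adj z p) :
    ¬ G.Adj z p' := by
  intro hzp'
  set P := {w ∈ I | G.Adj p w}
  have hinter := le_card_inter_of_card_add_le (filter_subset _ _) h.subset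
    (h.le_card_filter P (filter_subset _ _) (h.le_degIn p hp)) h.le_card hs
  have hF := card_le_three (a := z) (b := p) (c := p')
  obtain ⟨j, hj, e, he, w, hw, hlen, hwF⟩ := h'.exists_isPath (t - 3) (F := {z, p, p'})
    (by omega) inter_subset_right hinter (filter_subset _ _) (h'.le_degIn p' hp')
  simp only [mem_inter, mem_filter] at hj
  obtain ⟨i, hi, hji, hiF⟩ := exists_adj_notMem_of_card_lt_degIn
    (F := {z, p, p'} ∪ w.support.toFinset) <| lt_of_lt_of_le (by
      have := card_union_le {z, p, p'} w.support.toFinset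
      have := w.support.toFinset_card_le
      rw [Walk.length_support] at this
      omega) hj.1.2
  simp only [mem_union, mem_insert, mem_singleton, List.mem_toFinset, not_or] at hiF
  simp only [mem_insert, mem_singleton, not_or] at hwF
  have hpp' : p' ≠ p := fun heq => disjoint_left.mp hJ hp (heq ▸ hp')
  have hzw : z ∉ w.support := fun hx => (hwF z hx).1 rfl
  have hpw : p ∉ w.support := fun hx => (hwF p hx).2.1 rfl
  have hp'w : p' ∉ w.support := fun hx => (hwF p' hx).2.2 rfl
  refine hG (cycleGraph_isContained_of_isPath (q := .cons hzp'.symm <| .cons hzp <|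
    .cons (mem_filter.mp hi).2 <| .cons hji.symm w) ?_ ?_ (by omega) (mem_filter.mp he).2.symm)
  · have hip := hiF.1
    simp [hw, hzw, hpw, hp'w, hiF.2, hzp.ne, hzp'.ne', hpp', Ne.symm hip.1, Ne.symm hip.2.1,
      Ne.symm hip.2.2]
  · simp only [Walk.length_cons, hlen]; omega

end IsLinked

end Linking

section DisjointIndependentSets

variable {V W : Type*} {H : SimpleGraph V} {G : SimpleGraph W} {U K S : Finset V}
  {A A₁ A₂ X J J' : Finset W}

lemma IsClosedIn.biUnion {Q : Finset (Finset V)} (h : ∀ T ∈ Q, IsClosedIn H U T) :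
    IsClosedIn H U (Q.biUnion id) := by
  intro u hu v hv huv
  obtain ⟨T, hT, huT⟩ := mem_biUnion.mp hu
  exact mem_biUnion.mpr ⟨T, hT, h T hT u huT v hv huv⟩

lemma HasBlueCopy.of_isClosedIn (hS : S ⊆ U) (hcl : IsClosedIn H U S)
    (h₁ : HasBlueCopy H G S A₁) (h₂ : HasBlueCopy H G (U \ S) A₂) (hA₁ : A₁ ⊆ A) (hA₂ : A₂ ⊆ A)
    (hA : Disjoint A₁ A₂) : HasBlueCopy H G U A := by
  obtain ⟨f, hf⟩ := h₂
  refine (hf.mono subset_rfl hA₂).hasBlueCopy_of_isClosedIn hS hcl (h₁.mono subset_rfl ?_)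
  exact fun a ha => mem_sdiff.mpr ⟨hA₁ ha, fun ha' => disjoint_left.mp hA ha (hf.image_subset ha')⟩

lemma exists_subset_card_biUnion_le {𝒯 : Finset (Finset V)} {s N : ℕ} (hs : ∀ T ∈ 𝒯, #T ≤ s)
    (hN : N ≤ #(𝒯.biUnion id)) :
    ∃ Q ⊆ 𝒯, #(Q.biUnion id) ≤ N ∧ N ≤ #(Q.biUnion id) + s := by
  induction 𝒯 using Finset.induction_on with
  | empty => exact ⟨∅, subset_rfl, by simp, by simpa using hN.trans (Nat.zero_le s)⟩
  | insert T 𝒯 _ ih =>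
    rcases le_total N #(𝒯.biUnion id) with h | h
    · obtain ⟨Q, hQ, hQN⟩ := ih (fun T hT => hs T (mem_insert_of_mem hT)) h
      exact ⟨Q, hQ.trans (subset_insert _ _), hQN⟩
    · refine ⟨𝒯, subset_insert _ _, h, ?_⟩
      have hunion := card_union_le T (𝒯.biUnion id)
      have hT := hs T (mem_insert_self _ _)
      rw [biUnion_insert, id] at hN
      omega

variable [Nonempty W]

lemma hasBlueCopy_of_isIndepSet_of_isIndepSet {P : Finpartition U} {s : ℕ}
    (hP : ∀ T ∈ P.parts, IsClosedIn H U T ∧ #T ≤ s) (hJA : J ⊆ A)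
    (hJ : G.IsIndepSet (J : Set W)) (hJ'A : J' ⊆ A) (hJ' : G.IsIndepSet (J' : Set W))
    (hd : Disjoint J J') (hcard : #U + s ≤ #J + #J') : HasBlueCopy H G U A := by
  rcases le_total #U #J with hUJ | hJU
  · exact (hasBlueCopy_of_isIndepSet hJ hUJ).mono subset_rfl hJA
  obtain ⟨Q, hQ, hQJ, hJQ⟩ := exists_subset_card_biUnion_le (fun T hT => (hP T hT).2)
    (P.biUnion_parts.symm ▸ hJU)
  have hQU : Q.biUnion id ⊆ U := biUnion_subset.mpr fun T hT => P.le (hQ hT)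
  have hsdiff := card_sdiff_add_card_eq_card hQU
  exact .of_isClosedIn hQU (.biUnion fun T hT => (hP T (hQ hT)).1)
    (hasBlueCopy_of_isIndepSet hJ hQJ) (hasBlueCopy_of_isIndepSet hJ' (by omega)) hJA hJ'A hd

-- `X \ J` only needs to receive an independent set of vertices of degree less than `8`.
lemma hasBlueCopy_of_isIndepSet_of_not_adj (hJX : J ⊆ X) (hJ : G.IsIndepSet (J : Set W))
    (hXJ : ∀ x ∈ X, ∀ j ∈ J, ¬ G.Adj x j) (hKX : #K ≤ #X) (hK : 97 * #K ≤ 100 * #J)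
    (hD : degSum H K ≤ 5 * #K) : HasBlueCopy H G K X := by
  rcases le_total #K #J with hKJ | hJK
  · exact (hasBlueCopy_of_isIndepSet hJ hKJ).mono subset_rfl hJX
  have hhigh := card_filter_le_degIn_mul_le_degSum H K 8
  have hlow := card_filter_add_card_filter_not (s := K) fun v => 8 ≤ degIn H K v
  have hlowK : {v ∈ K | ¬ 8 ≤ degIn H K v} ⊆ K := filter_subset _ _
  obtain ⟨I, hI, hIind, hIcard⟩ := (isDegenerateOn_of_degIn_lt fun v hv =>
    (degIn_mono H hlowK v).trans_lt (not_le.mp (mem_filter.mp hv).2)).exists_isIndepSet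
  obtain ⟨Q, hQ, hQcard⟩ := exists_subset_card_eq (s := I) (n := #K - #J) (by omega)
  have hQK : Q ⊆ K := (hQ.trans hI).trans hlowK
  have hX := card_sdiff_add_card_eq_card hJX
  have hKQ := card_sdiff_add_card_eq_card hQK
  obtain ⟨f, hf, hfX⟩ := exists_injOn_forall_mem (U := Q) (A := X \ J) (by omega)
  have hcopy : HasBlueCopy H G Q (X \ J) := ⟨f, hf, hfX, fun u hu v hv huv =>
    absurd huv (not_adj_of_isIndepSet (hIind.mono (coe_subset.mpr hQ)) hu hv)⟩
  exact .of_sdiff_of_not_adj hQK (hasBlueCopy_of_isIndepSet hJ (by omega)) hcopy hJX sdiff_subset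
    disjoint_sdiff fun j hj x hx hadj => hXJ x (sdiff_subset hx) j hj hadj.symm

-- Split off the largest component of `H` if it is almost all of `H`; otherwise fill `J` and `J'`
-- with components.
lemma hasBlueCopy_of_isIndepSet_of_degSum_add_two_le (hJX : J ⊆ X) (hXA : X ⊆ A)
    (hJ : G.IsIndepSet (J : Set W)) (hXJ : ∀ x ∈ X, ∀ j ∈ J, ¬ G.Adj x j) (hJ'A : J' ⊆ A)
    (hJ' : G.IsIndepSet (J' : Set W)) (hd : Disjoint X J') (hJU : 97 * #U ≤ 100 * #J)
    (hJ'U : 97 * #U ≤ 100 * #J') (hX : degSum H U + 2 ≤ 2 * #X) (hD : degSum H U ≤ 4 * #U)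
    (hU : U.Nonempty) : HasBlueCopy H G U A := by
  obtain ⟨P, hP⟩ := exists_finpartition_hasTreeSize (H := H) (X := U) (C := #U + 1) (d := #U)
    (by omega) fun v _ => degIn_le_card H U v
  have hcl : ∀ T ∈ P.parts, IsClosedIn H U T := fun T hT => (hP T hT).2.2.resolve_left fun h => by
    have := card_le_card (P.le hT)
    omega
  obtain ⟨v, hv⟩ := hU
  obtain ⟨T, hT, -⟩ := P.exists_mem hv
  obtain ⟨K, hK, hmax⟩ := exists_max_image P.parts card ⟨T, hT⟩
  have hKU := P.le hK
  rcases le_or_gt (#U + #K) (#J + #J') with hsmall | hlarge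
  · exact hasBlueCopy_of_isIndepSet_of_isIndepSet (fun T hT => ⟨hcl T hT, hmax T hT⟩)
      (hJX.trans hXA) hJ hJ'A hJ' (hd.mono_left hJX) hsmall
  · have hKsize := (hP K hK).1
    have hDK : degSum H K ≤ degSum H U := degSum_mono H hKU
    have hsdiff := card_sdiff_add_card_eq_card hKU
    exact .of_isClosedIn hKU (hcl K hK)
      (hasBlueCopy_of_isIndepSet_of_not_adj hJX hJ hXJ (by unfold HasTreeSize at hKsize; omega)
        (by omega) (by omega))
      (hasBlueCopy_of_isIndepSet hJ' (by omega)) hXA hJ'A hd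

end DisjointIndependentSets

section SparseCase

variable {V W : Type*} {H : SimpleGraph V} {G : SimpleGraph W} {U : Finset V} {A I : Finset W}
  {n a b₀ b₁ c t : ℕ}

lemma mul_le_two_mul_mul_add_one_of_le {D E E' : ℕ} (hE : E' ≤ E)
    (h : D * E ≤ 2 * n * (E + 1)) : D * E' ≤ 2 * n * (E' + 1) := by
  rcases Nat.le_total D (2 * n) with hD | hD
  · exact (Nat.mul_le_mul_right _ hD).trans (Nat.mul_le_mul_left _ (Nat.le_succ _))
  · obtain ⟨x, rfl⟩ := Nat.exists_eq_add_of_le hD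
    have : x * E ≤ 2 * n := by nlinarith
    have : x * E' ≤ x * E := Nat.mul_le_mul_left x hE
    nlinarith

namespace IsExpandingOn

lemma isLinked (h₁ : IsExpandingOn G A n a b₁) (h₀ : IsExpandingOn G A n b₁ b₀) (hIA : I ⊆ A)
    (hI : G.IsIndepSet (I : Set W)) (hIn : n ≤ #I * a) (hA : 198 * n ≤ 100 * #A)
    (hM : 100 * #{v ∈ A | 1 ≤ degIn G I v} ≤ 101 * n + 100) (hn : 1000 ≤ n) (hb₁ : 0 < b₁)
    (hcn : 2 * c ≤ n) (hc : c * b₀ < n) :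
    IsLinked G I {v ∈ A | n ≤ degIn G I v * b₁} {v ∈ A | 1 ≤ degIn G I v} (n ⌈/⌉ b₁)
      (97 * n / 100) c where
  subset := monotone_filter_right A fun v _ hv => Nat.pos_of_ne_zero fun h0 => by
    rw [h0] at hv
    omega
  le_degIn v hv := by
    rw [ceilDiv_le_iff_le_mul hb₁, mul_comm]
    exact (mem_filter.mp hv).2
  le_card_filter P hP hPn := by
    rw [ceilDiv_le_iff_le_mul hb₁, mul_comm] at hPn
    have hcard := h₀ P (hP.trans hIA) (hI.mono (coe_subset.mpr hP)) hPn
    have hsub : {v ∈ A | n ≤ degIn G P v * b₀} ⊆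
        {v ∈ ({v ∈ A | 1 ≤ degIn G I v} : Finset W) | c ≤ degIn G P v} := by
      intro v hv
      obtain ⟨hvA, hvn⟩ := mem_filter.mp hv
      refine mem_filter.mpr ⟨mem_filter.mpr ⟨hvA, ?_⟩, ?_⟩
      · refine (Nat.pos_of_ne_zero fun h0 => ?_).trans_le (degIn_mono G hP v)
        rw [h0] at hvn
        omega
      · exact (Nat.lt_of_mul_lt_mul_right (hc.trans_le hvn)).le
    have := card_le_card hsub
    omega
  le_card := by
    have := h₁ I hIA hI hIn
    omega
  card_add_le := by omega

variable [Nonempty W]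

-- `J`, respectively `J'`, consists of the vertices with many neighbours in `I`, respectively `J`,
-- and `Y` of those with at least one neighbour in `J`. There are no edges between `J` and `A \ Y`,
-- nor between `J'` and `Y`, and one of `A \ Y` and `Y` has room for the largest component of `H`.
lemma hasBlueCopy (h₁ : IsExpandingOn G A #U a b₁) (h₀ : IsExpandingOn G A #U b₁ b₀)
    (ht : 3 ≤ t) (hG : (cycleGraph (2 * t + 1)).Free G) (ha : 2 ≤ a) (hb₁ : 4 ≤ b₁) (hIA : I ⊆ A)
    (hI : G.IsIndepSet (I : Set W)) (hIU : #U ≤ #I * a)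
    (hM : 100 * #{v ∈ A | 1 ≤ degIn G I v} ≤ 101 * #U + 100) (hU : 1000 + 2 * (2 * t + 1) ≤ #U)
    (hb₀ : (2 * t + 1) * b₀ < #U) (hD : 198 * #U ≤ 100 * degSum H U)
    (hD4 : degSum H U ≤ 4 * #U) (hA : degSum H U + t ≤ #A) : HasBlueCopy H G U A := by
  have hlink := h₁.isLinked h₀ hIA hI hIU (by omega) hM (by omega) (by omega) (by omega) hb₀
  have hJcard := h₁ I hIA hI hIU
  have hJ := hlink.isIndepSet (by omega) hG (by omega)
  set J := {v ∈ A | #U ≤ degIn G I v * b₁}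
  have hJA : J ⊆ A := filter_subset _ _
  have hJY : Disjoint J {v ∈ A | 1 ≤ degIn G J v} := disjoint_filter_one_le_degIn hJ
  have hYcard : 100 * #{v ∈ A | 1 ≤ degIn G J v} ≤ 101 * #U + 100 := by
    have := card_union_of_disjoint hJY
    have := card_le_card (union_subset hJA (filter_subset (fun v => 1 ≤ degIn G J v) A))
    omega
  have hJU : #U ≤ #J * a := le_trans (by omega) (Nat.mul_le_mul_left #J ha)
  have hlink' := h₁.isLinked h₀ hJA hJ hJU (by omega) hYcard (by omega) (by omega) (by omega) hb₀
  have hJ'card := h₁ J hJA hJ hJU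
  have hJ' := hlink'.isIndepSet (by omega) hG (by omega)
  have hJ'Y := hlink'.subset
  set J' := {v ∈ A | #U ≤ degIn G J v * b₁}
  set Y := {v ∈ A | 1 ≤ degIn G J v}
  have hYA : Y ⊆ A := filter_subset _ _
  have hceil : #U ⌈/⌉ b₁ ≤ #U / 2 := by
    rw [ceilDiv_le_iff_le_mul (by omega)]
    calc #U ≤ 4 * (#U / 2) := by omega
      _ ≤ b₁ * (#U / 2) := Nat.mul_le_mul_right _ hb₁
  have hYJ' : ∀ y ∈ Y, ∀ j ∈ J', ¬ G.Adj y j := fun y hy j hj => by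
    obtain ⟨p, hp, hyp⟩ := exists_adj_of_one_le_degIn (mem_filter.mp hy).2
    exact hlink.not_adj_of_adj hlink' (hJY.mono_right hJ'Y) ht hG (by omega) (by omega) hp hj hyp
  have hAYJ : ∀ x ∈ A \ Y, ∀ j ∈ J, ¬ G.Adj x j := fun x hx j hj hxj =>
    (mem_sdiff.mp hx).2 (mem_filter.mpr ⟨(mem_sdiff.mp hx).1, one_le_degIn hj hxj⟩)
  have hUne : U.Nonempty := card_pos.mp (by omega)
  have hAY := card_sdiff_add_card_eq_card hYA
  rcases le_or_gt (degSum H U + 2) (2 * #(A \ Y)) with hroom | hroom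
  · exact hasBlueCopy_of_isIndepSet_of_degSum_add_two_le (subset_sdiff.mpr ⟨hJA, hJY⟩) sdiff_subset
      hJ hAYJ (hJ'Y.trans hYA) hJ' (sdiff_disjoint.mono_right hJ'Y) (by omega) (by omega) hroom hD4
      hUne
  · exact hasBlueCopy_of_isIndepSet_of_degSum_add_two_le hJ'Y hYA hJ' hYJ' hJA hJ hJY.symm
      (by omega) (by omega) (by omega) hD4 hUne

end IsExpandingOn

universe u v

lemma exists_forall_card_filter_one_le_degIn_le (k : ℕ) (hk : 7 ≤ k) (hodd : Odd k) :
    ∃ n₀ : ℕ, ∀ (V : Type u) (W : Type v) [Nonempty W] (H : SimpleGraph V) (G : SimpleGraph W)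
      (U : Finset V) (A : Finset W), (cycleGraph k).Free G → n₀ ≤ #U → degSum H U ≤ 4 * #U →
      ¬ HasBlueCopy H G U A → ∀ (x : W) (I : Finset W), (∀ a ∈ I, G.Adj x a) →
      G.IsIndepSet (I : Set W) → 100 * #{v ∈ A | 1 ≤ degIn G I v} ≤ 101 * #U + 100 := by
  obtain ⟨n₀, hn₀⟩ := IsDegenerateOn.exists_forall_hasBlueCopy.{u, v} (k := k) (C := 4) (e := 100)
    (by omega) (by omega) (by omega)
  refine ⟨n₀, fun V W _ H G U A hG hU hD hno x I hIx hI => ?_⟩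
  set N := {v ∈ A | 1 ≤ degIn G I v}
  have hadj : ∀ v ∈ N, ∃ i ∈ I, G.Adj v i := fun v hv =>
    exists_adj_of_one_le_degIn (mem_filter.mp hv).2
  have hdisj : Disjoint I (N.erase x) :=
    (disjoint_filter_one_le_degIn hI).mono_right (erase_subset _ _)
  have hdeg : IsDegenerateOn G k (N.erase x) :=
    isDegenerateOn_secondNeighbors_of_free hk hodd hG hIx hdisj (notMem_erase x N) fun v hv =>
      (hadj v (mem_of_mem_erase hv)).imp fun i hi => ⟨hi.1, hi.2.symm⟩
  have hcard : #(N.erase x) * 100 < #U * 100 + #U := by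
    by_contra! hle
    exact hno ((hn₀ V W H G U _ #U hU hdeg le_rfl hD hle).mono subset_rfl
      ((erase_subset _ _).trans (filter_subset _ _)))
  have := pred_card_le_card_erase (s := N) (a := x)
  omega

namespace IsMinimalCounterexample

lemma card_le_five_mul_degIn {B : ℕ} (h : IsMinimalCounterexample t B H G U A)
    (hU : U.Nonempty) (hD : 198 * #U ≤ 100 * degSum H U) (hD4 : degSum H U ≤ 4 * #U) :
    ∃ x, #U ≤ 5 * degIn G A x := by
  have hUpos := card_pos.mpr hU
  obtain ⟨x, hx⟩ := h.exists_mul_card_le_degIn_mul (by omega)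
  refine ⟨x, ?_⟩
  have hA := h.degSum_add_le
  have hdeg : 98 * #U ≤ 400 * degIn G A x := by
    refine Nat.le_of_mul_le_mul_right ?_ hUpos
    calc 98 * #U * #U ≤ 100 * (#A - #U) * #U := Nat.mul_le_mul_right _ (by omega)
      _ = 100 * ((#A - #U) * #U) := mul_assoc _ _ _
      _ ≤ 100 * (degIn G A x * degSum H U) := Nat.mul_le_mul_left _ hx
      _ ≤ 100 * (degIn G A x * (4 * #U)) := by gcongr
      _ = 400 * degIn G A x * #U := by ring
  omega

end IsMinimalCounterexample

lemma exists_forall_two_mul_mul_lt_degSum_mul (t : ℕ) (ht : 3 ≤ t) :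
    ∃ E D₀ : ℕ, 1 ≤ E ∧ ∀ (V : Type u) (W : Type v) [Nonempty W] (B : ℕ) (H : SimpleGraph V)
      (G : SimpleGraph W) (U : Finset V) (A : Finset W), IsMinimalCounterexample t B H G U A →
      D₀ ≤ degSum H U → 2 * #U * (E + 1) < degSum H U * E := by
  obtain ⟨b₁, E₁, C₁, n₁, hb₁, hE₁, h₁⟩ :=
    exists_forall_isExpandingOn.{u, v} (2 * t + 1) (5 * (2 * t + 1)) (by omega)
  obtain ⟨b₀, E₀, C₀, n₀, -, -, h₀⟩ := exists_forall_isExpandingOn.{u, v} (2 * t + 1) b₁ (by omega)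
  obtain ⟨n₂, h₂⟩ := exists_forall_card_filter_one_le_degIn_le.{u, v} (2 * t + 1) (by omega)
    ⟨t, rfl⟩
  set C := C₀ + C₁ + 100
  refine ⟨E₀ + E₁, 4 * (n₀ + n₁ + n₂ + 1002 + 4 * t + (2 * t + 1) * b₀) +
    (4 * ((2 * t + 1) * C * C) + 20 * t * t + 20), by omega, fun V W _ B H G U A h hD => ?_⟩
  by_contra! hDE
  have hno := h.not_hasBlueCopy
  have hE := fun E' (hE' : E' ≤ E₀ + E₁) => mul_le_two_mul_mul_add_one_of_le hE' hDE
  have hD4 : degSum H U ≤ 4 * #U := by have := hE 1 (by omega); omega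
  have hC := h.le_card_sub_card (R := (2 * t + 1) * C * C) (by omega)
  have hcl : ∀ K ⊆ U, K.Nonempty → IsClosedIn H U K → C ≤ #K := fun K hK hne hKcl =>
    h.le_card_of_isClosedIn hC hK hne hKcl
  have htree := h.two_mul_card_mul_le (C := 100) (by omega) <| le_trans (by gcongr <;> omega) hC
  have hD2 : 198 * #U ≤ 100 * degSum H U := by omega
  obtain ⟨x, hx⟩ := h.card_le_five_mul_degIn (card_pos.mp (by omega)) hD2 hD4
  obtain ⟨I, hIx, hI, hIcard⟩ := (isDegenerateOn_neighbors_of_free (by omega) h.free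
    (A := {w ∈ A | G.Adj x w}) fun a ha => (mem_filter.mp ha).2).exists_isIndepSet
  have hIU : #U ≤ #I * (5 * (2 * t + 1)) := by
    rw [← degIn] at hIcard
    linarith
  have hM := h₂ V W H G U A h.free (by omega) hD4 hno x I
    (fun a ha => (mem_filter.mp (hIx ha)).2) hI
  exact hno <| IsExpandingOn.hasBlueCopy
    (h₁ V W H G U A h.free (by omega) (hE E₁ (by omega))
      (fun K hK hne hKcl => le_trans (by omega) (hcl K hK hne hKcl)) hno)
    (h₀ V W H G U A h.free (by omega) (hE E₀ (by omega))
      (fun K hK hne hKcl => le_trans (by omega) (hcl K hK hne hKcl)) hno)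
    ht h.free (by omega) hb₁ (hIx.trans (filter_subset _ _)) hI hIU hM (by omega) (by omega) hD2
    hD4 h.degSum_add_le

end SparseCase

section Induction

lemma exists_subset_one_le_degIn {V : Type*} (H : SimpleGraph V) (U : Finset V) :
    ∃ U' ⊆ U, (∀ v ∈ U', 1 ≤ degIn H U' v) ∧ degSum H U' = degSum H U ∧
      ∀ u ∈ U \ U', ∀ v ∈ U, ¬ H.Adj u v := by
  set U' := {v ∈ U | 1 ≤ degIn H U v}
  have hsub : U' ⊆ U := filter_subset _ _
  have hadj : ∀ u ∈ U, ∀ v ∈ U, H.Adj u v → u ∈ U' := fun u hu v hv huv =>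
    mem_filter.mpr ⟨hu, one_le_degIn hv huv⟩
  have hcl : IsClosedIn H U U' := fun u hu v hv huv => hadj v hv u (hsub hu) huv.symm
  have hiso : ∀ u ∈ U \ U', ∀ v ∈ U, ¬ H.Adj u v := fun u hu v hv huv =>
    (mem_sdiff.mp hu).2 (hadj u (mem_sdiff.mp hu).1 v hv huv)
  have hrest : degSum H (U \ U') = 0 := sum_eq_zero fun u hu => card_eq_zero.mpr <|
    filter_eq_empty_iff.mpr fun v hv => hiso u hu v (sdiff_subset hv)
  refine ⟨U', hsub, fun v hv => ?_, ?_, hiso⟩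
  · rw [hcl.degIn_eq hsub hv]
    exact (mem_filter.mp hv).2
  · rw [degSum_sdiff_of_isClosedIn hsub hcl, hrest, add_zero]

universe u v

theorem exists_forall_hasBlueCopy_of_degSum_add_slack_le (t : ℕ) (ht : 3 ≤ t) :
    ∃ B : ℕ, ∀ (V : Type u) (W : Type v) [Nonempty W] (H : SimpleGraph V) (G : SimpleGraph W),
      (cycleGraph (2 * t + 1)).Free G → ∀ (U : Finset V) (A : Finset W),
      degSum H U + slack B t (degSum H U) ≤ #A → #U ≤ #A → HasBlueCopy H G U A := by
  obtain ⟨E, D₁, hE, h₁⟩ := exists_forall_two_mul_mul_lt_degSum_mul.{u, v} t ht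
  obtain ⟨D₂, h₂⟩ := exists_forall_degSum_mul_lt.{u, v} t E hE
  set D₀ := D₁ + D₂
  refine ⟨Nat.sqrt D₀ + (2 * t + 1) * D₀ * D₀, fun V W _ H G hG U => ?_⟩
  induction hD : degSum H U using Nat.strong_induction_on generalizing U with
  | _ D ih =>
  intro A hA hUA
  obtain ⟨U', hU', hdeg, hdegSum, hiso⟩ := exists_subset_one_le_degIn H U
  rw [hD] at hdegSum
  refine .of_isolated ?_ hU' hiso hUA
  have hU'D : #U' ≤ D := by
    rw [← hdegSum]
    simpa [degSum] using sum_le_sum hdeg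
  by_contra hno
  have hmin : IsMinimalCounterexample t (Nat.sqrt D₀ + (2 * t + 1) * D₀ * D₀) H G U' A :=
    { three_le := ht
      free := hG
      card_le := hdegSum.symm ▸ hA
      one_le_degIn := hdeg
      hasBlueCopy_of_lt := fun K A' hlt => ih _ (hdegSum ▸ hlt) K rfl A'
      not_hasBlueCopy := hno }
  rcases Nat.lt_or_ge D D₀ with hlt | hle
  · have hsmall : (2 * t + 1) * #U' * #U' ≤ (2 * t + 1) * D₀ * D₀ := by gcongr <;> omega
    have hsqrt := Nat.sqrt_le_sqrt hlt.le
    unfold slack at hA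
    obtain ⟨I, hIA, hI, hIcard⟩ := exists_isIndepSet_card_eq_of_free (A := A) (by omega) hG #U'
      (by omega)
    exact hno ((hasBlueCopy_of_isIndepSet hI hIcard.ge).mono subset_rfl hIA)
  · exact lt_asymm (h₁ V W _ H G U' A hmin (by omega)) (h₂ V W _ H G U' A hmin (by omega))

end Induction

section RamseyNumbers

lemma degSum_univ {V : Type*} [Fintype V] (H : SimpleGraph V) [Fintype H.edgeSet] :
    degSum H univ = 2 * #H.edgeFinset := by
  have hdeg : degSum H univ = ∑ v, H.degree v := sum_congr rfl fun v _ => by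
    rw [degIn, ← card_neighborFinset_eq_degree, neighborFinset_eq_filter]
  rw [hdeg]
  convert H.sum_degrees_eq_twice_card_edges

lemma HasBlueCopy.hasCopy_compl {V W : Type*} [Fintype V] {H : SimpleGraph V} {G : SimpleGraph W}
    {A : Finset W} (h : HasBlueCopy H G univ A) : HasCopy H Gᶜ := by
  obtain ⟨f, hf⟩ := h
  have hinj : Function.Injective f := Set.injOn_univ.mp (coe_univ (α := V) ▸ hf.injOn)
  exact ⟨⟨f, fun {a b} hab => (compl_adj G _ _).mpr
    ⟨hinj.ne hab.ne, hf.not_adj a (mem_univ a) b (mem_univ b) hab⟩⟩, hinj⟩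

lemma exists_forall_ramseyNumber_cycleGraph_le (t : ℕ) (ht : 3 ≤ t) :
    ∃ B : ℕ, ∀ (V : Type*) [Fintype V] (H : SimpleGraph V) [Fintype H.edgeSet],
      ramseyNumber (cycleGraph (2 * t + 1)) H ≤
        max (Fintype.card V) (2 * #H.edgeFinset + slack B t (2 * #H.edgeFinset)) := by
  obtain ⟨B, hB⟩ := exists_forall_hasBlueCopy_of_degSum_add_slack_le t ht
  refine ⟨B, fun V _ H _ => ?_⟩
  rw [← degSum_univ H]
  obtain ⟨N, hN⟩ : ∃ N, N = max (Fintype.card V) (degSum H univ + slack B t (degSum H univ)) :=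
    ⟨_, rfl⟩
  have : NeZero N := ⟨by have := le_slack B t (degSum H univ); omega⟩
  rw [← hN]
  refine Nat.sInf_le fun G => or_iff_not_imp_left.mpr fun hG =>
    HasBlueCopy.hasCopy_compl (A := univ) ?_
  refine hB V (Fin N) H G (fun ⟨f⟩ => hG ⟨f.toHom, f.injective⟩) univ univ ?_ ?_
  · exact (card_fin N).symm ▸ hN ▸ le_max_right _ _
  · exact (card_fin N).symm ▸ hN ▸ le_max_left _ _

lemma slack_le_max_floor (B t m : ℕ) :
    (slack B t (2 * m) : ℤ) ≤ max ⌊((B + 1 : ℕ) : ℝ) - √m⌋ t := by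
  have hsqrt : √(m : ℝ) ≤ Nat.sqrt (2 * m) + 1 := Real.real_sqrt_le_nat_sqrt_succ.trans <| by
    gcongr
    omega
  rw [slack, Nat.cast_max]
  rcases le_total B (Nat.sqrt (2 * m)) with h | h
  · exact max_le (le_max_of_le_right (by omega)) (le_max_right _ _)
  · refine max_le_max_right _ (Int.le_floor.mpr ?_)
    push_cast [h]
    linarith

lemma floor_two_mul_add_one_div_two (t : ℕ) : ⌊((2 * t + 1 : ℕ) : ℝ) / 2⌋ = (t : ℤ) := by
  rw [Int.floor_eq_iff]
  push_cast
  constructor <;> linarith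

lemma card_le_two_mul_card_edgeFinset {V : Type*} [Fintype V] (H : SimpleGraph V)
    [DecidableRel H.Adj] (hdeg : ∀ v, 0 < H.degree v) :
    Fintype.card V ≤ 2 * #H.edgeFinset := by
  rw [← H.sum_degrees_eq_twice_card_edges, ← card_univ, card_eq_sum_ones]
  exact sum_le_sum fun v _ => hdeg v

end RamseyNumbers

end CycleRamsey

theorem stmt_1_general (k : ℕ) (hk : 7 ≤ k) (hodd : Odd k) :
    ∃ B : ℝ, ∀ (V : Type*) [Fintype V] (H : SimpleGraph V) [Fintype H.edgeSet],
      (ramseyNumber (SimpleGraph.cycleGraph k) H : ℝ) ≤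
        max (Fintype.card V : ℝ) (2 * H.edgeFinset.card +
          max (⌊B - Real.sqrt (H.edgeFinset.card)⌋ : ℤ) ⌊(k : ℝ) / 2⌋) := by
  obtain ⟨t, rfl⟩ := hodd
  obtain ⟨B, hB⟩ := CycleRamsey.exists_forall_ramseyNumber_cycleGraph_le t (by omega)
  refine ⟨(B + 1 : ℕ), fun V _ H _ => ?_⟩
  rw [CycleRamsey.floor_two_mul_add_one_div_two]
  have hslack := CycleRamsey.slack_le_max_floor B t H.edgeFinset.card
  refine (Nat.cast_le.mpr (hB V H)).trans ?_
  push_cast at hslack ⊢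
  gcongr
  exact_mod_cast hslack

theorem stmt_1 (k : ℕ) (hk : 7 ≤ k) (hodd : Odd k) :
    ∃ B : ℝ, ∀ (V : Type) [Fintype V] [DecidableEq V] (H : SimpleGraph V)
      [DecidableRel H.Adj], (∀ v : V, 0 < H.degree v) →
      (ramseyNumber (SimpleGraph.cycleGraph k) H : ℝ) ≤
        2 * H.edgeFinset.card +
          max (⌊B - Real.sqrt (H.edgeFinset.card)⌋ : ℤ) ⌊(k : ℝ) / 2⌋ := by
  obtain ⟨B, hB⟩ := stmt_1_general k hk hodd
  refine ⟨B, fun V _ _ H _ hdeg => (hB V H).trans (max_le ?_ le_rfl)⟩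
  have hcard : (Fintype.card V : ℝ) ≤ 2 * H.edgeFinset.card := by
    exact_mod_cast CycleRamsey.card_le_two_mul_card_edgeFinset H hdeg
  have hfloor : (0 : ℤ) ≤ max ⌊B - Real.sqrt (H.edgeFinset.card)⌋ ⌊(k : ℝ) / 2⌋ :=
    le_max_of_le_right (Int.floor_nonneg.mpr (by positivity))
  exact hcard.trans (le_add_of_nonneg_right (by exact_mod_cast hfloor))
end

section
/- For every integer k ≥ 1 and every finite graph H, R(P_k, H) ≤ |H| + k·(χ(H) − 1), where |H| is the number of vertices of H and χ(H) is its chromatic number. -/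
/-!
Run a depth-first search on the red graph. The current stack is always a red path, so if there is
no red `P_k` it has fewer than `k` vertices, and no red edge joins a finished vertex to an
undiscovered one. Vertices are finished one at a time; stopping when exactly `a` are finished
yields, among `a + b + (k - 1)` vertices, sets `A` and `B` of sizes `a` and at least `b` with all
edges between them blue. Taking `a` to be the size of one colour class of `H`, embed that class
into `A` and, by induction on the number of colours, the rest of `H` into `B`.
-/

open SimpleGraph

variable {α V W : Type*}

theorem hasCopy_iff_isContained {G : SimpleGraph V} {K : SimpleGraph W} :
    HasCopy G K ↔ G ⊑ K :=
  ⟨fun ⟨f, hf⟩ ↦ ⟨f, hf⟩, fun ⟨f⟩ ↦ ⟨f.toHom, f.injective⟩⟩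

theorem ramseyNumber_le_of_forall {G : SimpleGraph V} {H : SimpleGraph W} {N : ℕ}
    (h : ∀ C : SimpleGraph (Fin N), G ⊑ C ∨ H ⊑ Cᶜ) : ramseyNumber G H ≤ N :=
  Nat.sInf_le fun C ↦ (h C).imp hasCopy_iff_isContained.2 hasCopy_iff_isContained.2

theorem compl_induce (G : SimpleGraph W) (s : Set W) : (G.induce s)ᶜ = Gᶜ.induce s := by
  ext u v
  simp [Subtype.ext_iff]

theorem pathGraph_isContained_of_isChain {G : SimpleGraph W} {p : List W} {k : ℕ}
    (hnodup : p.Nodup) (hchain : p.IsChain G.Adj) (hk : k ≤ p.length) : pathGraph k ⊑ G := by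
  have hstep := List.isChain_iff_getElem.1 hchain
  refine ⟨⟨fun i ↦ p[i.1], ?_⟩, fun i j hij ↦ Fin.ext (hnodup.getElem_inj_iff.1 hij)⟩
  rintro ⟨i, hi⟩ ⟨j, hj⟩ hij
  obtain rfl | rfl : i + 1 = j ∨ j + 1 = i := pathGraph_adj.1 hij
  · exact hstep i (by lia)
  · exact (hstep j (by lia)).symm

/-- A state of a depth-first search on `G`: the vertices in `D` are finished, `p` is the stack
with its top at the head, and all other vertices are undiscovered. -/
structure IsDFSState (G : SimpleGraph W) (D : Finset W) (p : List W) : Prop where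
  nodup : p.Nodup
  isChain : p.IsChain G.Adj
  notMem_of_mem : ∀ x ∈ p, x ∉ D
  mem_or_mem_of_adj : ∀ x ∈ D, ∀ y, G.Adj x y → y ∈ D ∨ y ∈ p

namespace IsDFSState

variable {G : SimpleGraph W} {D : Finset W} {p : List W}

theorem empty (G : SimpleGraph W) : IsDFSState G ∅ [] where
  nodup := List.nodup_nil
  isChain := List.isChain_nil
  notMem_of_mem := by simp
  mem_or_mem_of_adj := by simp

theorem push (h : IsDFSState G D p) {u : W} (huD : u ∉ D) (hup : u ∉ p)
    (hchain : (u :: p).IsChain G.Adj) : IsDFSState G D (u :: p) where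
  nodup := h.nodup.cons hup
  isChain := hchain
  notMem_of_mem := List.forall_mem_cons.2 ⟨huD, h.notMem_of_mem⟩
  mem_or_mem_of_adj x hx y hxy :=
    (h.mem_or_mem_of_adj x hx y hxy).imp_right (List.mem_cons_of_mem u)

theorem pop [DecidableEq W] {v : W} (h : IsDFSState G D (v :: p))
    (hv : ∀ y, G.Adj v y → y ∈ D ∨ y ∈ p) : IsDFSState G (insert v D) p where
  nodup := h.nodup.of_cons
  isChain := h.isChain.tail
  notMem_of_mem x hx := by
    have hxv : x ≠ v := fun e ↦ (List.nodup_cons.1 h.nodup).1 (e ▸ hx)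
    simpa [hxv] using h.notMem_of_mem x (List.mem_cons_of_mem v hx)
  mem_or_mem_of_adj x hx y hxy := by
    obtain rfl | hx := Finset.mem_insert.1 hx
    · exact (hv y hxy).imp_left Finset.mem_insert_of_mem
    · have := h.mem_or_mem_of_adj x hx y hxy
      simp only [List.mem_cons, Finset.mem_insert] at this ⊢
      tauto

theorem exists_forall_not_push [Finite W] (h : IsDFSState G D p) :
    ∃ q, IsDFSState G D q ∧ ∀ u, ¬ IsDFSState G D (u :: q) := by
  have := Fintype.ofFinite W
  have hfin : {q | IsDFSState G D q}.Finite :=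
    (List.finite_length_le W (Fintype.card W)).subset fun _ hq ↦ hq.nodup.length_le_card
  obtain ⟨q, hq, hmax⟩ := hfin.exists_maximalFor List.length _ ⟨p, h⟩
  exact ⟨q, hq, fun u hu ↦ by simpa using hmax hu (by simp)⟩

theorem exists_card_eq_succ [Fintype W] (h : IsDFSState G D p) (hD : D.card < Fintype.card W) :
    ∃ D' q, IsDFSState G D' q ∧ D'.card = D.card + 1 := by
  classical
  obtain ⟨q, hq, hstuck⟩ := h.exists_forall_not_push
  cases q with
  | nil =>
    obtain ⟨u, hu⟩ : ∃ u, u ∉ D := by simpa using Finset.exists_mem_notMem_of_card_lt_card hD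
    exact absurd (hq.push hu List.not_mem_nil (List.isChain_singleton u)) (hstuck u)
  | cons v q =>
    have hv : ∀ y, G.Adj v y → y ∈ D ∨ y ∈ q := fun y hvy ↦ by
      by_contra! hy
      have hyq : y ∉ v :: q := List.not_mem_cons_of_ne_of_not_mem hvy.ne' hy.2
      exact hstuck y (hq.push hy.1 hyq (hq.isChain.cons_cons hvy.symm))
    exact ⟨insert v D, q, hq.pop hv,
      Finset.card_insert_of_notMem (hq.notMem_of_mem v List.mem_cons_self)⟩

theorem exists_card_eq [Fintype W] (G : SimpleGraph W) {a : ℕ} (ha : a ≤ Fintype.card W) :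
    ∃ D p, IsDFSState G D p ∧ D.card = a := by
  induction a with
  | zero => exact ⟨∅, [], empty G, rfl⟩
  | succ a ih =>
    obtain ⟨D, p, h, rfl⟩ := ih (by lia)
    exact h.exists_card_eq_succ ha

theorem isCompleteBetween_compl [Fintype W] [DecidableEq W] (h : IsDFSState G D p) :
    Gᶜ.IsCompleteBetween D ↑(D ∪ p.toFinset)ᶜ := by
  intro x hx y hy
  simp only [Finset.coe_compl, Set.mem_compl_iff, Finset.mem_coe, Finset.mem_union,
    List.mem_toFinset] at hx hy
  have hxy : x ≠ y := fun e ↦ hy (.inl (e ▸ hx))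
  exact (compl_adj G x y).2 ⟨hxy, fun hadj ↦ hy (h.mem_or_mem_of_adj x hx y hadj)⟩

end IsDFSState

theorem pathGraph_isContained_or_exists_isCompleteBetween_compl [Fintype W] (G : SimpleGraph W)
    {k a b : ℕ} (hcard : a + b + (k - 1) ≤ Fintype.card W) :
    pathGraph k ⊑ G ∨
      ∃ A B : Finset W, A.card = a ∧ b ≤ B.card ∧ Gᶜ.IsCompleteBetween A B := by
  classical
  obtain ⟨D, p, h, hD⟩ := IsDFSState.exists_card_eq G (a := a) (by lia)
  obtain hk | hk := le_or_gt k p.length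
  · exact .inl (pathGraph_isContained_of_isChain h.nodup h.isChain hk)
  · have hvisited : (D ∪ p.toFinset).card ≤ a + p.length :=
      (Finset.card_union_le _ _).trans (add_le_add hD.le p.toFinset_card_le)
    refine .inr ⟨D, (D ∪ p.toFinset)ᶜ, hD, ?_, h.isCompleteBetween_compl⟩
    rw [Finset.card_compl]
    lia

theorem isContained_of_isIndepSet_of_isCompleteBetween {H : SimpleGraph V} {K : SimpleGraph W}
    {s : Set V} {A B : Set W} (hs : H.IsIndepSet s) (hAB : K.IsCompleteBetween A B)
    (e : s ↪ A) (hrest : H.induce sᶜ ⊑ K.induce B) : H ⊑ K := by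
  classical
  obtain ⟨g⟩ := hrest
  have hcross (u : s) (v : ↥sᶜ) : K.Adj (e u) (g v) := hAB (e u).2 (g v).2
  let f (v : V) : W := if hv : v ∈ s then e ⟨v, hv⟩ else g ⟨v, hv⟩
  have hf : Function.Injective f :=
    Function.Injective.dite (· ∈ s) (f := fun v ↦ (e v : W)) (f' := fun v ↦ (g v : W))
      (Subtype.val_injective.comp e.injective) (Subtype.val_injective.comp g.injective)
      (hcross _ _).ne
  refine ⟨⟨f, fun {u v} huv ↦ ?_⟩, hf⟩
  by_cases hu : u ∈ s <;> by_cases hv : v ∈ s <;> simp only [f, hu, hv, dite_true, dite_false]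
  · exact absurd huv (hs hu hv huv.ne)
  · exact hcross ⟨u, hu⟩ ⟨v, hv⟩
  · exact (hcross ⟨v, hv⟩ ⟨u, hu⟩).symm
  · exact g.toHom.map_adj (v := ⟨u, hu⟩) (w := ⟨v, hv⟩) huv

theorem colorable_induce_compl_colorClass [Fintype α] {H : SimpleGraph V} (C : H.Coloring α)
    (c : α) : (H.induce (C.colorClass c)ᶜ).Colorable (Fintype.card α - 1) := by
  classical
  let C' : (H.induce (C.colorClass c)ᶜ).Coloring {x // x ≠ c} :=
    Coloring.mk (fun v ↦ ⟨C v, v.2⟩) fun huv h ↦ C.valid huv (congrArg Subtype.val h)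
  simpa using C'.colorable

theorem pathGraph_isContained_or_isContained_compl [Fintype V] [Fintype W] {k r : ℕ}
    {H : SimpleGraph V} (G : SimpleGraph W) (hH : H.Colorable (r + 1))
    (hcard : Fintype.card V + (k - 1) * r ≤ Fintype.card W) :
    pathGraph k ⊑ G ∨ H ⊑ Gᶜ := by
  classical
  induction r generalizing V W with
  | zero =>
    obtain rfl := colorable_one_iff.1 hH
    exact .inr (bot_isContained_iff_card_le.2 (by simpa using hcard))
  | succ r ih =>
    obtain ⟨C⟩ := hH
    set s := C.colorClass (Fin.last (r + 1))
    have hs : Fintype.card s + Fintype.card ↥sᶜ = Fintype.card V := by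
      rw [← Fintype.card_sum, Fintype.card_congr (Equiv.Set.sumCompl s)]
    obtain hpath | ⟨A, B, hA, hB, hAB⟩ :=
      pathGraph_isContained_or_exists_isCompleteBetween_compl G (k := k)
        (a := Fintype.card s) (b := Fintype.card ↥sᶜ + (k - 1) * r) (by lia)
    · exact .inl hpath
    obtain ⟨e⟩ : Nonempty (s ↪ (A : Set W)) :=
      Function.Embedding.nonempty_of_card_le (by simp [hA])
    have hcolor : (H.induce sᶜ).Colorable (r + 1) := by
      simpa using colorable_induce_compl_colorClass C (Fin.last (r + 1))
    obtain hpath | hrest := ih (G.induce (B : Set W)) hcolor (by simpa using hB)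
    · exact .inl (hpath.trans ⟨Copy.induce G B⟩)
    · rw [compl_induce] at hrest
      exact .inr (isContained_of_isIndepSet_of_isCompleteBetween (C.isIndepSet_colorClass _)
        hAB e hrest)

theorem stmt_2_general [Fintype V] (k : ℕ) (H : SimpleGraph V) :
    ramseyNumber (pathGraph k) H ≤
      Fintype.card V + (k - 1) * (H.chromaticNumber.toNat - 1) := by
  have hH : H.Colorable (H.chromaticNumber.toNat - 1 + 1) :=
    (colorable_chromaticNumber (colorable_of_fintype H)).mono (by lia)
  exact ramseyNumber_le_of_forall fun C ↦ pathGraph_isContained_or_isContained_compl C hH (by simp)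

theorem stmt_2 (k : ℕ) (hk : 1 ≤ k) (V : Type) [Fintype V] (H : SimpleGraph V) :
    ramseyNumber (SimpleGraph.pathGraph k) H ≤
      Fintype.card V + k * (H.chromaticNumber.toNat - 1) :=
  (stmt_2_general k H).trans (by gcongr; exact Nat.sub_le k 1)
end

section
/- For all integers k ≥ 1, t ≥ 1 and all positive integers n₁, n₂, …, n_t, the Ramsey number of the path on k vertices versus the complete t-partite graph with parts of sizes n₁, …, n_t satisfies R(P_k, K_{n₁,…,n_t}) ≤ k·(t−1) + n₁ + n₂ + ⋯ + n_t. -/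
/-!
Explore the red graph inside a vertex set `S` by depth-first search. The stack always spans a red
path, and a vertex is popped only when it has no red neighbour among the unvisited vertices, so
every edge between the popped and the unvisited vertices is blue. Stop right after the `m`-th pop:
if there is no red `P_k`, then the stack had at most `k - 1` vertices before that pop, so at most
`k - 2` remain. Make the `m` popped vertices one part of the multipartite graph, discard the stack,
and look for the other parts among the unvisited vertices.
-/

open SimpleGraph

section DepthFirstSearch

variable {V : Type*} {G : SimpleGraph V} {k m : ℕ} {S T : Finset V} {L : List V} {v : V}

theorem hasCopy_pathGraph_of_isChain (hchain : L.IsChain G.Adj) (hnodup : L.Nodup)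
    (hk : k ≤ L.length) : HasCopy (pathGraph k) G := by
  have adj_succ (i j : Fin k) (hij : i.val + 1 = j.val) : G.Adj L[i] L[j] := by
    simpa only [Fin.getElem_fin, hij] using hchain.getElem i (by omega)
  refine ⟨⟨fun i ↦ L[i], fun {i j} hij ↦ ?_⟩, fun i j hij ↦ ?_⟩
  · rcases pathGraph_adj.mp hij with hij | hij
    · exact adj_succ i j hij
    · exact (adj_succ j i hij).symm
  · exact Fin.ext (hnodup.getElem_inj_iff.mp hij)

variable [DecidableEq V]

/-- A state of a depth-first search of `G` inside `S`: `L` is the stack, with its top at the head of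
the list, `T` is the set of popped vertices, and `(S \ T) \ L.toFinset` is the set of unvisited
vertices. -/
structure IsDFSState_s3 (G : SimpleGraph V) (S : Finset V) (L : List V) (T : Finset V) : Prop where
  isChain : L.IsChain G.Adj
  nodup : L.Nodup
  stack_subset : ∀ u ∈ L, u ∈ S \ T
  popped_subset : T ⊆ S
  isCompleteBetween : Gᶜ.IsCompleteBetween T ↑((S \ T) \ L.toFinset)

namespace IsDFSState_s3

theorem initial (G : SimpleGraph V) (S : Finset V) : IsDFSState_s3 G S [] ∅ where
  isChain := .nil
  nodup := .nil
  stack_subset := by simp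
  popped_subset := S.empty_subset
  isCompleteBetween := by simp [IsCompleteBetween]

theorem push_s3 (h : IsDFSState_s3 G S L T) (hv : v ∈ (S \ T) \ L.toFinset)
    (hadj : ∀ u ∈ L.head?, G.Adj v u) : IsDFSState_s3 G S (v :: L) T where
  isChain := List.isChain_cons.mpr ⟨hadj, h.isChain⟩
  nodup := List.nodup_cons.mpr ⟨by simpa using (Finset.mem_sdiff.mp hv).2, h.nodup⟩
  stack_subset := List.forall_mem_cons.mpr ⟨(Finset.mem_sdiff.mp hv).1, h.stack_subset⟩
  popped_subset := h.popped_subset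
  isCompleteBetween _ ht _ hu := h.isCompleteBetween ht (by
    simp only [Finset.mem_coe, Finset.mem_sdiff, List.mem_toFinset, List.mem_cons, not_or] at hu ⊢
    exact ⟨hu.1, hu.2.2⟩)

theorem pop_s3 (h : IsDFSState_s3 G S (v :: L) T)
    (hv : ∀ u ∈ (S \ T) \ (v :: L).toFinset, ¬ G.Adj v u) : IsDFSState_s3 G S L (insert v T) where
  isChain := h.isChain.tail
  nodup := h.nodup.of_cons
  stack_subset u hu := by
    have hvL : v ∉ L := (List.nodup_cons.mp h.nodup).1
    have := h.stack_subset u (List.mem_cons_of_mem v hu)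
    grind
  popped_subset :=
    Finset.insert_subset (Finset.mem_sdiff.mp (h.stack_subset v List.mem_cons_self)).1
      h.popped_subset
  isCompleteBetween t ht u hu := by
    have hu' : u ∈ (S \ T) \ (v :: L).toFinset := by grind [List.mem_toFinset]
    rcases Finset.mem_insert.mp ht with rfl | ht
    · exact (compl_adj ..).mpr ⟨by grind [List.mem_toFinset], hv u hu'⟩
    · exact h.isCompleteBetween ht hu'

theorem card_insert (h : IsDFSState_s3 G S (v :: L) T) : (insert v T).card = T.card + 1 :=
  Finset.card_insert_of_notMem (Finset.mem_sdiff.mp (h.stack_subset v List.mem_cons_self)).2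

theorem length_le_card (h : IsDFSState_s3 G S L T) : L.length ≤ S.card := by
  rw [← List.toFinset_card_of_nodup h.nodup]
  exact Finset.card_le_card fun u hu ↦
    (Finset.mem_sdiff.mp (h.stack_subset u (List.mem_toFinset.mp hu))).1

theorem exists_deadEnd (h : IsDFSState_s3 G S L T) (hT : T.card < S.card) :
    ∃ v P, IsDFSState_s3 G S (v :: P) T ∧ ∀ u ∈ (S \ T) \ (v :: P).toFinset, ¬ G.Adj v u := by
  have lengths_finite : (List.length '' {P | IsDFSState_s3 G S P T}).Finite :=
    (Set.finite_Iic S.card).subset (Set.image_subset_iff.mpr fun _ hP ↦ hP.length_le_card)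
  obtain ⟨P, hP, longest⟩ := Set.Finite.exists_maximalFor' _ _ lengths_finite ⟨L, h⟩
  have not_push : ∀ u ∈ (S \ T) \ P.toFinset, ¬ ∀ w ∈ P.head?, G.Adj u w := fun u hu hadj ↦
    (Nat.lt_succ_self _).not_ge (longest (hP.push_s3 hu hadj) (Nat.le_succ _))
  cases P with
  | nil =>
    obtain ⟨u, huS, huT⟩ := Finset.exists_mem_notMem_of_card_lt_card hT
    exact absurd (by simp) (not_push u (by simp [huS, huT]))
  | cons v P => exact ⟨v, P, hP, fun u hu hvu ↦ not_push u hu (by simpa using hvu.symm)⟩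

end IsDFSState_s3

theorem exists_isDFSState_deadEnd (G : SimpleGraph V) (hm : m < S.card) :
    ∃ v P T, T.card = m ∧ IsDFSState_s3 G S (v :: P) T ∧
      ∀ u ∈ (S \ T) \ (v :: P).toFinset, ¬ G.Adj v u := by
  induction m with
  | zero =>
    obtain ⟨v, P, hP⟩ := (IsDFSState_s3.initial G S).exists_deadEnd (by simpa using hm)
    exact ⟨v, P, ∅, rfl, hP⟩
  | succ m ih =>
    obtain ⟨v, P, T, hT, h, hv⟩ := ih (by omega)
    have hcard : (insert v T).card = m + 1 := by rw [h.card_insert, hT]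
    obtain ⟨w, Q, hQ⟩ := (h.pop_s3 hv).exists_deadEnd (hcard ▸ hm)
    exact ⟨w, Q, insert v T, hcard, hQ⟩

end DepthFirstSearch

section Multipartite

variable {V ι : Type*} {G : SimpleGraph V} {k : ℕ}

theorem exists_isCompleteBetween_compl_of_not_hasCopy_pathGraph
    (hG : ¬ HasCopy (pathGraph k) G) {m : ℕ} {S : Finset V} (hm : 1 ≤ m) (hmS : m ≤ S.card) :
    ∃ T ⊆ S, ∃ U ⊆ S, T.card = m ∧ S.card ≤ m + U.card + (k - 2) ∧ Gᶜ.IsCompleteBetween T U := by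
  classical
  obtain ⟨m, rfl⟩ := Nat.exists_eq_add_of_le' hm
  obtain ⟨v, P, T, hT, h, hv⟩ := exists_isDFSState_deadEnd G (Nat.lt_of_succ_le hmS)
  have hlength : P.length + 1 < k := by
    by_contra! hk
    exact hG (hasCopy_pathGraph_of_isChain h.isChain h.nodup hk)
  have hpop := h.pop_s3 hv
  have hcard : (insert v T).card = m + 1 := by rw [h.card_insert, hT]
  refine ⟨insert v T, hpop.popped_subset, (S \ insert v T) \ P.toFinset,
    Finset.sdiff_subset.trans Finset.sdiff_subset, hcard, ?_, hpop.isCompleteBetween⟩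
  have := Finset.le_card_sdiff (insert v T) S
  have := Finset.le_card_sdiff P.toFinset (S \ insert v T)
  have := P.toFinset_card_le
  omega

theorem exists_pairwise_isCompleteBetween_compl_of_not_hasCopy_pathGraph
    (hG : ¬ HasCopy (pathGraph k) G) {n : ι → ℕ} {s : Finset ι} {S : Finset V}
    (hn : ∀ i ∈ s, 1 ≤ n i)
    (hS : (k - 2) * (s.card - 1) + ∑ i ∈ s, n i ≤ S.card) :
    ∃ A : ι → Finset V, (∀ i ∈ s, A i ⊆ S ∧ (A i).card = n i) ∧
      (s : Set ι).Pairwise fun i j ↦ Gᶜ.IsCompleteBetween (A i) (A j) := by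
  classical
  induction s using Finset.induction_on generalizing S with
  | empty => exact ⟨fun _ ↦ ∅, by simp, by simp⟩
  | insert i s hi ih =>
    rw [Finset.card_insert_of_notMem hi, Finset.sum_insert hi, Nat.add_sub_cancel] at hS
    obtain ⟨T, hTS, U, hUS, hT, hSU, hTU⟩ :=
      exists_isCompleteBetween_compl_of_not_hasCopy_pathGraph hG
        (hn i (Finset.mem_insert_self i s)) (show n i ≤ S.card by omega)
    have hU : (k - 2) * (s.card - 1) + ∑ j ∈ s, n j ≤ U.card := by
      rcases s.eq_empty_or_nonempty with rfl | hs
      · simp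
      · have := Nat.mul_sub_one (k - 2) s.card
        have := Nat.le_mul_of_pos_right (k - 2) hs.card_pos
        omega
    obtain ⟨A, hA, hpair⟩ := ih (fun j hj ↦ hn j (by simp [hj])) hU
    have update_eq : ∀ j ∈ s, Function.update A i T j = A j := fun j hj ↦
      Function.update_of_ne (ne_of_mem_of_not_mem hj hi) T A
    refine ⟨Function.update A i T, fun j hj ↦ ?_, ?_⟩
    · rcases Finset.mem_insert.mp hj with rfl | hj
      · simp [hTS, hT]
      · rw [update_eq j hj]
        exact ⟨(hA j hj).1.trans hUS, (hA j hj).2⟩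
    · rw [Finset.coe_insert, Set.pairwise_insert_of_notMem (by simpa using hi)]
      refine ⟨fun j hj l hl hjl ↦ ?_, fun j hj ↦ ?_⟩
      · simpa only [update_eq j hj, update_eq l hl] using hpair hj hl hjl
      · have hTA : Gᶜ.IsCompleteBetween T (A j) := fun _ ht _ ha ↦ hTU ht ((hA j hj).1 ha)
        simpa only [update_eq j hj, Function.update_self] using And.intro hTA hTA.symm

theorem hasCopy_completeMultipartiteGraph {W : ι → Type*} [∀ i, Fintype (W i)] {A : ι → Finset V}
    (hcard : ∀ i, (A i).card = Fintype.card (W i))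
    (hpair : Pairwise fun i j ↦ G.IsCompleteBetween (A i) (A j)) :
    HasCopy (completeMultipartiteGraph W) G := by
  let e (i : ι) : W i ≃ A i := Fintype.equivOfCardEq (by simp [hcard])
  let f (w : Σ i, W i) : V := e w.1 w.2
  have hf (w : Σ i, W i) : f w ∈ A w.1 := (e w.1 w.2).2
  refine ⟨⟨f, fun {w x} hwx ↦ hpair hwx (hf w) (hf x)⟩, ?_⟩
  rintro ⟨i, w⟩ ⟨j, x⟩ hwx
  obtain rfl : i = j := by
    by_contra hij
    exact (hpair hij (hf ⟨i, w⟩) (hf ⟨j, x⟩)).ne hwx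
  obtain rfl : w = x := (e i).injective (Subtype.ext hwx)
  rfl

end Multipartite

/-- For `2 ≤ k` and `t` parts with one vertex each, the bound is `(k - 1) * (t - 1) + 1`, which is
the exact value of `R(P_k, K_t)`. -/
theorem stmt_3_general {ι : Type*} [Fintype ι] (k : ℕ) (W : ι → Type*) [∀ i, Fintype (W i)]
    [∀ i, Nonempty (W i)] :
    ramseyNumber (pathGraph k) (completeMultipartiteGraph W) ≤
      (k - 2) * (Fintype.card ι - 1) + ∑ i, Fintype.card (W i) := by
  refine Nat.sInf_le fun C ↦ or_iff_not_imp_left.mpr fun hC ↦ ?_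
  obtain ⟨A, hA, hpair⟩ := exists_pairwise_isCompleteBetween_compl_of_not_hasCopy_pathGraph hC
    (s := Finset.univ) (S := Finset.univ) (fun i _ ↦ Fintype.card_pos (α := W i)) (by simp)
  exact hasCopy_completeMultipartiteGraph (fun i ↦ (hA i (Finset.mem_univ i)).2)
    (Set.pairwise_univ.mp (by simpa only [Finset.coe_univ] using hpair))

theorem stmt_3 (k t : ℕ) (hk : 1 ≤ k) (ht : 1 ≤ t) (n : Fin t → ℕ) (hn : ∀ i, 1 ≤ n i) :
    ramseyNumber (SimpleGraph.pathGraph k)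
        (SimpleGraph.completeMultipartiteGraph (fun i : Fin t => Fin (n i))) ≤
      k * (t - 1) + ∑ i, n i := by
  have (i : Fin t) : Nonempty (Fin (n i)) := ⟨⟨0, hn i⟩⟩
  refine (stmt_3_general k fun i ↦ Fin (n i)).trans ?_
  simpa only [Fintype.card_fin] using by gcongr; exact Nat.sub_le k 2
end
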